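/- arXiv:2002.04282 — 4 statements merged into one kernel-verified Lean document; each statement's English description precedes it below -/
import Mathlib

section
/- For every n ≥ 1, every ⟨ℝ,+,<,ℤ⟩-definable set X ⊆ ℝ^n, and all rational numbers a_1,…,a_n and b_1,…,b_n, the set X ∩ ([a_1,b_1] × ⋯ × [a_n,b_n]) is ⟨ℝ,+,<,1⟩-definable. -/
/-!
Every real vector is uniquely `z + f` with `z` integral and `f` in the half-open unit cube.
The *slice* of a set `X ⊆ ℝ^ι` at `z` is the set of those `f` with `z + f ∈ X`.  The key fact
(`good_formula`) is that if `X` is definable in `⟨ℝ,+,<,ℤ⟩`, then as `z` ranges over the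
integral vectors `X` has only finitely many distinct slices, and each of them is definable in
`⟨ℝ,+,<,1⟩`.

This is proved by induction on formulas.  For an atomic formula the terms are additive, integral
at `z` and bounded on the cube.  Hence the slice of `t₁ < t₂` at `z` is
`{f | t₁ f + k < t₂ f}` with `k = t₁ z - t₂ z`, where only finitely many values of `k` matter
(`good_lt`), and the slice of `t ∈ ℤ` does not depend on `z` (`good_int`).  Boolean operations
act slicewise.  A slice of a projection is a union of projections of slices (`slice_image`), hence
a union of a subfamily of a fixed finite family of definable sets, which leaves finitely many
possibilities, all definable (`good_image`).  No quantifier elimination is needed.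

A bounded box meets only finitely many of the integral translates of the unit cube, so
`X ∩ box` is a finite union of integral translates of slices, each intersected with the box.
-/

open FirstOrder

/-- The language of `⟨ℝ,+,<,1⟩`: one constant, one binary function, one binary relation. -/
def SsLang : Language where
  Functions := fun m => match m with
    | 0 => Unit
    | 2 => Unit
    | _ => Empty
  Relations := fun m => match m with
    | 2 => Unit
    | _ => Empty

noncomputable instance ssStructure : SsLang.Structure ℝ where
  funMap := fun {m} f x =>
    match m, f with
    | 0, _ => (1 : ℝ)
    | 2, _ => x 0 + x 1
  RelMap := fun {m} r x =>
    match m, r with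
    | 2, _ => x 0 < x 1

/-- The language of `⟨ℝ,+,<,ℤ⟩`: one binary function, one unary relation, one binary relation. -/
def LsLang : Language where
  Functions := fun m => match m with
    | 2 => Unit
    | _ => Empty
  Relations := fun m => match m with
    | 1 => Unit
    | 2 => Unit
    | _ => Empty

noncomputable instance lsStructure : LsLang.Structure ℝ where
  funMap := fun {m} f x =>
    match m, f with
    | 2, _ => x 0 + x 1
  RelMap := fun {m} r x =>
    match m, r with
    | 1, _ => ∃ k : ℤ, x 0 = (k : ℝ)
    | 2, _ => x 0 < x 1

/-- `X ⊆ ℝ^n` is definable without parameters in `⟨ℝ,+,<,1⟩`. -/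
def SsDefinable {n : ℕ} (X : Set (Fin n → ℝ)) : Prop :=
  Set.Definable (∅ : Set ℝ) SsLang X

/-- `X ⊆ ℝ^n` is definable without parameters in `⟨ℝ,+,<,ℤ⟩`. -/
def LsDefinable {n : ℕ} (X : Set (Fin n → ℝ)) : Prop :=
  Set.Definable (∅ : Set ℝ) LsLang X

def SsDefinable1 (A : Set ℝ) : Prop := SsDefinable {f : Fin 1 → ℝ | f 0 ∈ A}
def LsDefinable1 (A : Set ℝ) : Prop := LsDefinable {f : Fin 1 → ℝ | f 0 ∈ A}

/-- `v` is an `X`-stratum at `x`: for some `r > 0`,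
`B(x,r) ∩ L_v(X ∩ B(x,r)) ⊆ X`.  (The sup norm/metric is the default one on `ι → ℝ`.) -/
def IsStratum {ι : Type} [Fintype ι] (X : Set (ι → ℝ)) (x v : ι → ℝ) : Prop :=
  ∃ r > (0 : ℝ), ∀ y ∈ Metric.ball x r,
    (∃ z ∈ X ∩ Metric.ball x r, ∃ α : ℝ, y = z + α • v) → y ∈ X

/-- `x` is `X`-singular: `Str_X(x) = {0}`. -/
def IsSingular {ι : Type} [Fintype ι] (X : Set (ι → ℝ)) (x : ι → ℝ) : Prop :=
  ∀ v, IsStratum X x v → v = 0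

/-- `x ∼_X y`: some translation of a small ball around `x` identifies `X` near `x` and near `y`. -/
def SimX {n : ℕ} (X : Set (Fin n → ℝ)) (x y : Fin n → ℝ) : Prop :=
  ∃ r > (0 : ℝ), ∀ w : Fin n → ℝ, ‖w‖ < r → (x + w ∈ X ↔ y + w ∈ X)

/-- the dimension of the subspace `Str_X(x)` of strata at `x`. -/
noncomputable def strDim {n : ℕ} (X : Set (Fin n → ℝ)) (x : Fin n → ℝ) : ℕ :=
  Module.finrank ℝ (Submodule.span ℝ {v | IsStratum X x v})

/-- An interval of `ℝ` all of whose finite endpoints are rational: an order-convex set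
whose frontier points (i.e. finite endpoints) are all rational. -/
def IsRatInterval (I : Set ℝ) : Prop :=
  I.OrdConnected ∧ ∀ x ∈ frontier I, ∃ q : ℚ, x = (q : ℝ)

section SliceArgument

variable {ι κ : Type}

/-! ### Definability in `⟨ℝ,+,<,1⟩` -/

/-- `SsDefinable` for sets of real vectors indexed by an arbitrary type. -/
def SsDef (X : Set (ι → ℝ)) : Prop := Set.Definable (∅ : Set ℝ) SsLang X

/-- `F` is the value of a term of the language of `⟨ℝ,+,<,1⟩`. The constant `0` is not, since
the language has neither `0` nor subtraction. -/
def IsSsTerm (F : (ι → ℝ) → ℝ) : Prop := ∃ t : SsLang.Term ι, ∀ x, t.realize x = F x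

lemma IsSsTerm.var (i : ι) : IsSsTerm (fun x : ι → ℝ => x i) := ⟨Language.Term.var i, fun _ => rfl⟩

lemma IsSsTerm.one : IsSsTerm (fun _ : ι → ℝ => 1) :=
  ⟨Language.Term.func (L := SsLang) (l := 0) () Fin.elim0, fun _ => rfl⟩

lemma IsSsTerm.add {F G : (ι → ℝ) → ℝ} (hF : IsSsTerm F) (hG : IsSsTerm G) :
    IsSsTerm (fun x => F x + G x) := by
  obtain ⟨t, ht⟩ := hF
  obtain ⟨u, hu⟩ := hG
  exact ⟨Language.Term.func (L := SsLang) (l := 2) () ![t, u],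
    fun x => congrArg₂ (· + ·) (ht x) (hu x)⟩

lemma IsSsTerm.add_mul {F G : (ι → ℝ) → ℝ} (hF : IsSsTerm F) (hG : IsSsTerm G) (d : ℕ) :
    IsSsTerm (fun x => F x + d * G x) := by
  induction d with
  | zero => simpa using hF
  | succ d ih =>
    have h := ih.add hG
    have e : (fun x => F x + ((d + 1 : ℕ) : ℝ) * G x) = fun x => F x + d * G x + G x := by
      funext x; push_cast; ring
    rw [e]; exact h

lemma IsSsTerm.add_nat {F : (ι → ℝ) → ℝ} (hF : IsSsTerm F) (d : ℕ) :
    IsSsTerm (fun x => F x + d) := by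
  simpa using hF.add_mul IsSsTerm.one d

lemma IsSsTerm.lt {F G : (ι → ℝ) → ℝ} (hF : IsSsTerm F) (hG : IsSsTerm G) :
    SsDef {x | F x < G x} := by
  obtain ⟨t, ht⟩ := hF
  obtain ⟨u, hu⟩ := hG
  refine Set.empty_definable_iff.2
    ⟨Language.Relations.formula (L := SsLang) (n := 2) () ![t, u], ?_⟩
  ext x
  have h := Language.Formula.realize_rel (R := (() : SsLang.Relations 2)) (ts := ![t, u]) (v := x)
  refine Iff.trans ?_ h.symm
  change F x < G x ↔ t.realize x < u.realize x
  rw [ht, hu]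

/-- Comparison with an integral offset; a natural number is added on both sides because the
language has no subtraction. -/
lemma IsSsTerm.lt_int {F G : (ι → ℝ) → ℝ} (hF : IsSsTerm F) (hG : IsSsTerm G) (k : ℤ) :
    SsDef {x | F x + k < G x} := by
  have h := (hF.add_nat k.toNat).lt (hG.add_nat (-k).toNat)
  convert h using 3 with x
  have e : (k : ℝ) = (k.toNat : ℝ) - ((-k).toNat : ℝ) := by
    have := Int.toNat_sub_toNat_neg k
    exact_mod_cast this.symm
  rw [e, ← lt_sub_iff_add_lt, sub_eq_add_neg, ← lt_sub_iff_add_lt]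
  constructor <;> intro h <;> linarith

lemma SsDef.inter {X Y : Set (ι → ℝ)} (hX : SsDef X) (hY : SsDef Y) : SsDef (X ∩ Y) :=
  Set.Definable.inter hX hY

lemma SsDef.compl {X : Set (ι → ℝ)} (hX : SsDef X) : SsDef Xᶜ :=
  Set.Definable.compl hX

lemma SsDef.iInter [Finite κ] {X : κ → Set (ι → ℝ)} (h : ∀ k, SsDef (X k)) :
    SsDef (⋂ k, X k) :=
  Set.definable_iInter_of_finite h

lemma SsDef.sUnion {T : Set (Set (ι → ℝ))} (hT : T.Finite) (h : ∀ S ∈ T, SsDef S) :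
    SsDef (⋃₀ T) := by
  induction T, hT using Set.Finite.induction_on with
  | empty => rw [Set.sUnion_empty]; exact Set.definable_empty
  | insert _ _ ih =>
    rw [Set.sUnion_insert]
    exact Set.Definable.union (h _ (Set.mem_insert _ _))
      (ih fun S hS => h S (Set.mem_insert_of_mem _ hS))

lemma IsSsTerm.eq_int {F G : (ι → ℝ) → ℝ} (hF : IsSsTerm F) (hG : IsSsTerm G) (k : ℤ) :
    SsDef {x | F x = G x + k} := by
  have h := (hG.lt_int hF k).compl.inter (hF.lt_int hG (-k)).compl
  convert h using 1
  ext x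
  simp only [Set.mem_ofPred_eq, Set.mem_inter_iff, Set.mem_compl_iff, not_lt, Int.cast_neg]
  constructor
  · intro h; constructor <;> linarith
  · rintro ⟨h, h'⟩; linarith

/-! ### Slices -/

/-- The half-open unit cube. -/
def unitCube (ι : Type) : Set (ι → ℝ) := {f | ∀ i, 0 ≤ f i ∧ f i < 1}

lemma unitCube_def [Finite ι] : SsDef (unitCube ι) := by
  have h : ∀ i : ι, SsDef {f : ι → ℝ | 0 ≤ f i ∧ f i < 1} := fun i => by
    convert ((IsSsTerm.one.lt_int IsSsTerm.one 0).compl.inter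
      (((IsSsTerm.one.add (IsSsTerm.var i)).lt IsSsTerm.one).compl.inter
        ((IsSsTerm.var i).lt IsSsTerm.one))) using 1
    ext f
    simp
  have := SsDef.iInter h
  convert this using 1
  ext f
  simp [unitCube]

/-- The vectors `f` in the half-open unit cube with `z + f ∈ X`. -/
def slice (X : Set (ι → ℝ)) (z : ι → ℤ) : Set (ι → ℝ) :=
  {f | f ∈ unitCube ι ∧ (fun i => (z i : ℝ) + f i) ∈ X}

/-- `X` has finitely many distinct slices, all of them definable in `⟨ℝ,+,<,1⟩`. -/
def Good (X : Set (ι → ℝ)) : Prop := (Set.range (slice X)).Finite ∧ ∀ z, SsDef (slice X z)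

lemma Good.compl [Finite ι] {X : Set (ι → ℝ)} (h : Good X) : Good Xᶜ := by
  have e : ∀ z, slice Xᶜ z = unitCube ι ∩ (slice X z)ᶜ := fun z => by
    ext f
    simp only [slice, Set.mem_ofPred_eq, Set.mem_inter_iff, Set.mem_compl_iff]
    tauto
  refine ⟨(h.1.image fun S => unitCube ι ∩ Sᶜ).subset ?_, fun z => ?_⟩
  · rintro _ ⟨z, rfl⟩
    exact ⟨_, ⟨z, rfl⟩, (e z).symm⟩
  · rw [e]; exact unitCube_def.inter (h.2 z).compl

lemma Good.inter {X Y : Set (ι → ℝ)} (hX : Good X) (hY : Good Y) : Good (X ∩ Y) := by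
  have e : ∀ z, slice (X ∩ Y) z = slice X z ∩ slice Y z := fun z => by
    ext f
    simp only [slice, Set.mem_ofPred_eq, Set.mem_inter_iff]
    tauto
  refine ⟨(hX.1.image2 (fun S T => S ∩ T) hY.1).subset ?_, fun z => ?_⟩
  · rintro _ ⟨z, rfl⟩
    exact ⟨_, ⟨z, rfl⟩, _, ⟨z, rfl⟩, (e z).symm⟩
  · rw [e]; exact (hX.2 z).inter (hY.2 z)

/-- A slice of a projection is the union of the projections of the slices over all integral
vectors above it. -/
lemma slice_image (X : Set (κ → ℝ)) (e : ι → κ) (z : ι → ℤ) :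
    slice ((fun g : κ → ℝ => g ∘ e) '' X) z =
      ⋃₀ {T | ∃ z' : κ → ℤ, z' ∘ e = z ∧ T = (fun g : κ → ℝ => g ∘ e) '' slice X z'} := by
  ext f
  constructor
  · rintro ⟨hf, g, hg, hgf⟩
    -- A witness `g` for `z + f` splits into floor and fractional part, which restrict
    -- along `e` to `z` and `f`.
    have hz : ∀ i, ⌊g (e i)⌋ = z i := fun i => by
      have h : g (e i) = z i + f i := congrFun hgf i
      rw [h, Int.floor_intCast_add, Int.floor_eq_zero_iff.2 ⟨(hf i).1, (hf i).2⟩, add_zero]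
    refine ⟨_, ⟨fun j => ⌊g j⌋, funext hz, rfl⟩, fun j => Int.fract (g j), ⟨fun j =>
      ⟨Int.fract_nonneg _, Int.fract_lt_one _⟩, ?_⟩, ?_⟩
    · simpa only [Int.floor_add_fract] using hg
    · funext i
      have h : g (e i) = z i + f i := congrFun hgf i
      have h2 := Int.floor_add_fract (g (e i))
      rw [hz] at h2
      simp only [Function.comp_apply]
      linarith
  · rintro ⟨_, ⟨z', rfl, rfl⟩, f', ⟨hf', hX⟩, rfl⟩
    exact ⟨fun i => hf' (e i), _, hX, rfl⟩

lemma good_image [Finite ι] [Finite κ] {X : Set (κ → ℝ)} (h : Good X) (e : ι → κ) :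
    Good ((fun g : κ → ℝ => g ∘ e) '' X) := by
  have hfin : (Set.image (fun g : κ → ℝ => g ∘ e) '' Set.range (slice X)).Finite := h.1.image _
  have hsub : ∀ z : ι → ℤ,
      {T | ∃ z' : κ → ℤ, z' ∘ e = z ∧ T = (fun g : κ → ℝ => g ∘ e) '' slice X z'} ⊆
        Set.image (fun g : κ → ℝ => g ∘ e) '' Set.range (slice X) := by
    rintro z _ ⟨z', -, rfl⟩
    exact ⟨_, ⟨z', rfl⟩, rfl⟩
  refine ⟨(hfin.powerset.image Set.sUnion).subset ?_, fun z => ?_⟩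
  · rintro _ ⟨z, rfl⟩
    exact ⟨_, hsub z, (slice_image X e z).symm⟩
  · rw [slice_image]
    refine SsDef.sUnion (hfin.subset (hsub z)) ?_
    rintro _ ⟨z', -, rfl⟩
    exact Set.Definable.image_comp (h.2 z') e

/-! ### Atomic formulas -/

/-- The properties of the value of a term of `⟨ℝ,+,<,ℤ⟩` that the argument uses: it is additive
along the decomposition `z + f`, integral at integral vectors, bounded on the unit cube, and also
the value of a term of `⟨ℝ,+,<,1⟩`. -/
structure LsTermLike (F : (ι → ℝ) → ℝ) : Prop where
  isSsTerm : IsSsTerm F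
  bdd : ∃ N : ℕ, ∀ f ∈ unitCube ι, 0 ≤ F f ∧ F f ≤ N
  split : ∀ z : ι → ℤ, ∃ k : ℤ, ∀ f : ι → ℝ, F (fun i => (z i : ℝ) + f i) = k + F f

lemma lsTermLike_realize (t : LsLang.Term ι) :
    LsTermLike (fun x : ι → ℝ => t.realize x) := by
  induction t with
  | var i =>
    exact ⟨IsSsTerm.var i, ⟨1, fun f hf => ⟨(hf i).1, by simpa using (hf i).2.le⟩⟩,
      fun z => ⟨z i, fun f => rfl⟩⟩
  | @func l g ts ih =>
    match l, g with
    | 2, g =>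
      obtain ⟨hF, ⟨N, hN⟩, sF⟩ := ih 0
      obtain ⟨hG, ⟨M, hM⟩, sG⟩ := ih 1
      have e : (fun x : ι → ℝ => (Language.Term.func (L := LsLang) (l := 2) g ts).realize x) =
          fun x => (ts 0).realize x + (ts 1).realize x := rfl
      rw [e]
      refine ⟨hF.add hG, ⟨N + M, fun f hf => ?_⟩, fun z => ?_⟩
      · push_cast
        have h1 := hN f hf
        have h2 := hM f hf
        constructor <;> linarith
      · obtain ⟨k, hk⟩ := sF z
        obtain ⟨m, hm⟩ := sG z
        refine ⟨k + m, fun f => ?_⟩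
        have h1 := hk f
        have h2 := hm f
        push_cast
        linarith

lemma good_lt [Finite ι] {F G : (ι → ℝ) → ℝ} (hF : LsTermLike F) (hG : LsTermLike G) :
    Good {x | F x < G x} := by
  obtain ⟨N, hN⟩ := hF.bdd
  obtain ⟨M, hM⟩ := hG.bdd
  have e : ∀ z, ∃ k : ℤ, slice {x | F x < G x} z = unitCube ι ∩ {f | F f + k < G f} := by
    intro z
    obtain ⟨k, hk⟩ := hF.split z
    obtain ⟨m, hm⟩ := hG.split z
    refine ⟨k - m, ?_⟩
    ext f
    simp only [slice, Set.mem_ofPred_eq, Set.mem_inter_iff, hk, hm]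
    push_cast
    refine and_congr_right fun _ => ?_
    constructor <;> intro h <;> linarith
  -- On the cube the condition `F f + k < G f` always fails once `k ≥ M` and always holds once
  -- `k < -N`.
  refine ⟨((Set.finite_Icc (-N - 1 : ℤ) M).image
    fun k : ℤ => unitCube ι ∩ {f | F f + k < G f}).subset ?_, fun z => ?_⟩
  · rintro _ ⟨z, rfl⟩
    obtain ⟨k, hk⟩ := e z
    rw [hk]
    rcases lt_or_ge k (-N - 1 : ℤ) with h1 | h1
    · refine ⟨-N - 1, by constructor <;> lia, ?_⟩
      ext f
      refine and_congr_right fun hf => ?_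
      have a1 := hN f hf
      have a2 := hM f hf
      have h1' : (k : ℝ) < -N - 1 := by exact_mod_cast h1
      simp only [Set.mem_ofPred_eq]
      push_cast
      constructor <;> intro h <;> linarith
    rcases lt_or_ge (M : ℤ) k with h2 | h2
    · refine ⟨M, by constructor <;> lia, ?_⟩
      ext f
      refine and_congr_right fun hf => ?_
      have a1 := hN f hf
      have a2 := hM f hf
      have h2' : (M : ℝ) < k := by exact_mod_cast h2
      simp only [Set.mem_ofPred_eq]
      push_cast
      constructor <;> intro h <;> linarith
    · exact ⟨k, ⟨h1, h2⟩, rfl⟩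
  · obtain ⟨k, hk⟩ := e z
    rw [hk]
    exact unitCube_def.inter (hF.isSsTerm.lt_int hG.isSsTerm k)

lemma good_eq [Finite ι] {F G : (ι → ℝ) → ℝ} (hF : LsTermLike F) (hG : LsTermLike G) :
    Good {x | F x = G x} := by
  convert (good_lt hF hG).compl.inter (good_lt hG hF).compl using 1
  ext x
  simp only [Set.mem_ofPred_eq, Set.mem_inter_iff, Set.mem_compl_iff, not_lt]
  exact ⟨fun h => ⟨h.ge, h.le⟩, fun h => le_antisymm h.2 h.1⟩

lemma good_int [Finite ι] {F : (ι → ℝ) → ℝ} (hF : LsTermLike F) :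
    Good {x | ∃ k : ℤ, F x = k} := by
  obtain ⟨N, hN⟩ := hF.bdd
  have e : ∀ z, slice {x | ∃ k : ℤ, F x = k} z = unitCube ι ∩
      ⋃₀ ((fun k : ℤ => {f | F f = k}) '' Set.Icc (0 : ℤ) N) := by
    intro z
    obtain ⟨m, hm⟩ := hF.split z
    ext f
    simp only [slice, Set.mem_ofPred_eq, Set.mem_inter_iff, hm, Set.sUnion_image, Set.mem_iUnion]
    refine and_congr_right fun hf => ?_
    constructor
    · rintro ⟨k, hk⟩
      have h1 := hN f hf
      have h2 : F f = ((k - m : ℤ) : ℝ) := by push_cast; linarith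
      rw [h2] at h1
      exact ⟨k - m, ⟨by exact_mod_cast h1.1, by exact_mod_cast h1.2⟩, h2⟩
    · rintro ⟨k, -, hk⟩
      exact ⟨m + k, by push_cast; rw [hk]⟩
  refine ⟨(Set.finite_singleton (unitCube ι ∩
      ⋃₀ ((fun k : ℤ => {f | F f = k}) '' Set.Icc (0 : ℤ) N))).subset ?_, fun z => ?_⟩
  · rintro _ ⟨z, rfl⟩
    exact e z
  · rw [e]
    refine unitCube_def.inter (SsDef.sUnion ((Set.finite_Icc _ _).image _) ?_)
    rintro _ ⟨k, -, rfl⟩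
    convert (IsSsTerm.one.add hF.isSsTerm).eq_int IsSsTerm.one k using 3
    simp

/-! ### Induction on formulas -/

/-- Every set definable in `⟨ℝ,+,<,ℤ⟩` has finitely many distinct slices, all definable in
`⟨ℝ,+,<,1⟩`. The free and the bound variables are treated as the coordinates of one vector. -/
lemma good_formula [Finite ι] {n : ℕ} (φ : LsLang.BoundedFormula ι n) :
    Good {w : ι ⊕ Fin n → ℝ | φ.Realize (w ∘ Sum.inl) (w ∘ Sum.inr)} := by
  induction φ with
  | @falsum n =>
    have e : ∀ z, slice {w : ι ⊕ Fin n → ℝ | (Language.BoundedFormula.falsum :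
        LsLang.BoundedFormula ι n).Realize (w ∘ Sum.inl) (w ∘ Sum.inr)} z = ∅ := by
      intro z
      ext f
      simp [slice, Language.BoundedFormula.Realize]
    refine ⟨(Set.finite_singleton ∅).subset ?_, fun z => ?_⟩
    · rintro _ ⟨z, rfl⟩
      exact e z
    · rw [e]
      exact Set.definable_empty
  | equal t u =>
    convert good_eq (lsTermLike_realize t) (lsTermLike_realize u) using 3 with w
    simp only [Language.BoundedFormula.Realize, Sum.elim_comp_inl_inr]
  | @rel n l R ts =>
    match l, R with
    | 1, R =>
      convert good_int (lsTermLike_realize (ts 0)) using 3 with w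
      simp only [Language.BoundedFormula.Realize, Sum.elim_comp_inl_inr]
      rfl
    | 2, R =>
      convert good_lt (lsTermLike_realize (ts 0)) (lsTermLike_realize (ts 1)) using 3 with w
      simp only [Language.BoundedFormula.Realize, Sum.elim_comp_inl_inr]
      rfl
  | imp φ ψ hφ hψ =>
    convert (hφ.inter hψ.compl).compl using 1
    ext w
    simp [Language.BoundedFormula.Realize]
  | @all n φ hφ =>
    -- `∀` is the complement of the projection of the complement; the projection forgets the last
    -- bound variable.
    convert (good_image hφ.compl (Sum.map id Fin.castSucc : ι ⊕ Fin n → ι ⊕ Fin (n + 1))).compl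
      using 1
    ext w
    simp only [Language.BoundedFormula.Realize, Set.mem_ofPred_eq, Set.mem_compl_iff,
      Set.mem_image, not_exists, not_and, not_imp_not]
    constructor
    · rintro h g rfl
      have e : g ∘ Sum.inr = Fin.snoc ((g ∘ Sum.map id Fin.castSucc) ∘ Sum.inr)
          (g (Sum.inr (Fin.last n))) := by
        funext j
        refine Fin.lastCases ?_ (fun j => ?_) j <;> simp
      rw [e]
      exact h _
    · intro h x
      by_contra hx
      refine hx (h (Sum.elim (w ∘ Sum.inl) (Fin.snoc (w ∘ Sum.inr) x)) ?_)
      funext j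
      rcases j with j | j <;> simp

/-! ### Boxes and translates -/

lemma ssDef_le_var (q : ℚ) (i : ι) : SsDef {x : ι → ℝ | (q : ℝ) ≤ x i} := by
  -- Clearing the denominator turns `q ≤ x i` into `q.num ≤ q.den * x i`.
  convert ((IsSsTerm.one.add_mul (IsSsTerm.var i) q.den).lt_int IsSsTerm.one (-q.num)).compl
    using 1
  ext x
  have hd : (0 : ℝ) < q.den := by exact_mod_cast q.den_pos
  simp only [Set.mem_ofPred_eq, Set.mem_compl_iff, not_lt]
  rw [Rat.cast_def, div_le_iff₀ hd]
  push_cast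
  constructor <;> intro h <;> linarith

lemma ssDef_var_le (q : ℚ) (i : ι) : SsDef {x : ι → ℝ | x i ≤ (q : ℝ)} := by
  convert (IsSsTerm.one.lt_int (IsSsTerm.one.add_mul (IsSsTerm.var i) q.den) q.num).compl
    using 1
  ext x
  have hd : (0 : ℝ) < q.den := by exact_mod_cast q.den_pos
  simp only [Set.mem_ofPred_eq, Set.mem_compl_iff, not_lt]
  rw [Rat.cast_def, le_div_iff₀ hd]
  constructor <;> intro h <;> linarith

lemma ssDef_box [Finite ι] (a b : ι → ℚ) :
    SsDef {x : ι → ℝ | ∀ i, (a i : ℝ) ≤ x i ∧ x i ≤ (b i : ℝ)} := by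
  convert SsDef.iInter (fun i => (ssDef_le_var (a i) i).inter (ssDef_var_le (b i) i)) using 1
  ext x
  simp

/-- Integral translates preserve definability, although negative integers are not terms. -/
lemma ssDef_translate [Finite ι] {S : Set (ι → ℝ)} (hS : SsDef S) (z : ι → ℤ) :
    SsDef ((fun f i => (z i : ℝ) + f i) '' S) := by
  -- The translate is a projection of the set of pairs `(x, f)` with `f ∈ S` and `x = f + z`.
  have h1 : SsDef ((fun g : ι ⊕ ι → ℝ => g ∘ Sum.inr) ⁻¹' S) :=
    Set.Definable.preimage_comp Sum.inr hS
  have h2 : SsDef (⋂ i, {g : ι ⊕ ι → ℝ | g (Sum.inl i) = g (Sum.inr i) + z i}) :=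
    SsDef.iInter fun i => (IsSsTerm.var _).eq_int (IsSsTerm.var _) _
  have h3 : SsDef ((fun g : ι ⊕ ι → ℝ => g ∘ Sum.inl) '' _) :=
    Set.Definable.image_comp (h1.inter h2) Sum.inl
  convert h3 using 1
  ext x
  constructor
  · rintro ⟨f, hf, rfl⟩
    refine ⟨Sum.elim (fun i => (z i : ℝ) + f i) f, ⟨hf, ?_⟩, rfl⟩
    simp [add_comm]
  · rintro ⟨g, ⟨hg, hg'⟩, rfl⟩
    refine ⟨_, hg, ?_⟩
    funext i
    have := Set.mem_iInter.1 hg' i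
    simp only [Set.mem_ofPred_eq] at this
    simp [this, add_comm]

lemma Good.inter_box [Finite ι] {X : Set (ι → ℝ)} (hX : Good X) (a b : ι → ℚ) :
    SsDef (X ∩ {x | ∀ i, (a i : ℝ) ≤ x i ∧ x i ≤ (b i : ℝ)}) := by
  have hfin : (Set.Icc (fun i => ⌊(a i : ℝ)⌋) (fun i => ⌊(b i : ℝ)⌋)).Finite := by
    rw [← Set.pi_univ_Icc]
    exact Set.Finite.pi fun i => Set.finite_Icc _ _
  have h := (SsDef.sUnion (hfin.image fun z : ι → ℤ =>
    (fun (f : ι → ℝ) i => (z i : ℝ) + f i) '' slice X z) (by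
      rintro _ ⟨z, -, rfl⟩
      exact ssDef_translate (hX.2 z) z)).inter (ssDef_box a b)
  convert h using 1
  ext x
  refine and_congr_left fun hx => ?_
  constructor
  · intro hxX
    refine ⟨_, ⟨fun i => ⌊x i⌋, ⟨fun i => Int.floor_mono (hx i).1,
      fun i => Int.floor_mono (hx i).2⟩, rfl⟩, fun i => Int.fract (x i),
      ⟨fun i => ⟨Int.fract_nonneg _, Int.fract_lt_one _⟩, ?_⟩, ?_⟩
    · simpa only [Int.floor_add_fract] using hxX
    · funext i
      exact Int.floor_add_fract _
  · rintro ⟨_, ⟨z, -, rfl⟩, f, hf, rfl⟩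
    exact hf.2

end SliceArgument

/-- The restriction of a `⟨ℝ,+,<,ℤ⟩`-definable set to a box with rational corners is
`⟨ℝ,+,<,1⟩`-definable. -/
theorem stmt2 (n : ℕ) (hn : 1 ≤ n) (X : Set (Fin n → ℝ)) (hX : LsDefinable X)
    (a b : Fin n → ℚ) :
    SsDefinable (X ∩ {x | ∀ i, (a i : ℝ) ≤ x i ∧ x i ≤ (b i : ℝ)}) := by
  obtain ⟨φ, rfl⟩ := Set.empty_definable_iff.1 hX
  -- `good_formula` concerns the index type `Fin n ⊕ Fin 0`; projecting along `Sum.inl` gives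
  -- back the set defined by `φ`.
  have h := good_image (good_formula φ) (Sum.inl : Fin n → Fin n ⊕ Fin 0)
  have e : (fun g : Fin n ⊕ Fin 0 → ℝ => g ∘ Sum.inl) ''
      {w | Language.BoundedFormula.Realize φ (w ∘ Sum.inl) (w ∘ Sum.inr)} =
      Set.ofPred φ.Realize := by
    ext x
    constructor
    · rintro ⟨w, hw, rfl⟩
      rw [Set.mem_ofPred_eq, Language.Formula.Realize]
      convert (show Language.BoundedFormula.Realize φ (w ∘ Sum.inl) (w ∘ Sum.inr) from hw)
    · intro hx
      refine ⟨Sum.elim x default, ?_, rfl⟩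
      rw [Set.mem_ofPred_eq, Language.Formula.Realize] at hx
      rw [Set.mem_ofPred_eq, Sum.elim_comp_inl, Sum.elim_comp_inr]
      convert hx
  rw [e] at h
  exact h.inter_box a b
end

section
/- For every n ≥ 1 and every ⟨ℝ,+,<,ℤ⟩-definable set X ⊆ ℝ^n there exists a ⟨ℝ,+,<,1⟩-definable set Y ⊆ ℝ^n such that for every x ∈ ℝ^n there exist y ∈ ℝ^n and a real r > 0 with: for all w ∈ ℝ^n with |w| < r, one has x + w ∈ X if and only if y + w ∈ Y (equivalently, the translation u ↦ u + y − x is a bijection from B(x,r) ∩ X onto B(y,r) ∩ Y). -/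
/-!
Split a real vector as `x = ⌊x⌋ + fract x`. By induction on formulas, membership of `x` in a
`⟨ℝ,+,<,ℤ⟩`-definable set depends only on the integer vector `⌊x⌋` (in an arbitrary way) and on which
members of a finite family `C` of `⟨ℝ,+,<,1⟩`-formulas hold at `fract x` (`FloorFract`, proved in
`floorFract_formula`). Atomic formulas work because the value of a term at `fract x` is bounded, so
only finitely many comparisons of it matter; a quantifier over `z` becomes a quantifier over
`⌊z⌋`, absorbed by the arbitrary dependence on the integer part, and a quantifier over
`fract z ∈ [0,1)`, which can be expressed in `⟨ℝ,+,<,1⟩`. No quantifier elimination is needed.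

Near `x = k + f`, with `k = ⌊x⌋` and `f = fract x`, the floor of a point is `k - ε` with
`ε ∈ {0,1}^n`, so the germ of `X` at `x` is the germ at `f` of the set `X_T` of those `u` for which
`u + ε ∈ [0,1)^n` and `u + ε` satisfies exactly the formulas of `C` in `S`, for some `(ε, S) ∈ T`;
here `T` records which pairs `(ε, S)` occur in `X` over the integer point `k - ε`. There are
finitely many possible `T`, and `Y` is the union of the disjoint translates
`X_T - 2 g(T) (1,…,1)`, where `g` numbers the `T`'s. The translations go in the negative direction
because `y + c` with `c ∈ ℕ^n` is a term of the language.
-/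

open FirstOrder

open FirstOrder.Language

/-! ### Terms and atomic formulas of `⟨ℝ,+,<,1⟩` -/

/-- The term `1`. -/
def ssOne {β : Type} : SsLang.Term β := Term.func (l := 0) (L := SsLang) () ![]

/-- The term `s + t`. -/
def ssAdd {β : Type} (s t : SsLang.Term β) : SsLang.Term β :=
  Term.func (l := 2) (L := SsLang) () ![s, t]

/-- The term `t + 1 + ⋯ + 1`, with `m` ones. -/
def ssAddNat {β : Type} (t : SsLang.Term β) : ℕ → SsLang.Term β
  | 0 => t
  | m + 1 => ssAdd (ssAddNat t m) ssOne

/-- The formula `s < t`. -/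
def ssLt {α : Type} {n : ℕ} (s t : SsLang.Term (α ⊕ Fin n)) : SsLang.BoundedFormula α n :=
  BoundedFormula.rel (l := 2) (L := SsLang) () ![s, t]

@[simp] lemma realize_ssOne {β : Type} (v : β → ℝ) : (ssOne : SsLang.Term β).realize v = 1 := rfl

@[simp] lemma realize_ssAdd {β : Type} (s t : SsLang.Term β) (v : β → ℝ) :
    (ssAdd s t).realize v = s.realize v + t.realize v := rfl

@[simp] lemma realize_ssAddNat {β : Type} (t : SsLang.Term β) (m : ℕ) (v : β → ℝ) :
    (ssAddNat t m).realize v = t.realize v + m := by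
  induction m with
  | zero => simp [ssAddNat]
  | succ m ih => simp [ssAddNat, ih, add_assoc]

@[simp] lemma realize_ssLt {α : Type} {n : ℕ} (s t : SsLang.Term (α ⊕ Fin n)) (v : α → ℝ)
    (xs : Fin n → ℝ) :
    (ssLt s t).Realize v xs ↔ s.realize (Sum.elim v xs) < t.realize (Sum.elim v xs) := Iff.rfl

/-- The formula `0 ≤ t < 1`, with `0 ≤ t` written as `¬ t + 1 < 1`. -/
def ssUnit {α : Type} {n : ℕ} (t : SsLang.Term (α ⊕ Fin n)) : SsLang.BoundedFormula α n :=
  ∼(ssLt (ssAdd t ssOne) ssOne) ⊓ ssLt t ssOne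

@[simp] lemma realize_ssUnit {α : Type} {n : ℕ} (t : SsLang.Term (α ⊕ Fin n)) (v : α → ℝ)
    (xs : Fin n → ℝ) :
    (ssUnit t).Realize v xs ↔
      0 ≤ t.realize (Sum.elim v xs) ∧ t.realize (Sum.elim v xs) < 1 := by
  simp [ssUnit]

open Classical in
/-- The formula saying that `S` is exactly the set of indices `i` for which `C i` holds. -/
noncomputable def ssPattern {α I : Type} [Finite I] {n : ℕ} (C : I → SsLang.BoundedFormula α n)
    (S : Set I) : SsLang.BoundedFormula α n :=
  BoundedFormula.iInf fun i => if i ∈ S then C i else ∼(C i)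

@[simp] lemma realize_ssPattern {α I : Type} [Finite I] {n : ℕ}
    (C : I → SsLang.BoundedFormula α n) (S : Set I) (v : α → ℝ) (xs : Fin n → ℝ) :
    (ssPattern C S).Realize v xs ↔ ∀ i, ((C i).Realize v xs ↔ i ∈ S) := by
  simp only [ssPattern, BoundedFormula.realize_iInf]
  refine forall_congr' fun i => ?_
  by_cases h : i ∈ S <;> simp [h]

/-! ### Separating integer and fractional parts -/

/-- The predicate `p` at `(v, xs)` depends only on the integer parts of the coordinates and on which
members of some finite family of `⟨ℝ,+,<,1⟩`-formulas hold at their fractional parts. -/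
def FloorFract {α : Type} {n : ℕ} (p : (α → ℝ) → (Fin n → ℝ) → Prop) : Prop :=
  ∃ (I : Type) (_ : Finite I) (C : I → SsLang.BoundedFormula α n),
    ∀ v v' : α → ℝ, ∀ xs xs' : Fin n → ℝ,
      (∀ a, ⌊v a⌋ = ⌊v' a⌋) → (∀ j, ⌊xs j⌋ = ⌊xs' j⌋) →
      (∀ i, (C i).Realize (fun a => Int.fract (v a)) (fun j => Int.fract (xs j)) ↔
        (C i).Realize (fun a => Int.fract (v' a)) (fun j => Int.fract (xs' j))) →
      (p v xs ↔ p v' xs')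

/-- A term of `⟨ℝ,+,<,ℤ⟩` is a linear form with coefficients in `ℕ`, so it splits into an integer
depending on the floors and a bounded linear form in the fractional parts. -/
lemma exists_term_split {β : Type} (t : LsLang.Term β) :
    ∃ (N : ℕ) (z : (β → ℤ) → ℤ) (s : SsLang.Term β), ∀ x : β → ℝ,
      t.realize x = z (fun b => ⌊x b⌋) + s.realize (fun b => Int.fract (x b)) ∧
      0 ≤ s.realize (fun b => Int.fract (x b)) ∧ s.realize (fun b => Int.fract (x b)) ≤ N := by
  induction t with
  | var b =>
    refine ⟨1, fun k => k b, Term.var b, fun x => ⟨?_, ?_, ?_⟩⟩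
    · simp
    · simp
    · simpa using (Int.fract_lt_one (x b)).le
  | @func l f ts ih =>
    match l, f, ts, ih with
    | 2, f, ts, ih =>
      obtain ⟨N, z, s, h⟩ := ih 0
      obtain ⟨N', z', s', h'⟩ := ih 1
      refine ⟨N + N', fun k => z k + z' k, ssAdd s s', fun x => ?_⟩
      obtain ⟨h1, h2, h3⟩ := h x
      obtain ⟨h1', h2', h3'⟩ := h' x
      refine ⟨?_, ?_, ?_⟩
      · have : (Term.func (L := LsLang) (l := 2) f ts).realize x
            = (ts 0).realize x + (ts 1).realize x := rfl
        rw [this, h1, h1']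
        push_cast
        simp only [realize_ssAdd]
        ring
      · simp only [realize_ssAdd]; linarith
      · simp only [realize_ssAdd]; push_cast; linarith

lemma sumElim_comp {α β γ δ : Type} (f : γ → δ) (v : α → γ) (xs : β → γ) :
    (fun b => f (Sum.elim v xs b)) = Sum.elim (fun a => f (v a)) (fun j => f (xs j)) := by
  funext b; cases b <;> rfl

lemma floorFract_imp {α : Type} {n : ℕ} {p q : (α → ℝ) → (Fin n → ℝ) → Prop}
    (hp : FloorFract p) (hq : FloorFract q) : FloorFract (fun v xs => p v xs → q v xs) := by
  obtain ⟨I, _, C, h⟩ := hp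
  obtain ⟨J, _, D, h'⟩ := hq
  refine ⟨I ⊕ J, inferInstance, Sum.elim C D, fun v v' xs xs' h1 h2 h3 => ?_⟩
  exact imp_congr (h v v' xs xs' h1 h2 fun i => h3 (Sum.inl i))
    (h' v v' xs xs' h1 h2 fun i => h3 (Sum.inr i))

lemma floorFract_false {α : Type} {n : ℕ} :
    FloorFract (fun (_ : α → ℝ) (_ : Fin n → ℝ) => False) :=
  ⟨Empty, inferInstance, fun i => i.elim, fun _ _ _ _ _ _ _ => Iff.rfl⟩

/-- An inequality `z₁ + s₁ < z₂ + s₂` with `0 ≤ s₁ ≤ N₁` and `0 ≤ s₂ ≤ N₂` depends on the integer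
`z₂ - z₁` and, only if this integer lies in `[-N₂, N₁]`, on one of the finitely many comparisons
`s₁ + a < s₂ + b` with `a ≤ N₂` and `b ≤ N₁`. -/
lemma floorFract_lt {α : Type} {n : ℕ} (t₁ t₂ : LsLang.Term (α ⊕ Fin n)) :
    FloorFract (fun (v : α → ℝ) (xs : Fin n → ℝ) =>
      t₁.realize (Sum.elim v xs) < t₂.realize (Sum.elim v xs)) := by
  obtain ⟨N₁, z₁, s₁, h₁⟩ := exists_term_split t₁
  obtain ⟨N₂, z₂, s₂, h₂⟩ := exists_term_split t₂
  refine ⟨Fin (N₂ + 1) × Fin (N₁ + 1), inferInstance,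
    fun p => ssLt (ssAddNat s₁ p.1) (ssAddNat s₂ p.2), fun v v' xs xs' hv hxs hC => ?_⟩
  obtain ⟨e₁, l₁, u₁⟩ := h₁ (Sum.elim v xs)
  obtain ⟨e₂, l₂, u₂⟩ := h₂ (Sum.elim v xs)
  obtain ⟨e₁', l₁', u₁'⟩ := h₁ (Sum.elim v' xs')
  obtain ⟨e₂', l₂', u₂'⟩ := h₂ (Sum.elim v' xs')
  have hk : (fun b => ⌊Sum.elim v xs b⌋) = fun b => ⌊Sum.elim v' xs' b⌋ := by
    rw [sumElim_comp, sumElim_comp]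
    simp only [hv, hxs]
  rw [← hk] at e₁' e₂'
  simp only [sumElim_comp Int.fract] at *
  simp only [realize_ssLt, realize_ssAddNat] at hC
  rw [e₁, e₂, e₁', e₂']
  generalize z₁ (fun b => ⌊Sum.elim v xs b⌋) = m₁ at *
  generalize z₂ (fun b => ⌊Sum.elim v xs b⌋) = m₂ at *
  rcases lt_or_ge (N₁ : ℤ) (m₂ - m₁) with hd | hd
  · have hd' : (N₁ : ℝ) < m₂ - m₁ := by exact_mod_cast hd
    exact iff_of_true (by linarith) (by linarith)
  rcases lt_or_ge (N₂ : ℤ) (m₁ - m₂) with hd2 | hd2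
  · have hd' : (N₂ : ℝ) < m₁ - m₂ := by exact_mod_cast hd2
    exact iff_of_false (by linarith) (by linarith)
  have key := hC (⟨(m₁ - m₂).toNat, by omega⟩, ⟨(m₂ - m₁).toNat, by omega⟩)
  have hab : (((m₂ - m₁).toNat : ℕ) : ℝ) - (((m₁ - m₂).toNat : ℕ) : ℝ) = m₂ - m₁ := by
    have : (((m₂ - m₁).toNat : ℕ) : ℤ) - (((m₁ - m₂).toNat : ℕ) : ℤ) = m₂ - m₁ := by omega
    exact_mod_cast this
  simp only at key
  constructor
  · intro h
    have := key.1 (by linarith)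
    linarith
  · intro h
    have := key.2 (by linarith)
    linarith

lemma floorFract_eq {α : Type} {n : ℕ} (t₁ t₂ : LsLang.Term (α ⊕ Fin n)) :
    FloorFract (fun (v : α → ℝ) (xs : Fin n → ℝ) =>
      t₁.realize (Sum.elim v xs) = t₂.realize (Sum.elim v xs)) := by
  have h := floorFract_imp (floorFract_imp (floorFract_lt t₁ t₂) floorFract_false)
    (floorFract_lt t₂ t₁)
  convert floorFract_imp h floorFract_false using 3 with v xs
  constructor
  · exact fun e h => (h fun hlt => hlt.ne e).ne e.symm
  · intro h
    by_contra hne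
    exact h fun h' => (lt_or_gt_of_ne hne).resolve_left h'

/-- The form `z + s` with `0 ≤ s ≤ N` is an integer exactly when `s = m` for some `m ≤ N`. -/
lemma floorFract_int {α : Type} {n : ℕ} (t : LsLang.Term (α ⊕ Fin n)) :
    FloorFract (fun (v : α → ℝ) (xs : Fin n → ℝ) =>
      ∃ k : ℤ, t.realize (Sum.elim v xs) = k) := by
  obtain ⟨N, z, s, h⟩ := exists_term_split t
  refine ⟨Fin (N + 1), inferInstance,
    fun m => Term.bdEqual (ssAdd s ssOne) (ssAddNat ssOne m), fun v v' xs xs' hv hxs hC => ?_⟩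
  -- The hypotheses are symmetric in the two points, so one implication suffices.
  have main : ∀ (v v' : α → ℝ) (xs xs' : Fin n → ℝ),
      (∀ m : Fin (N + 1),
        s.realize (Sum.elim (fun a => Int.fract (v a)) (fun j => Int.fract (xs j))) = (m : ℕ) →
        s.realize (Sum.elim (fun a => Int.fract (v' a)) (fun j => Int.fract (xs' j))) = (m : ℕ)) →
      (∃ k : ℤ, t.realize (Sum.elim v xs) = k) → ∃ k : ℤ, t.realize (Sum.elim v' xs') = k := by
    rintro v v' xs xs' hC ⟨k, hk⟩
    obtain ⟨e, l, u⟩ := h (Sum.elim v xs)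
    obtain ⟨e', -, -⟩ := h (Sum.elim v' xs')
    rw [hk] at e
    simp only [sumElim_comp Int.fract] at *
    set m : ℤ := k - z (fun b => ⌊Sum.elim v xs b⌋) with hm
    have hs : s.realize (Sum.elim (fun a => Int.fract (v a)) (fun j => Int.fract (xs j))) = m := by
      rw [hm]; push_cast; linarith
    rw [hs] at l u
    have l' : 0 ≤ m := by exact_mod_cast l
    have u' : m ≤ N := by exact_mod_cast u
    have hmn : ((m.toNat : ℕ) : ℝ) = m := by
      have : ((m.toNat : ℕ) : ℤ) = m := Int.toNat_of_nonneg l'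
      exact_mod_cast this
    have := hC ⟨m.toNat, by omega⟩ (by rw [hs, hmn])
    refine ⟨z (fun b => ⌊Sum.elim v' xs' b⌋) + m, ?_⟩
    rw [e', this, hmn]
    push_cast
    rfl
  simp only [BoundedFormula.realize_bdEqual, realize_ssAdd, realize_ssAddNat, realize_ssOne,
    add_comm (1 : ℝ), add_left_inj] at hC
  exact ⟨main v v' xs xs' fun m => (hC m).1, main v' v xs' xs fun m => (hC m).2⟩

/-- The new formulas say, for each `S`, that some `w ∈ [0,1)` realizes the pattern `S`. If `v, v'`
agree on these, then any `z` is matched by some `z'` with the same floor and the same pattern. -/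
lemma floorFract_all {α : Type} {n : ℕ} {p : (α → ℝ) → (Fin (n + 1) → ℝ) → Prop}
    (hp : FloorFract p) : FloorFract (fun v xs => ∀ z : ℝ, p v (Fin.snoc xs z)) := by
  obtain ⟨I, _, C, h⟩ := hp
  have hsnoc : ∀ (xs : Fin n → ℝ) (z : ℝ),
      (fun j => Int.fract ((Fin.snoc xs z : Fin (n + 1) → ℝ) j)) =
        Fin.snoc (fun j => Int.fract (xs j)) (Int.fract z) := by
    intro xs z
    funext j
    refine Fin.lastCases ?_ (fun j => ?_) j <;> simp
  refine ⟨Set I, inferInstance,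
    fun S => BoundedFormula.ex (ssUnit (Term.var (Sum.inr (Fin.last n))) ⊓ ssPattern C S),
    fun v v' xs xs' hv hxs hC => ?_⟩
  simp only [BoundedFormula.realize_ex, BoundedFormula.realize_inf, realize_ssUnit,
    realize_ssPattern, Term.realize_var, Sum.elim_inr, Fin.snoc_last] at hC
  have main : ∀ (v v' : α → ℝ) (xs xs' : Fin n → ℝ), (∀ a, ⌊v a⌋ = ⌊v' a⌋) →
      (∀ j, ⌊xs j⌋ = ⌊xs' j⌋) →
      (∀ S : Set I, (∃ w : ℝ, (0 ≤ w ∧ w < 1) ∧ ∀ i, ((C i).Realize (fun a => Int.fract (v a))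
          (Fin.snoc (fun j => Int.fract (xs j)) w) ↔ i ∈ S)) →
        ∃ w : ℝ, (0 ≤ w ∧ w < 1) ∧ ∀ i, ((C i).Realize (fun a => Int.fract (v' a))
          (Fin.snoc (fun j => Int.fract (xs' j)) w) ↔ i ∈ S)) →
      (∀ z : ℝ, p v' (Fin.snoc xs' z)) → ∀ z : ℝ, p v (Fin.snoc xs z) := by
    intro v v' xs xs' hv hxs hC hall z
    obtain ⟨w, ⟨hw0, hw1⟩, hw⟩ := hC {i | (C i).Realize (fun a => Int.fract (v a))
        (Fin.snoc (fun j => Int.fract (xs j)) (Int.fract z))}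
      ⟨Int.fract z, ⟨Int.fract_nonneg z, Int.fract_lt_one z⟩, fun i => Iff.rfl⟩
    have hfl : ⌊(⌊z⌋ : ℝ) + w⌋ = ⌊z⌋ := by
      rw [Int.floor_intCast_add, Int.floor_eq_zero_iff.2 ⟨hw0, hw1⟩, add_zero]
    have hfr : Int.fract ((⌊z⌋ : ℝ) + w) = w := by
      rw [Int.fract_intCast_add, Int.fract_eq_self.2 ⟨hw0, hw1⟩]
    refine (h v v' (Fin.snoc xs z) (Fin.snoc xs' (⌊z⌋ + w)) hv (fun j => ?_) (fun i => ?_)).2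
      (hall _)
    · refine Fin.lastCases ?_ (fun j => ?_) j
      · simp only [Fin.snoc_last, hfl]
      · simp only [Fin.snoc_castSucc, hxs]
    · rw [hsnoc, hsnoc, hfr]
      exact (hw i).symm
  exact ⟨main v' v xs' xs (fun a => (hv a).symm) (fun j => (hxs j).symm) fun S => (hC S).2,
    main v v' xs xs' hv hxs fun S => (hC S).1⟩

lemma floorFract_formula {α : Type} {n : ℕ} (φ : LsLang.BoundedFormula α n) :
    FloorFract (fun (v : α → ℝ) (xs : Fin n → ℝ) => φ.Realize v xs) := by
  induction φ with
  | falsum => exact floorFract_false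
  | equal t₁ t₂ => exact floorFract_eq t₁ t₂
  | @rel n l R ts =>
    match l, R, ts with
    | 1, _, ts => exact floorFract_int (ts 0)
    | 2, _, ts => exact floorFract_lt (ts 0) (ts 1)
  | imp φ ψ hφ hψ => exact floorFract_imp hφ hψ
  | all φ hφ => exact floorFract_all hφ

/-! ### Assembling the local models -/

/-- Local neighborhoods of a `⟨ℝ,+,<,ℤ⟩`-definable set are indistinguishable from those of
some `⟨ℝ,+,<,1⟩`-definable set. -/
theorem stmt3 (n : ℕ) (hn : 1 ≤ n) (X : Set (Fin n → ℝ)) (hX : LsDefinable X) :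
    ∃ Y : Set (Fin n → ℝ), SsDefinable Y ∧
      ∀ x : Fin n → ℝ, ∃ y : Fin n → ℝ, ∃ r > (0 : ℝ),
        ∀ w : Fin n → ℝ, ‖w‖ < r → (x + w ∈ X ↔ y + w ∈ Y) := by
  obtain ⟨φ, rfl⟩ := Set.empty_definable_iff.1 hX
  obtain ⟨I, _, C, hC⟩ := floorFract_formula φ
  replace hC : ∀ x x' : Fin n → ℝ, (∀ a, ⌊x a⌋ = ⌊x' a⌋) →
      (∀ i, (Formula.Realize (C i) (fun a => Int.fract (x a)) ↔
        Formula.Realize (C i) (fun a => Int.fract (x' a)))) →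
      (φ.Realize x ↔ φ.Realize x') := fun x x' h1 h2 =>
    hC x x' _ _ h1 (fun j => j.elim0) fun i => by
      simp only [Formula.Realize] at h2
      convert h2 i using 2
  -- The possible local data `T`, numbered by `g`.
  let J : Type := (Fin n → Bool) → Set I → Prop
  obtain ⟨g, hg⟩ : ∃ g : J → ℕ, Function.Injective g :=
    ⟨fun T => Finite.equivFin J T, fun a b h => (Finite.equivFin J).injective (Fin.ext h)⟩
  let c : J → (Fin n → Bool) → Fin n → ℕ := fun T ε a => 2 * g T + (ε a).toNat
  let ψ : SsLang.Formula (Fin n) := BoundedFormula.iSup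
    fun q : {q : J × (Fin n → Bool) × Set I // q.1 q.2.1 q.2.2} =>
      BoundedFormula.subst
        (BoundedFormula.iInf (fun a : Fin n => ssUnit (Term.var (Sum.inl a))) ⊓
          ssPattern C q.1.2.2)
        (fun a => ssAddNat (Term.var a) (c q.1.1 q.1.2.1 a))
  have hψ : ∀ y : Fin n → ℝ, ψ.Realize y ↔ ∃ (T : J) (ε : Fin n → Bool) (S : Set I), T ε S ∧
      (∀ a, 0 ≤ y a + c T ε a ∧ y a + c T ε a < 1) ∧
      ∀ i, (Formula.Realize (C i) (fun a => y a + c T ε a) ↔ i ∈ S) := by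
    intro y
    simp only [ψ, Formula.Realize, BoundedFormula.realize_iSup, BoundedFormula.realize_subst,
      BoundedFormula.realize_inf, BoundedFormula.realize_iInf, realize_ssUnit, realize_ssPattern,
      realize_ssAddNat, Term.realize_var, Sum.elim_inl]
    constructor
    · rintro ⟨⟨⟨T, ε, S⟩, hT⟩, h⟩
      exact ⟨T, ε, S, hT, h⟩
    · rintro ⟨T, ε, S, hT, h⟩
      exact ⟨⟨⟨T, ε, S⟩, hT⟩, h⟩
  refine ⟨Set.ofPred ψ.Realize, Set.empty_definable_iff.2 ⟨ψ, rfl⟩, fun x => ?_⟩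
  let T : J := fun ε S => ∃ x' : Fin n → ℝ, (∀ a, ⌊x' a⌋ = ⌊x a⌋ - ((ε a).toNat : ℤ)) ∧
    (∀ i, (Formula.Realize (C i) (fun a => Int.fract (x' a)) ↔ i ∈ S)) ∧ φ.Realize x'
  obtain ⟨r, hr0, hr1, hr⟩ : ∃ r > (0 : ℝ), r ≤ 1 ∧ ∀ a, r ≤ 1 - Int.fract (x a) := by
    have : Nonempty (Fin n) := ⟨⟨0, hn⟩⟩
    obtain ⟨a₀, ha₀⟩ := Finite.exists_min fun a => 1 - Int.fract (x a)
    exact ⟨1 - Int.fract (x a₀), by linarith [Int.fract_lt_one (x a₀)],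
      by linarith [Int.fract_nonneg (x a₀)], ha₀⟩
  refine ⟨fun a => Int.fract (x a) - 2 * g T, r, hr0, fun w hw => ?_⟩
  have hwa : ∀ a, -1 ≤ Int.fract (x a) + w a ∧ Int.fract (x a) + w a < 1 := by
    intro a
    have h1 : |w a| < r := (norm_le_pi_norm w a).trans_lt hw
    have h2 := abs_lt.1 h1
    have h3 := hr a
    have h4 := Int.fract_nonneg (x a)
    constructor <;> linarith
  -- A shift `ε` moving `fract x + w` into the unit cube computes floor and fractional part.
  have hfl : ∀ a (b : Bool), 0 ≤ Int.fract (x a) + w a + (b.toNat : ℕ) →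
      Int.fract (x a) + w a + (b.toNat : ℕ) < 1 →
      ⌊x a + w a⌋ = ⌊x a⌋ - ((b.toNat : ℕ) : ℤ) ∧
      Int.fract (x a + w a) = Int.fract (x a) + w a + (b.toNat : ℕ) := by
    intro a b h0 h1
    have e := Int.floor_add_fract (x a)
    have h : ⌊x a + w a⌋ = ⌊x a⌋ - ((b.toNat : ℕ) : ℤ) := by
      rw [Int.floor_eq_iff]
      push_cast
      constructor <;> linarith
    refine ⟨h, ?_⟩
    rw [Int.fract, h]
    push_cast
    linarith
  change φ.Realize (x + w) ↔ ψ.Realize _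
  rw [hψ]
  constructor
  · intro hx
    let ε : Fin n → Bool := fun a => decide (Int.fract (x a) + w a < 0)
    have hε : ∀ a, 0 ≤ Int.fract (x a) + w a + ((ε a).toNat : ℕ) ∧
        Int.fract (x a) + w a + ((ε a).toNat : ℕ) < 1 := by
      intro a
      obtain ⟨h1, h2⟩ := hwa a
      by_cases h : Int.fract (x a) + w a < 0
      · simp only [ε, h, decide_true, Bool.toNat_true]
        push_cast
        constructor <;> linarith
      · simp only [ε, h, decide_false, Bool.toNat_false]
        push_cast
        constructor <;> linarith
    have hy : ∀ a, ((fun a => Int.fract (x a) - 2 * (g T : ℝ)) + w) a + (c T ε a : ℕ)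
        = Int.fract (x a) + w a + ((ε a).toNat : ℕ) := by
      intro a
      simp only [c, Pi.add_apply]
      push_cast
      ring
    refine ⟨T, ε, {i | Formula.Realize (C i) (fun a => Int.fract ((x + w) a))},
      ⟨x + w, fun a => (hfl a _ (hε a).1 (hε a).2).1, fun i => Iff.rfl, hx⟩, ?_, ?_⟩
    · intro a
      rw [hy]
      exact hε a
    · intro i
      simp only [hy]
      rw [Set.mem_ofPred_eq]
      simp only [Pi.add_apply, fun a => (hfl a _ (hε a).1 (hε a).2).2]
  · rintro ⟨T', ε, S, hT', hbox, hpat⟩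
    have hgT : g T' = g T := by
      obtain ⟨h1, h2⟩ := hwa ⟨0, hn⟩
      obtain ⟨h3, h4⟩ := hbox ⟨0, hn⟩
      simp only [c, Pi.add_apply] at h3 h4
      push_cast at h3 h4
      have h5 : ((ε ⟨0, hn⟩).toNat : ℝ) ≤ 1 := by exact_mod_cast Bool.toNat_le _
      have h6 : (0 : ℝ) ≤ ((ε ⟨0, hn⟩).toNat : ℝ) := by positivity
      have h7 : (g T' : ℝ) < g T + 1 := by linarith
      have h8 : (g T : ℝ) < g T' + 1 := by linarith
      have h7' : g T' < g T + 1 := by exact_mod_cast h7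
      have h8' : g T < g T' + 1 := by exact_mod_cast h8
      omega
    obtain rfl : T' = T := hg hgT
    have hy : ∀ a, ((fun a => Int.fract (x a) - 2 * (g T : ℝ)) + w) a + (c T ε a : ℕ)
        = Int.fract (x a) + w a + ((ε a).toNat : ℕ) := by
      intro a
      simp only [c, Pi.add_apply]
      push_cast
      ring
    simp only [hy] at hbox hpat
    obtain ⟨x', hx'1, hx'2, hx'3⟩ := hT'
    refine (hC (x + w) x' (fun a => ?_) (fun i => ?_)).2 hx'3
    · rw [hx'1, Pi.add_apply, (hfl a _ (hbox a).1 (hbox a).2).1]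
    · rw [hx'2, ← hpat i]
      simp only [Pi.add_apply, fun a => (hfl a _ (hbox a).1 (hbox a).2).2]
end

section
/- Let X ⊆ ℝ^n be ⟨ℝ,+,<,ℤ⟩-definable and let ξ ∈ ℝ^n. Then the subspace Str_X(ξ) is generated by vectors with rational coordinates; that is, Str_X(ξ) equals the ℝ-linear span of Str_X(ξ) ∩ ℚ^n. -/
/-!
Near `ξ`, a definable set `X` is a union of cells of a finite arrangement of hyperplanes through
`ξ` with rational normals (`exists_local_forms`). Every point is an integer vector `k` plus a
bounded vector `u`. A predicate is called `Tame` if, for each fixed `k`, its truth at `k + u` is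
decided by the signs at `u` of finitely many rational affine forms, the same ones for every `k`.
No condition is imposed on the dependence on `k`, so no Presburger arithmetic is needed: atomic
formulas are tame (`tame_intForm`), implication is immediate, and quantifiers are handled by
Fourier–Motzkin elimination of the bounded part (`exists_eliminant`, `tame_forall`).

Let `G` be the finite set of rational linear forms describing `X` near `ξ`, and let `G₀` be the
forms of `G` that vanish on the subspace `V = Str_X(ξ)`. Some `v₀ ∈ V` is killed by no form in
`G \ G₀`. If `w` and `w'` are small and have the same `G₀`-signs, then shrinking both towards the
origin and translating by a multiple of `v₀`, neither of which affects membership in `X`, gives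
points with the same `G`-signs. Hence `G₀` alone describes `X` near `ξ`, and so `V` is the common
kernel of the rational forms in `G₀` (`exists_equations`). A common kernel of rational forms is
spanned by its rational vectors: expand coordinates in a basis of `ℝ` over `ℚ`
(`mem_span_rational`).
-/

open FirstOrder

/-! ### Rational affine forms and Fourier–Motzkin elimination -/

/-- Back-and-forth for finite subsets of a dense order without endpoints: two families in the same
order position are extended compatibly by one more point. -/
lemma exists_same_position {I : Type*} (S : Finset I) (t t' : I → ℝ)
    (h : ∀ i ∈ S, ∀ j ∈ S, SignType.sign (t i - t j) = SignType.sign (t' i - t' j)) (a : ℝ) :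
    ∃ a' : ℝ, ∀ i ∈ S, SignType.sign (a' - t' i) = SignType.sign (a - t i) := by
  classical
  by_cases ha : ∃ i ∈ S, a = t i
  · obtain ⟨i, hi, rfl⟩ := ha
    exact ⟨t' i, fun j hj => (h i hi j hj).symm⟩
  · push Not at ha
    obtain ⟨m, hlo, hhi⟩ := Order.exists_between_finsets
      ((S.filter (fun i => t i < a)).image t') ((S.filter (fun i => a < t i)).image t') (by
        intro x hx y hy
        simp only [Finset.mem_image, Finset.mem_filter] at hx hy
        obtain ⟨i, ⟨hi, hia⟩, rfl⟩ := hx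
        obtain ⟨j, ⟨hj, hja⟩, rfl⟩ := hy
        have h1 := h i hi j hj
        rw [sign_neg (by linarith : t i - t j < 0), eq_comm, sign_eq_neg_one_iff] at h1
        linarith)
    refine ⟨m, fun i hi => ?_⟩
    rcases lt_or_gt_of_ne (ha i hi) with h1 | h1
    · have h2 := hhi (t' i) (Finset.mem_image_of_mem _ (by simp [hi, h1]))
      rw [sign_neg (by linarith), sign_neg (by linarith)]
    · have h2 := hlo (t' i) (Finset.mem_image_of_mem _ (by simp [hi, h1]))
      rw [sign_pos (by linarith), sign_pos (by linarith)]

/-- A rational affine form in the variables `ι`: rational coefficients and a rational constant. -/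
abbrev RatForm (ι : Type) := (ι → ℚ) × ℚ

/-- The value of a rational affine form at a real point. -/
noncomputable def RatForm.ev {ι : Type} [Fintype ι] (f : RatForm ι) (p : ι → ℝ) : ℝ :=
  ∑ i, (f.1 i : ℝ) * p i + f.2

/-- The two points lie on the same side of (or both on) every hyperplane `f = 0`, `f ∈ F`. -/
def SameSigns {ι : Type} [Fintype ι] (F : Finset (RatForm ι)) (p q : ι → ℝ) : Prop :=
  ∀ f ∈ F, SignType.sign (f.ev p) = SignType.sign (f.ev q)

/-- Finitely many rational affine forms `F` decide, by their signs at `u ∈ (-1,1)^ι`, whether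
`k + u` satisfies `P`; the answer may depend arbitrarily on the integer vector `k`, but `F` may
not. The boxes `k + (-1,1)^ι` are taken overlapping so that every point is interior to one. -/
def Tame {ι : Type} [Fintype ι] (P : (ι → ℝ) → Prop) : Prop :=
  ∃ F : Finset (RatForm ι), ∀ (k : ι → ℤ) (u u' : ι → ℝ),
    (∀ i, |u i| < 1) → (∀ i, |u' i| < 1) → SameSigns F u u' →
      (P (fun i => k i + u i) ↔ P (fun i => k i + u' i))

/-- Fourier–Motzkin elimination of the last variable, in back-and-forth form. The forms `F'` are
the members of `F` with the last variable deleted and the differences of the thresholds at which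
the members of `F` containing that variable vanish; the differences with `(c f)⁻¹ = 0⁻¹ = 0` are
harmless extra forms. -/
lemma exists_eliminant {N n : ℕ} (F : Finset (RatForm (Fin N ⊕ Fin (n + 1)))) :
    ∃ F' : Finset (RatForm (Fin N ⊕ Fin n)), ∀ (v v' : Fin N → ℝ) (x x' : Fin n → ℝ),
      SameSigns F' (Sum.elim v x) (Sum.elim v' x') → ∀ a : ℝ, ∃ a' : ℝ,
        SameSigns F (Sum.elim v (Fin.snoc x a : Fin (n + 1) → ℝ))
          (Sum.elim v' (Fin.snoc x' a' : Fin (n + 1) → ℝ)) := by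
  classical
  let c : RatForm (Fin N ⊕ Fin (n + 1)) → ℚ := fun f => f.1 (Sum.inr (Fin.last n))
  let R : RatForm (Fin N ⊕ Fin (n + 1)) → RatForm (Fin N ⊕ Fin n) := fun f =>
    (fun i => f.1 (Sum.map id Fin.castSucc i), f.2)
  have hev : ∀ f (v : Fin N → ℝ) (x : Fin n → ℝ) (a : ℝ),
      RatForm.ev f (Sum.elim v (Fin.snoc x a : Fin (n + 1) → ℝ)) =
        RatForm.ev (R f) (Sum.elim v x) + c f * a := by
    intro f v x a
    simp [RatForm.ev, R, c, Fintype.sum_sum_type, Fin.sum_univ_castSucc]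
    ring
  have hdiff : ∀ f g (p : Fin N ⊕ Fin n → ℝ),
      RatForm.ev ((c f)⁻¹ • R f - (c g)⁻¹ • R g) p =
        (c f : ℝ)⁻¹ * RatForm.ev (R f) p - (c g : ℝ)⁻¹ * RatForm.ev (R g) p := by
    intro f g p
    simp only [RatForm.ev, Prod.fst_sub, Prod.snd_sub, Prod.smul_fst, Prod.smul_snd, Pi.sub_apply,
      Pi.smul_apply, smul_eq_mul, Rat.cast_sub, Rat.cast_mul, Rat.cast_inv, sub_mul,
      Finset.sum_sub_distrib, mul_add, Finset.mul_sum, mul_assoc]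
    ring
  refine ⟨F.image R ∪ Finset.image₂ (fun f g => (c f)⁻¹ • R f - (c g)⁻¹ • R g) F F,
    fun v v' x x' h a => ?_⟩
  obtain ⟨a', ha'⟩ := exists_same_position (F.filter (fun f => c f ≠ 0))
    (fun f => -((c f : ℝ)⁻¹ * RatForm.ev (R f) (Sum.elim v x)))
    (fun f => -((c f : ℝ)⁻¹ * RatForm.ev (R f) (Sum.elim v' x'))) (by
      intro f hf g hg
      have h1 := h _ (Finset.mem_union_right _ (Finset.mem_image₂_of_mem
        (Finset.mem_of_mem_filter _ hg) (Finset.mem_of_mem_filter _ hf)))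
      rw [hdiff, hdiff] at h1
      convert h1 using 2 <;> ring) a
  refine ⟨a', fun f hf => ?_⟩
  rw [hev, hev]
  by_cases hc : c f = 0
  · simpa [hc] using h _ (Finset.mem_union_left _ (Finset.mem_image_of_mem R hf))
  · have h1 := ha' f (by simp [hf, hc])
    have hc' : (c f : ℝ) ≠ 0 := by exact_mod_cast hc
    have key : ∀ y b : ℝ, y + c f * b = c f * (b - -((c f : ℝ)⁻¹ * y)) := by
      intro y b; field_simp; ring
    rw [key, key, sign_mul, sign_mul, h1]

/-! ### Definable predicates are tame -/

lemma tame_forall {N n : ℕ} {P : (Fin N ⊕ Fin (n + 1) → ℝ) → Prop} (hP : Tame P) :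
    Tame (fun p : Fin N ⊕ Fin n → ℝ => ∀ a : ℝ,
      P (Sum.elim (p ∘ Sum.inl) (Fin.snoc (p ∘ Sum.inr) a : Fin (n + 1) → ℝ))) := by
  classical
  obtain ⟨F, hF⟩ := hP
  let e (d : ℚ) : RatForm (Fin N ⊕ Fin (n + 1)) := (Pi.single (Sum.inr (Fin.last n)) 1, d)
  have he : ∀ d (v : Fin N → ℝ) (x : Fin n → ℝ) (a : ℝ),
      (e d).ev (Sum.elim v (Fin.snoc x a : Fin (n + 1) → ℝ)) = a + d := by
    intro d v x a
    simp [RatForm.ev, e, Fintype.sum_sum_type, Fin.sum_univ_castSucc, Pi.single_apply]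
  -- The forms `a - 1` and `a + 1` keep the eliminated coordinate inside `(-1,1)`.
  obtain ⟨F', hF'⟩ := exists_eliminant (F ∪ {e (-1), e 1})
  have main : ∀ (k : Fin N ⊕ Fin n → ℤ) (u u' : Fin N ⊕ Fin n → ℝ),
      (∀ i, |u i| < 1) → (∀ i, |u' i| < 1) → SameSigns F' u u' →
      (∀ a : ℝ, P (Sum.elim ((fun i => (k i : ℝ) + u i) ∘ Sum.inl)
        (Fin.snoc ((fun i => (k i : ℝ) + u i) ∘ Sum.inr) a : Fin (n + 1) → ℝ))) →
      ∀ a : ℝ, P (Sum.elim ((fun i => (k i : ℝ) + u' i) ∘ Sum.inl)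
        (Fin.snoc ((fun i => (k i : ℝ) + u' i) ∘ Sum.inr) a : Fin (n + 1) → ℝ)) := by
    intro k u u' hu hu' hs h a'
    obtain ⟨b, hb⟩ := hF' (u' ∘ Sum.inl) (u ∘ Sum.inl) (u' ∘ Sum.inr) (u ∘ Sum.inr)
      (by simpa [SameSigns, Sum.elim_comp_inl_inr] using fun c d hf => (hs (c, d) hf).symm)
      (Int.fract a')
    have hb1 : |b| < 1 := by
      have h1 := hb (e (-1)) (by simp)
      have h2 := hb (e 1) (by simp)
      rw [he, he] at h1 h2
      have f0 := Int.fract_nonneg a'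
      have f1 := Int.fract_lt_one a'
      push_cast at h1 h2
      rw [sign_neg (by linarith), eq_comm, sign_eq_neg_one_iff] at h1
      rw [sign_pos (by linarith), eq_comm, sign_eq_one_iff] at h2
      rw [abs_lt]; constructor <;> linarith
    have hfr : |Int.fract a'| < 1 := by
      rw [abs_of_nonneg (Int.fract_nonneg a')]; exact Int.fract_lt_one a'
    have key : ∀ (w : Fin N ⊕ Fin n → ℝ) (c : ℝ),
        (Sum.elim ((fun i => (k i : ℝ) + w i) ∘ Sum.inl)
          (Fin.snoc ((fun i => (k i : ℝ) + w i) ∘ Sum.inr) (⌊a'⌋ + c) : Fin (n + 1) → ℝ)) =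
        fun i => (((Sum.elim (k ∘ Sum.inl)
            (Fin.snoc (k ∘ Sum.inr) ⌊a'⌋ : Fin (n + 1) → ℤ)) i : ℤ) : ℝ) +
          (Sum.elim (w ∘ Sum.inl) (Fin.snoc (w ∘ Sum.inr) c : Fin (n + 1) → ℝ)) i := by
      intro w c
      funext i
      rcases i with i | i
      · simp
      · refine Fin.lastCases ?_ (fun j => ?_) i <;> simp
    have box : ∀ (w : Fin N ⊕ Fin n → ℝ) (c : ℝ), (∀ i, |w i| < 1) → |c| < 1 →
        ∀ i, |(Sum.elim (w ∘ Sum.inl) (Fin.snoc (w ∘ Sum.inr) c : Fin (n + 1) → ℝ)) i| < 1 := by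
      intro w c hw hc i
      rcases i with i | i
      · simpa using hw _
      · refine Fin.lastCases ?_ (fun j => ?_) i
        · simpa using hc
        · simpa using hw _
    have h3 := h (⌊a'⌋ + b)
    rw [key] at h3
    have h4 := (hF _ _ _ (box u' _ hu' hfr) (box u _ hu hb1)
      (fun f hf => hb f (Finset.mem_union_left _ hf))).2 h3
    rw [← key, Int.floor_add_fract] at h4
    exact h4
  exact ⟨F', fun k u u' hu hu' hs =>
    ⟨main k u u' hu hu' hs, main k u' u hu' hu (fun f hf => (hs f hf).symm)⟩⟩

lemma tame_imp {ι : Type} [Fintype ι] {P Q : (ι → ℝ) → Prop} (hP : Tame P) (hQ : Tame Q) :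
    Tame (fun p => P p → Q p) := by
  classical
  obtain ⟨F, hF⟩ := hP
  obtain ⟨G, hG⟩ := hQ
  refine ⟨F ∪ G, fun k u u' hu hu' hs => ?_⟩
  change (P _ → Q _) ↔ (P _ → Q _)
  rw [hF k u u' hu hu' (fun f hf => hs f (Finset.mem_union_left _ hf)),
    hG k u u' hu hu' (fun f hf => hs f (Finset.mem_union_right _ hf))]

/-- `Q` is assumed to depend, on each integer translate, only on comparisons with integers. On
`(-1,1)^ι` the linear form `c` is bounded, so only finitely many of those comparisons matter. -/
lemma tame_intForm {ι : Type} [Fintype ι] (c : ι → ℤ) (Q : ℝ → Prop)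
    (hQ : ∀ (m : ℤ) (s s' : ℝ), (∀ d : ℤ, SignType.sign (s - d) = SignType.sign (s' - d)) →
      (Q (m + s) ↔ Q (m + s'))) :
    Tame (fun p : ι → ℝ => Q (∑ i, (c i : ℝ) * p i)) := by
  classical
  let M : ℤ := ∑ i, |c i|
  refine ⟨(Finset.Icc (-M) M).image (fun d : ℤ => ((fun i => (c i : ℚ)), -(d : ℚ))),
    fun k u u' hu hu' hs => ?_⟩
  have bound : ∀ w : ι → ℝ, (∀ i, |w i| < 1) → |∑ i, (c i : ℝ) * w i| ≤ M := by
    intro w hw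
    refine (Finset.abs_sum_le_sum_abs _ _).trans ?_
    simp only [M, Int.cast_sum, Int.cast_abs]
    refine Finset.sum_le_sum fun i _ => ?_
    rw [abs_mul]
    exact mul_le_of_le_one_right (abs_nonneg _) (hw i).le
  have split : ∀ w : ι → ℝ, ∑ i, (c i : ℝ) * ((k i : ℝ) + w i) =
      ((∑ i, c i * k i : ℤ) : ℝ) + ∑ i, (c i : ℝ) * w i := by
    intro w
    push_cast
    rw [← Finset.sum_add_distrib]
    exact Finset.sum_congr rfl fun i _ => by ring
  simp only [split]
  refine hQ _ _ _ fun d => ?_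
  have b1 := abs_le.1 (bound u hu)
  have b2 := abs_le.1 (bound u' hu')
  by_cases hd : d ∈ Finset.Icc (-M) M
  · have := hs _ (Finset.mem_image_of_mem _ hd)
    simpa [RatForm.ev, sub_eq_add_neg] using this
  · rw [Finset.mem_Icc, not_and_or, not_le, not_le] at hd
    rcases hd with hd | hd
    · have hd' : (d : ℝ) < -M := by exact_mod_cast hd
      rw [sign_pos (by linarith), sign_pos (by linarith)]
    · have hd' : (M : ℝ) < d := by exact_mod_cast hd
      rw [sign_neg (by linarith), sign_neg (by linarith)]

lemma exists_term_coeff {N n : ℕ} (t : LsLang.Term (Fin N ⊕ Fin n)) :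
    ∃ c : Fin N ⊕ Fin n → ℤ, ∀ p : Fin N ⊕ Fin n → ℝ,
      t.realize p = ∑ i, (c i : ℝ) * p i := by
  classical
  induction t with
  | var i => exact ⟨Pi.single i 1, fun p => by simp [Pi.single_apply, Language.Term.realize]⟩
  | @func l f ts ih =>
    match l, f, ts, ih with
    | 0, f, _, _ => exact Empty.elim f
    | 1, f, _, _ => exact Empty.elim f
    | 2, f, ts, ih =>
      obtain ⟨c0, h0⟩ := ih 0
      obtain ⟨c1, h1⟩ := ih 1
      refine ⟨c0 + c1, fun p => ?_⟩
      change (ts 0).realize p + (ts 1).realize p = _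
      rw [h0, h1, ← Finset.sum_add_distrib]
      exact Finset.sum_congr rfl fun i _ => by push_cast [Pi.add_apply]; ring
    | _ + 3, f, _, _ => exact Empty.elim f

lemma tame_realize {N n : ℕ} (φ : LsLang.BoundedFormula (Fin N) n) :
    Tame (fun p : Fin N ⊕ Fin n → ℝ => φ.Realize (p ∘ Sum.inl) (p ∘ Sum.inr)) := by
  induction φ with
  | falsum => exact ⟨∅, fun _ _ _ _ _ _ => Iff.rfl⟩
  | equal t₁ t₂ =>
    obtain ⟨c, hc⟩ := exists_term_coeff t₁
    obtain ⟨d, hd⟩ := exists_term_coeff t₂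
    convert tame_intForm (c - d) (fun s => s = 0) ?_ using 2 with p
    · simp only [Language.BoundedFormula.Realize, Sum.elim_comp_inl_inr, hc, hd, Pi.sub_apply,
        Int.cast_sub, sub_mul, Finset.sum_sub_distrib, sub_eq_zero]
    · intro m s s' h
      have h1 := h (-m)
      push_cast at h1
      rw [← sign_eq_zero_iff, ← sign_eq_zero_iff (a := (m : ℝ) + s')]
      rw [show (m : ℝ) + s = s - -m by ring, show (m : ℝ) + s' = s' - -m by ring, h1]
  | @rel n l R ts =>
    match l, R, ts with
    | 0, R, _ => exact Empty.elim R
    | 1, R, ts =>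
      obtain ⟨c, hc⟩ := exists_term_coeff (ts 0)
      convert tame_intForm c (fun s => ∃ k : ℤ, s = k) ?_ using 2 with p
      · change (∃ k : ℤ, (ts 0).realize _ = (k : ℝ)) ↔ _
        rw [Sum.elim_comp_inl_inr, hc]
      · have aux : ∀ (m : ℤ) (s s' : ℝ),
            (∀ d : ℤ, SignType.sign (s - d) = SignType.sign (s' - d)) →
            (∃ k : ℤ, (m : ℝ) + s = k) → ∃ k : ℤ, (m : ℝ) + s' = k := by
          rintro m s s' h ⟨k, hk⟩
          have h1 := h (k - m)
          push_cast at h1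
          rw [show s - ((k : ℝ) - m) = 0 by linarith, sign_zero, eq_comm, sign_eq_zero_iff] at h1
          exact ⟨k, by linarith⟩
        exact fun m s s' h => ⟨aux m s s' h, aux m s' s fun d => (h d).symm⟩
    | 2, R, ts =>
      obtain ⟨c, hc⟩ := exists_term_coeff (ts 0)
      obtain ⟨d, hd⟩ := exists_term_coeff (ts 1)
      convert tame_intForm (c - d) (fun s => s < 0) ?_ using 2 with p
      · change (ts 0).realize _ < (ts 1).realize _ ↔ _
        simp only [Sum.elim_comp_inl_inr, hc, hd, Pi.sub_apply,
          Int.cast_sub, sub_mul, Finset.sum_sub_distrib, sub_neg]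
      · intro m s s' h
        have h1 := h (-m)
        push_cast at h1
        rw [← sign_eq_neg_one_iff, ← sign_eq_neg_one_iff (a := (m : ℝ) + s')]
        rw [show (m : ℝ) + s = s - -m by ring, show (m : ℝ) + s' = s' - -m by ring, h1]
    | _ + 3, R, _ => exact Empty.elim R
  | imp φ ψ hφ hψ => exact tame_imp hφ hψ
  | all φ hφ =>
    have := tame_forall hφ
    simpa [Language.BoundedFormula.Realize] using this

/-! ### Local structure of definable sets -/

/-- The real linear form with rational coefficients `g`. -/
noncomputable def ratLin {n : ℕ} (g : Fin n → ℚ) : (Fin n → ℝ) →ₗ[ℝ] ℝ :=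
  ∑ i, (g i : ℝ) • LinearMap.proj i

lemma ratLin_apply {n : ℕ} (g : Fin n → ℚ) (w : Fin n → ℝ) :
    ratLin g w = ∑ i, (g i : ℝ) * w i := by
  simp [ratLin]

/-- Near `ξ`, a definable set is a union of cells of a finite arrangement of hyperplanes through
`ξ` with rational normals. -/
lemma exists_local_forms {n : ℕ} {X : Set (Fin n → ℝ)} (hX : LsDefinable X) (ξ : Fin n → ℝ) :
    ∃ G : Finset (Fin n → ℚ), ∃ r > (0 : ℝ), ∀ w w' : Fin n → ℝ, ‖w‖ < r → ‖w'‖ < r →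
      (∀ g ∈ G, SignType.sign (ratLin g w) = SignType.sign (ratLin g w')) →
      (ξ + w ∈ X ↔ ξ + w' ∈ X) := by
  classical
  obtain ⟨φ, rfl⟩ := Set.empty_definable_iff.1 hX
  obtain ⟨F, hF⟩ := tame_realize φ
  let L : RatForm (Fin n ⊕ Fin 0) → (Fin n → ℚ) := fun f i => f.1 (Sum.inl i)
  let u : (Fin n → ℝ) → Fin n ⊕ Fin 0 → ℝ := fun w =>
    Sum.elim (fun i => Int.fract (ξ i) + w i) default
  have hev : ∀ f w, RatForm.ev f (u w) = RatForm.ev f (u 0) + ratLin (L f) w := by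
    intro f w
    simp [RatForm.ev, u, L, ratLin_apply, Fintype.sum_sum_type, mul_add, Finset.sum_add_distrib]
    ring
  have e1 : ∀ᶠ w in nhds (0 : Fin n → ℝ), ∀ i, |u w i| < 1 := by
    rw [Filter.eventually_all]
    rintro (i | i)
    · have hc : ∀ c : ℝ, ContinuousAt (fun w : Fin n → ℝ => |c + w i|) 0 := fun c =>
        (continuous_const.add (continuous_apply i)).abs.continuousAt
      refine (hc (Int.fract (ξ i))).eventually_lt_const ?_
      simpa [abs_of_nonneg (Int.fract_nonneg (ξ i))] using Int.fract_lt_one (ξ i)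
    · exact i.elim0
  have e2 : ∀ᶠ w in nhds (0 : Fin n → ℝ), ∀ f ∈ F, RatForm.ev f (u 0) ≠ 0 →
      SignType.sign (RatForm.ev f (u w)) = SignType.sign (RatForm.ev f (u 0)) := by
    rw [Filter.eventually_all_finset]
    intro f _
    have hc : ContinuousAt (fun w : Fin n → ℝ => RatForm.ev f (u w)) 0 := by
      have : (fun w : Fin n → ℝ => RatForm.ev f (u w)) =
          fun w => RatForm.ev f (u 0) + ratLin (L f) w := funext (hev f)
      rw [this]
      generalize RatForm.ev f (u 0) = c
      exact (continuous_const.add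
        (LinearMap.continuous_of_finiteDimensional (ratLin (L f)))).continuousAt
    rcases lt_trichotomy (RatForm.ev f (u 0)) 0 with h | h | h
    · filter_upwards [hc.eventually_lt_const h] with w hw _
      rw [sign_neg h, sign_neg hw]
    · exact Filter.Eventually.of_forall fun w hw => absurd h hw
    · filter_upwards [hc.eventually_const_lt h] with w hw _
      rw [sign_pos h, sign_pos hw]
  obtain ⟨r, hr, H⟩ := Metric.eventually_nhds_iff.1 (e1.and e2)
  refine ⟨F.image L, r, hr, fun w w' hw hw' hs => ?_⟩
  have H1 := H (y := w) (by simpa using hw)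
  have H2 := H (y := w') (by simpa using hw')
  have key := hF (Sum.elim (fun i => ⌊ξ i⌋) default) (u w) (u w') H1.1 H2.1 (by
    intro f hf
    -- A form nonzero at the centre keeps its sign nearby; one vanishing there equals its linear
    -- part.
    by_cases h0 : RatForm.ev f (u 0) = 0
    · rw [hev f w, hev f w', h0, zero_add, zero_add]
      exact hs _ (Finset.mem_image_of_mem _ hf)
    · rw [H1.2 f hf h0, H2.2 f hf h0])
  have hreal : ∀ w : Fin n → ℝ, (φ.Realize (ξ + w) ↔ Language.BoundedFormula.Realize φ
      ((fun i => ((Sum.elim (fun i => ⌊ξ i⌋) default : Fin n ⊕ Fin 0 → ℤ) i : ℝ) + u w i) ∘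
        Sum.inl)
      ((fun i => ((Sum.elim (fun i => ⌊ξ i⌋) default : Fin n ⊕ Fin 0 → ℤ) i : ℝ) + u w i) ∘
        Sum.inr)) := by
    intro w
    rw [Language.Formula.Realize]
    refine iff_of_eq (congrArg₂ _ ?_ (Subsingleton.elim _ _))
    funext i
    simp only [u, Function.comp, Sum.elim_inl, ← add_assoc, Int.floor_add_fract, Pi.add_apply]
  simp only [Set.mem_ofPred_eq]
  rw [hreal w, hreal w']
  exact key

/-! ### The subspace of strata -/

/-- A vector is a stratum iff `X` is invariant, near `ξ`, under small multiples of it. Bounding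
`α` rather than `α • v` makes this condition visibly linear in `v`. -/
lemma isStratum_iff {n : ℕ} (X : Set (Fin n → ℝ)) (ξ v : Fin n → ℝ) :
    IsStratum X ξ v ↔ ∃ r > (0 : ℝ), ∀ w : Fin n → ℝ, ‖w‖ < r → ∀ α : ℝ, |α| < r →
      (ξ + w ∈ X ↔ ξ + (w + α • v) ∈ X) := by
  constructor
  · rintro ⟨r, hr, h⟩
    have hpos : 0 < 1 + ‖v‖ := by positivity
    refine ⟨r / (1 + ‖v‖), by positivity, fun w hw α hα => ?_⟩
    have hw1 : ‖w + α • v‖ < r := by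
      calc ‖w + α • v‖ ≤ ‖w‖ + |α| * ‖v‖ := by
            simpa [norm_smul] using norm_add_le w (α • v)
        _ < r / (1 + ‖v‖) + r / (1 + ‖v‖) * ‖v‖ :=
            add_lt_add_of_lt_of_le hw (mul_le_mul_of_nonneg_right hα.le (norm_nonneg _))
        _ = r := by field_simp
    have hw0 : ‖w‖ < r := hw.trans_le (div_le_self hr.le (by linarith [norm_nonneg v]))
    have b0 : ξ + w ∈ Metric.ball ξ r := by simpa [Metric.mem_ball, dist_eq_norm] using hw0
    have b1 : ξ + (w + α • v) ∈ Metric.ball ξ r := by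
      simpa [Metric.mem_ball, dist_eq_norm] using hw1
    constructor
    · exact fun hm => h _ b1 ⟨_, ⟨hm, b0⟩, α, by rw [add_assoc]⟩
    · exact fun hm => h _ b0 ⟨_, ⟨hm, b1⟩, -α, by rw [neg_smul]; abel⟩
  · rintro ⟨r, hr, h⟩
    by_cases hv : v = 0
    · subst hv
      refine ⟨1, one_pos, ?_⟩
      rintro y _ ⟨z, ⟨hz, _⟩, α, rfl⟩
      simpa using hz
    · have hv0 : 0 < ‖v‖ := norm_pos_iff.2 hv
      refine ⟨min r (r * ‖v‖ / 2), by positivity, ?_⟩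
      rintro y hy ⟨z, ⟨hz, hzb⟩, α, rfl⟩
      have h1 : ‖z - ξ‖ < min r (r * ‖v‖ / 2) := by
        simpa [Metric.mem_ball, dist_eq_norm] using hzb
      have h2 : ‖z + α • v - ξ‖ < min r (r * ‖v‖ / 2) := by
        simpa [Metric.mem_ball, dist_eq_norm] using hy
      have h3 : |α| < r := by
        have h4 : |α| * ‖v‖ ≤ ‖z + α • v - ξ‖ + ‖z - ξ‖ := by
          have := norm_sub_le (z + α • v - ξ) (z - ξ)
          rwa [show z + α • v - ξ - (z - ξ) = α • v by abel, norm_smul, Real.norm_eq_abs] at this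
        have h5 := h1.trans_le (min_le_right _ _)
        have h6 := h2.trans_le (min_le_right _ _)
        exact lt_of_mul_lt_mul_right (by linarith : |α| * ‖v‖ < r * ‖v‖) hv0.le
      have h7 := (h (z - ξ) (h1.trans_le (min_le_left _ _)) α h3).1
        (by rwa [add_sub_cancel])
      rwa [show ξ + (z - ξ + α • v) = z + α • v by abel] at h7

/-- `Str_X(ξ)` as a linear subspace. -/
def strSubmodule {n : ℕ} (X : Set (Fin n → ℝ)) (ξ : Fin n → ℝ) : Submodule ℝ (Fin n → ℝ) where
  carrier := {v | IsStratum X ξ v}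
  zero_mem' := (isStratum_iff X ξ 0).2 ⟨1, one_pos, fun w _ α _ => by simp⟩
  add_mem' := by
    intro v₁ v₂ h₁ h₂
    rw [Set.mem_ofPred_eq, isStratum_iff] at h₁ h₂ ⊢
    obtain ⟨r₁, hr₁, h₁⟩ := h₁
    obtain ⟨r₂, hr₂, h₂⟩ := h₂
    have hpos : 0 < 1 + ‖v₁‖ := by positivity
    have hm : 0 < min r₁ r₂ := lt_min hr₁ hr₂
    set r := min r₁ r₂ / (1 + ‖v₁‖) with hr
    have hrle : r ≤ min r₁ r₂ := div_le_self hm.le (by linarith [norm_nonneg v₁])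
    refine ⟨r, by positivity, fun w hw α hα => ?_⟩
    have hw1 : ‖w + α • v₁‖ < min r₁ r₂ := by
      calc ‖w + α • v₁‖ ≤ ‖w‖ + |α| * ‖v₁‖ := by
            simpa [norm_smul] using norm_add_le w (α • v₁)
        _ < r + r * ‖v₁‖ :=
            add_lt_add_of_lt_of_le hw (mul_le_mul_of_nonneg_right hα.le (norm_nonneg _))
        _ = min r₁ r₂ := by rw [hr]; field_simp
    rw [h₁ w (hw.trans_le (hrle.trans (min_le_left _ _))) α
        (hα.trans_le (hrle.trans (min_le_left _ _))),
      h₂ _ (hw1.trans_le (min_le_right _ _)) α (hα.trans_le (hrle.trans (min_le_right _ _))),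
      smul_add, add_assoc]
  smul_mem' := by
    intro c v h
    rw [Set.mem_ofPred_eq, isStratum_iff] at h ⊢
    obtain ⟨r, hr, h⟩ := h
    have hpos : 0 < 1 + |c| := by positivity
    refine ⟨r / (1 + |c|), by positivity, fun w hw α hα => ?_⟩
    rw [smul_smul]
    refine h w (hw.trans_le (div_le_self hr.le (by linarith [abs_nonneg c]))) _ ?_
    rw [lt_div_iff₀ hpos] at hα
    rw [abs_mul]
    nlinarith [abs_nonneg α, abs_nonneg c]

/-! ### Rationality -/

/-- `Str_X(ξ)` is cut out by finitely many rational linear equations. If `G` is a family of forms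
describing `X` near `ξ`, those members of `G` that vanish on `Str_X(ξ)` already describe `X`:
translating by a stratum on which the other members are nonzero equalizes their signs. -/
lemma exists_equations {n : ℕ} {X : Set (Fin n → ℝ)} (hX : LsDefinable X) (ξ : Fin n → ℝ) :
    ∃ G₀ : Finset (Fin n → ℚ), ∀ v, IsStratum X ξ v ↔ ∀ g ∈ G₀, ratLin g v = 0 := by
  classical
  obtain ⟨G, r, hr, hG⟩ := exists_local_forms hX ξ
  let V := strSubmodule X ξ
  refine ⟨G.filter (fun g => ∀ v ∈ V, ratLin g v = 0), fun v =>
    ⟨fun hv g hg => (Finset.mem_filter.1 hg).2 v hv, fun hv => ?_⟩⟩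
  obtain ⟨v₀, hv₀V, hv₀⟩ : ∃ v₀ ∈ V, ∀ g ∈ G, (∃ v ∈ V, ratLin g v ≠ 0) → ratLin g v₀ ≠ 0 := by
    obtain ⟨x, hx, h⟩ := Module.Dual.exists_forall_mem_ne_zero_of_forall_exists V
      (fun g : {g : G // ∃ v ∈ V, ratLin g.1 v ≠ 0} => ratLin g.1.1) (fun g => g.2)
    exact ⟨x, hx, fun g hg hgV => h ⟨⟨g, hg⟩, hgV⟩⟩
  obtain ⟨ρ, hρ, hstr⟩ := (isStratum_iff X ξ v₀).1 hv₀V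
  have hshrink : ∀ w : Fin n → ℝ, ‖w‖ < r → ∀ s : ℝ, 0 < s → s < 1 →
      (ξ + w ∈ X ↔ ξ + s • w ∈ X) := by
    intro w hw s hs hs1
    refine hG _ _ hw ?_ fun g _ => ?_
    · rw [norm_smul, Real.norm_eq_abs, abs_of_pos hs]
      nlinarith [norm_nonneg w]
    · rw [map_smul, smul_eq_mul, sign_mul, sign_pos hs, one_mul]
  -- A multiple `t • v₀` lying well inside both neighbourhoods.
  obtain ⟨t, ht, htρ, htr⟩ : ∃ t : ℝ, 0 < t ∧ |t| < ρ ∧ ‖t • v₀‖ < r := by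
    have hc : ContinuousAt (fun t : ℝ => ‖t • v₀‖) 0 := by fun_prop
    have hc' : ContinuousAt (fun t : ℝ => |t|) 0 := by fun_prop
    have e := ((hc.eventually_lt_const (by simpa using hr)).and
      (hc'.eventually_lt_const (by simpa using hρ))).filter_mono
        (nhdsWithin_le_nhds (s := Set.Ioi (0 : ℝ)))
    obtain ⟨t, ht, ht'⟩ := (e.and self_mem_nhdsWithin).exists
    exact ⟨t, ht', ht.2, ht.1⟩
  have hsuff : ∀ w w' : Fin n → ℝ, ‖w‖ < r → ‖w'‖ < r →
      (∀ g ∈ G, (∀ v ∈ V, ratLin g v = 0) →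
        SignType.sign (ratLin g w) = SignType.sign (ratLin g w')) →
      (ξ + w ∈ X ↔ ξ + w' ∈ X) := by
    intro w w' hw hw' hs
    have ev : ∀ x : Fin n → ℝ, ∀ᶠ s in nhdsWithin (0 : ℝ) (Set.Ioi 0),
        ‖s • x‖ < ρ ∧ ‖s • x + t • v₀‖ < r ∧ ∀ g ∈ G, ratLin g v₀ ≠ 0 →
          SignType.sign (ratLin g (s • x + t • v₀)) = SignType.sign (ratLin g v₀) := by
      intro x
      refine Filter.Eventually.filter_mono nhdsWithin_le_nhds ?_
      have c1 : ContinuousAt (fun s : ℝ => ‖s • x‖) 0 := by fun_prop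
      have c2 : ContinuousAt (fun s : ℝ => ‖s • x + t • v₀‖) 0 := by fun_prop
      refine (c1.eventually_lt_const (by simpa using hρ)).and
        ((c2.eventually_lt_const (by simpa using htr)).and ?_)
      rw [Filter.eventually_all_finset]
      intro g _
      have c3 : ContinuousAt (fun s : ℝ => ratLin g (s • x + t • v₀)) 0 := by
        simp only [map_add, map_smul, smul_eq_mul]; fun_prop
      rcases lt_trichotomy (ratLin g v₀) 0 with h | h | h
      · filter_upwards [c3.eventually_lt_const (u := 0)
          (by simpa using mul_neg_of_pos_of_neg ht h)] with s hs _
        rw [sign_neg h, sign_neg hs]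
      · exact Filter.Eventually.of_forall fun _ h' => absurd h h'
      · filter_upwards [c3.eventually_const_lt (u := 0)
          (by simpa using mul_pos ht h)] with s hs _
        rw [sign_pos h, sign_pos hs]
    have e1 : ∀ᶠ s in nhdsWithin (0 : ℝ) (Set.Ioi 0), s < 1 :=
      (eventually_lt_nhds one_pos).filter_mono nhdsWithin_le_nhds
    obtain ⟨s, ⟨⟨hs1, hs0⟩, ⟨a1, a2, a3⟩, b1, b2, b3⟩⟩ :=
      ((e1.and self_mem_nhdsWithin).and ((ev w).and (ev w'))).exists
    rw [hshrink w hw s hs0 hs1, hshrink w' hw' s hs0 hs1, hstr _ a1 t htρ, hstr _ b1 t htρ]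
    refine hG _ _ a2 b2 fun g hg => ?_
    by_cases hgV : ∀ v ∈ V, ratLin g v = 0
    · simp only [map_add, map_smul, hgV v₀ hv₀V, smul_eq_mul, mul_zero, add_zero, sign_mul,
        hs g hg hgV]
    · push Not at hgV
      rw [a3 g hg (hv₀ g hg hgV), b3 g hg (hv₀ g hg hgV)]
  rw [isStratum_iff]
  have hpos : 0 < 1 + ‖v‖ := by positivity
  refine ⟨r / (1 + ‖v‖), by positivity, fun w hw α hα => hsuff _ _ ?_ ?_ ?_⟩
  · exact hw.trans_le (div_le_self hr.le (by linarith [norm_nonneg v]))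
  · calc ‖w + α • v‖ ≤ ‖w‖ + |α| * ‖v‖ := by
          simpa [norm_smul] using norm_add_le w (α • v)
      _ < r / (1 + ‖v‖) + r / (1 + ‖v‖) * ‖v‖ :=
          add_lt_add_of_lt_of_le hw (mul_le_mul_of_nonneg_right hα.le (norm_nonneg _))
      _ = r := by field_simp
  · intro g hg hgV
    rw [map_add, map_smul, hv g (Finset.mem_filter.2 ⟨hg, hgV⟩), smul_zero, add_zero]

/-- Expanding the coordinates of a real vector in a basis of `ℝ` over `ℚ` writes it as a real
combination of rational vectors satisfying the same rational linear equations. -/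
lemma mem_span_rational {n : ℕ} (G : Finset (Fin n → ℚ)) (v : Fin n → ℝ)
    (hv : ∀ g ∈ G, ratLin g v = 0) :
    v ∈ Submodule.span ℝ {q : Fin n → ℝ | (∀ g ∈ G, ratLin g q = 0) ∧
      ∀ i, ∃ c : ℚ, q i = (c : ℝ)} := by
  classical
  let b := Module.Basis.ofVectorSpace ℚ ℝ
  let S := Finset.univ.biUnion fun i => (b.repr (v i)).support
  have hvi : ∀ i, v i = ∑ j ∈ S, (b.repr (v i) j : ℝ) * b j := by
    intro i
    conv_lhs => rw [← b.linearCombination_repr (v i), Finsupp.linearCombination_apply]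
    rw [Finsupp.sum_of_support_subset (s := S) _
      (Finset.subset_biUnion_of_mem (fun i => (b.repr (v i)).support) (Finset.mem_univ i)) _
      (by simp)]
    exact Finset.sum_congr rfl fun j _ => Rat.smul_def _ _
  have hv' : v = ∑ j ∈ S, b j • (fun i => (b.repr (v i) j : ℝ)) := by
    funext i
    rw [hvi i, Finset.sum_apply]
    exact Finset.sum_congr rfl fun j _ => by simp [mul_comm]
  rw [hv']
  refine Submodule.sum_mem _ fun j _ => Submodule.smul_mem _ _ (Submodule.subset_span
    ⟨fun g hg => ?_, fun i => ⟨_, rfl⟩⟩)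
  have h1 : b.repr (ratLin g v) j = ∑ i, g i * b.repr (v i) j := by
    rw [ratLin_apply]
    simp only [← Rat.smul_def, map_sum, map_smul, Finsupp.coe_finsetSum, Finset.sum_apply,
      Finsupp.smul_apply, smul_eq_mul]
  rw [hv g hg, map_zero, Finsupp.zero_apply] at h1
  rw [ratLin_apply]
  exact_mod_cast h1.symm

/-- For a `⟨ℝ,+,<,ℤ⟩`-definable set, `Str_X(ξ)` is spanned by its rational vectors. -/
theorem stmt11 (n : ℕ) (X : Set (Fin n → ℝ)) (hX : LsDefinable X) (ξ : Fin n → ℝ) :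
    {v | IsStratum X ξ v} =
      ↑(Submodule.span ℝ {v | IsStratum X ξ v ∧ ∀ i, ∃ q : ℚ, v i = (q : ℝ)}) := by
  obtain ⟨G, hG⟩ := exists_equations hX ξ
  refine Set.Subset.antisymm (fun v hv => ?_) ?_
  · simp only [hG]
    exact mem_span_rational G v ((hG v).1 hv)
  · exact Submodule.span_le (p := strSubmodule X ξ).2 fun v hv => hv.1
end

section
/- Let n ≥ 1 and let X ⊆ ℝ^n be ⟨ℝ,+,<,ℤ⟩-definable. Then X is ⟨ℝ,+,<,1⟩-definable if and only if both of the following hold: (1) there are only finitely many X-singular points; and (2) for every integer i with 0 ≤ i < n and every rational number c, the rational section X ∩ (ℝ^i × {c} × ℝ^{n−i−1}) is ⟨ℝ,+,<,1⟩-definable. -/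
/-!
The structure of the argument.

*Quantifier elimination.* A set is `⟨ℝ,+,<,1⟩`-definable iff it is sign-determined (`SD`):
membership in it depends only on the signs of finitely many affine forms with integer coefficients.
The step for quantifiers is Fourier–Motzkin elimination. For `⟨ℝ,+,<,ℤ⟩` a weaker normal form is
enough, and it is stable under projection for elementary reasons: membership of `x` depends on the
colour of `⌊x⌋` in some finite colouring of `ℤ^n` (nothing is required of the colouring) and on the
signs of finitely many integer affine forms at the fractional part of `x` (`LD`).

*Consequences for an `LD` set `X`.* Up to translation, `X` has finitely many germs
(`LD.finite_germs`), and `X` is a union of cells of the arrangement of all hyperplanes `a x = k`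
with `a` in a finite set `Λ ⊆ ℤ^n` and `k ∈ ℤ` (`LD.grid`). Hence near `x` the set `X` is
described by the linear forms of `Λ` taking integer values at `x`. Three facts follow: singular
points are definable; a nonsingular point has a nonzero integer stratum; and for each coordinate
`i` there is a rational `c` such that every point of the hyperplane `x i = c` has an integer stratum
transverse to it.

*From left to right.* A singular point of a sign-determined set is the only common zero of the forms
vanishing at it, so there are finitely many of them. The sections are clearly definable.

*From right to left.* It suffices to define the class of points having the same germ as `x₀`, by
induction on the set of strata of `x₀` (`sd_germ`). If `x₀` is singular, the class is finite. If
not, `x₀` has an integer stratum `v` with `v i ≠ 0`; let `H` be a generic hyperplane `y i = c`. On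
`H` the class is definable, because transversality makes the germ of `X` constant along segments of
`H` on which the forms defining the section `X ∩ H` keep their signs (`germEq_of_section`). On a
line parallel to `v`, the germ class is open, and a boundary point of it has strictly fewer strata
than `x₀` (`closure_germ_line`). So whether a point lies in the class is decided by following the
line towards `H`, up to `H` or up to the first point with fewer strata, and these points are covered
by the induction hypothesis.
-/

open FirstOrder

/-! ### Sets cut out by finitely many sign conditions -/

/-- `SD A X`: membership in `X` depends only on the signs of finitely many functions taken from the
additive group `A` of real-valued functions on `E`. -/
def SD {E : Type} (A : AddSubgroup (E → ℝ)) (X : Set E) : Prop :=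
  ∃ F : Set (E → ℝ), F.Finite ∧ (∀ f ∈ F, f ∈ A) ∧
    ∀ x y, (∀ f ∈ F, SignType.sign (f x) = SignType.sign (f y)) → (x ∈ X ↔ y ∈ X)

/-- The functions `(x, t) ↦ a x + b t` on `E × ℝ` with `a ∈ A` and `b ∈ ℤ`. -/
def extA {E : Type} (A : AddSubgroup (E → ℝ)) : AddSubgroup (E × ℝ → ℝ) where
  carrier := {f | ∃ a ∈ A, ∃ b : ℤ, f = fun p => a p.1 + b * p.2}
  zero_mem' := ⟨0, A.zero_mem, 0, by ext; simp⟩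
  add_mem' := by
    rintro _ _ ⟨a, ha, b, rfl⟩ ⟨a', ha', b', rfl⟩
    exact ⟨a + a', A.add_mem ha ha', b + b', by ext; simp; ring⟩
  neg_mem' := by
    rintro _ ⟨a, ha, b, rfl⟩
    exact ⟨-a, A.neg_mem ha, -b, by ext; simp; ring⟩

lemma SD.compl {E : Type} {A : AddSubgroup (E → ℝ)} {X : Set E} (h : SD A X) : SD A Xᶜ := by
  obtain ⟨F, hF, hA, h⟩ := h
  exact ⟨F, hF, hA, fun x y hxy => not_congr (h x y hxy)⟩

lemma SD.inter {E : Type} {A : AddSubgroup (E → ℝ)} {X Y : Set E} (h : SD A X) (h' : SD A Y) :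
    SD A (X ∩ Y) := by
  obtain ⟨F, hF, hA, h⟩ := h
  obtain ⟨F', hF', hA', h'⟩ := h'
  refine ⟨F ∪ F', hF.union hF', fun f hf => hf.elim (hA f) (hA' f), fun x y hxy => ?_⟩
  exact and_congr (h x y fun f hf => hxy f (Or.inl hf)) (h' x y fun f hf => hxy f (Or.inr hf))

lemma SD.union {E : Type} {A : AddSubgroup (E → ℝ)} {X Y : Set E} (h : SD A X) (h' : SD A Y) :
    SD A (X ∪ Y) := by
  have := (h.compl.inter h'.compl).compl
  rwa [Set.compl_inter, compl_compl, compl_compl] at this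

lemma SD.empty {E : Type} (A : AddSubgroup (E → ℝ)) : SD A (∅ : Set E) :=
  ⟨∅, Set.finite_empty, by simp, by simp⟩

lemma SD.biUnion {E J : Type} {A : AddSubgroup (E → ℝ)} {s : Set J} (hs : s.Finite)
    {X : J → Set E} (h : ∀ j ∈ s, SD A (X j)) : SD A (⋃ j ∈ s, X j) := by
  induction s, hs using Set.Finite.induction_on with
  | empty => simpa using SD.empty A
  | insert _ _ ih =>
    rw [Set.biUnion_insert]
    exact (h _ (Set.mem_insert _ _)).union (ih fun j hj => h j (Set.mem_insert_of_mem _ hj))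

lemma SD.preimage {E E' : Type} {A : AddSubgroup (E → ℝ)} {B : AddSubgroup (E' → ℝ)} {X : Set E}
    (h : SD A X) (φ : E' → E) (hφ : ∀ f ∈ A, f ∘ φ ∈ B) : SD B (φ ⁻¹' X) := by
  obtain ⟨F, hF, hA, h⟩ := h
  refine ⟨(fun f => f ∘ φ) '' F, hF.image _, ?_, fun x y hxy => h _ _ fun f hf => ?_⟩
  · rintro _ ⟨f, hf, rfl⟩
    exact hφ f (hA f hf)
  · exact hxy _ ⟨f, hf, rfl⟩

lemma SD.of_sign {E : Type} {A : AddSubgroup (E → ℝ)} {f : E → ℝ} (hf : f ∈ A)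
    (S : Set SignType) : SD A {x | SignType.sign (f x) ∈ S} :=
  ⟨{f}, Set.finite_singleton f, by simpa using hf, fun x y h => by simp [h f rfl]⟩

lemma SD.pos {E : Type} {A : AddSubgroup (E → ℝ)} {f : E → ℝ} (hf : f ∈ A) :
    SD A {x | 0 < f x} := by
  simpa [sign_eq_one_iff] using SD.of_sign hf {1}

lemma SD.eqz {E : Type} {A : AddSubgroup (E → ℝ)} {f : E → ℝ} (hf : f ∈ A) :
    SD A {x | f x = 0} := by
  simpa [sign_eq_zero_iff] using SD.of_sign hf {0}

/-- Fourier–Motzkin elimination, in semantic form: if `x` and `y` agree on the signs of the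
coefficients and of the resultants of the forms `a + b t`, then the roots in `t` of these forms are
ordered in the same way over `x` and over `y`, so every sign pattern occurring over `x` occurs
over `y`. -/
lemma fourier_motzkin {E : Type} {A : AddSubgroup (E → ℝ)} {F : Set (E × ℝ → ℝ)} (hF : F.Finite)
    (hA : ∀ f ∈ F, f ∈ extA A) :
    ∃ G : Set (E → ℝ), G.Finite ∧ (∀ g ∈ G, g ∈ A) ∧
      ∀ x y, (∀ g ∈ G, SignType.sign (g x) = SignType.sign (g y)) →
        ∀ t, ∃ s, ∀ f ∈ F, SignType.sign (f (x, t)) = SignType.sign (f (y, s)) := by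
  classical
  have hA' : ∀ f : E × ℝ → ℝ, ∃ (a : E → ℝ) (b : ℤ), f ∈ F →
      a ∈ A ∧ f = fun p => a p.1 + b * p.2 := by
    intro f
    by_cases hf : f ∈ F
    · obtain ⟨a, ha, b, h⟩ := hA f hf
      exact ⟨a, b, fun _ => ⟨ha, h⟩⟩
    · exact ⟨0, 0, fun h => absurd h hf⟩
  choose a b hab using hA'
  refine ⟨a '' F ∪ (fun p : (E × ℝ → ℝ) × (E × ℝ → ℝ) => b p.1 • a p.2 - b p.2 • a p.1) '' (F ×ˢ F),
    (hF.image _).union ((hF.prod hF).image _), ?_, ?_⟩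
  · rintro g (⟨f, hf, rfl⟩ | ⟨⟨f, f'⟩, ⟨hf, hf'⟩, rfl⟩)
    · exact (hab f hf).1
    · exact A.sub_mem (A.zsmul_mem (hab f' hf').1 _) (A.zsmul_mem (hab f hf).1 _)
  intro x y hxy t
  let ρ : (E × ℝ → ℝ) → E → ℝ := fun f z => -a f z / b f
  have key : ∀ f ∈ F, ∀ g ∈ F, b f ≠ 0 → b g ≠ 0 →
      SignType.sign (ρ f x - ρ g x) = SignType.sign (ρ f y - ρ g y) := by
    intro f hf g hg hbf hbg
    have hbf' : (b f : ℝ) ≠ 0 := by exact_mod_cast hbf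
    have hbg' : (b g : ℝ) ≠ 0 := by exact_mod_cast hbg
    have e : ∀ z, ρ f z - ρ g z = ((b f : ℝ) * b g)⁻¹ * ((b f • a g - b g • a f) z) := by
      intro z
      have : (b f • a g - b g • a f) z = b f * a g z - b g * a f z := by simp
      rw [this]
      simp only [ρ]
      field_simp
      ring
    rw [e, e, sign_mul, sign_mul, hxy _ (Or.inr ⟨(f, g), ⟨hf, hg⟩, rfl⟩)]
  suffices h : ∃ s, ∀ f ∈ F, b f ≠ 0 →
      SignType.sign (t - ρ f x) = SignType.sign (s - ρ f y) by
    obtain ⟨s, hs⟩ := h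
    refine ⟨s, fun f hf => ?_⟩
    by_cases hb : b f = 0
    · rw [(hab f hf).2]
      simpa [hb] using hxy _ (Or.inl ⟨f, hf, rfl⟩)
    · have hb' : (b f : ℝ) ≠ 0 := by exact_mod_cast hb
      have e : ∀ z u, f (z, u) = b f * (u - ρ f z) := by
        intro z u
        rw [congrFun (hab f hf).2]
        simp only [ρ]
        field_simp
        ring
      rw [e, e, sign_mul, sign_mul, hs f hf hb]
  by_cases hroot : ∃ g ∈ F, b g ≠ 0 ∧ t = ρ g x
  · obtain ⟨g, hg, hbg, rfl⟩ := hroot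
    exact ⟨ρ g y, fun f hf hb => key g hg f hf hbg hb⟩
  push Not at hroot
  let D := hF.toFinset.filter fun f => b f ≠ 0
  obtain ⟨s, hs1, hs2⟩ := Order.exists_between_finsets
    (lo := (D.filter fun f => ρ f x < t).image fun f => ρ f y)
    (hi := (D.filter fun f => t < ρ f x).image fun f => ρ f y) (by
      simp only [D, Finset.mem_image, Finset.mem_filter, Set.Finite.mem_toFinset]
      rintro _ ⟨f, ⟨⟨hf, hbf⟩, hft⟩, rfl⟩ _ ⟨g, ⟨⟨hg, hbg⟩, hgt⟩, rfl⟩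
      have := key g hg f hf hbg hbf
      rw [sign_pos (by linarith)] at this
      have := sign_eq_one_iff.1 this.symm
      linarith)
  simp only [D, Finset.mem_image, Finset.mem_filter, Set.Finite.mem_toFinset] at hs1 hs2
  refine ⟨s, fun f hf hb => ?_⟩
  rcases lt_or_gt_of_ne (hroot f hf hb) with h | h
  · have := hs2 _ ⟨f, ⟨⟨hf, hb⟩, h⟩, rfl⟩
    rw [sign_neg (by linarith), sign_neg (by linarith)]
  · have := hs1 _ ⟨f, ⟨⟨hf, hb⟩, h⟩, rfl⟩
    rw [sign_pos (by linarith), sign_pos (by linarith)]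

lemma SD.exists {E : Type} {A : AddSubgroup (E → ℝ)} {X : Set (E × ℝ)} (h : SD (extA A) X) :
    SD A {x | ∃ t, (x, t) ∈ X} := by
  obtain ⟨F, hF, hA, h⟩ := h
  obtain ⟨G, hG, hGA, hG'⟩ := fourier_motzkin hF hA
  have one : ∀ x y, (∀ g ∈ G, SignType.sign (g x) = SignType.sign (g y)) →
      (∃ t, (x, t) ∈ X) → ∃ t, (y, t) ∈ X := by
    rintro x y hxy ⟨t, ht⟩
    obtain ⟨s, hs⟩ := hG' x y hxy t
    exact ⟨s, (h _ _ hs).1 ht⟩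
  exact ⟨G, hG, hGA, fun x y hxy => ⟨one x y hxy, one y x fun g hg => (hxy g hg).symm⟩⟩

/-- The linear form `x ↦ ∑ aᵢ xᵢ` with integer coefficients. -/
noncomputable def lin {ι : Type} [Fintype ι] (a : ι → ℤ) : (ι → ℝ) →ₗ[ℝ] ℝ :=
  ∑ i, (a i : ℝ) • LinearMap.proj i

lemma lin_apply {ι : Type} [Fintype ι] (a : ι → ℤ) (x : ι → ℝ) :
    lin a x = ∑ i, (a i : ℝ) * x i := by
  simp [lin]

lemma lin_add {ι : Type} [Fintype ι] (a b : ι → ℤ) (x : ι → ℝ) :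
    lin (a + b) x = lin a x + lin b x := by
  simp [lin_apply, add_mul, Finset.sum_add_distrib]

lemma lin_neg {ι : Type} [Fintype ι] (a : ι → ℤ) (x : ι → ℝ) :
    lin (-a) x = - lin a x := by
  simp [lin_apply]

lemma lin_sub {ι : Type} [Fintype ι] (a b : ι → ℤ) (x : ι → ℝ) :
    lin (a - b) x = lin a x - lin b x := by
  rw [sub_eq_add_neg, lin_add, lin_neg, sub_eq_add_neg]

lemma lin_zero {ι : Type} [Fintype ι] (x : ι → ℝ) : lin (0 : ι → ℤ) x = 0 := by
  simp [lin_apply]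

lemma lin_single {ι : Type} [Fintype ι] [DecidableEq ι] (i : ι) (k : ℤ) (x : ι → ℝ) :
    lin (Pi.single i k) x = k * x i := by
  rw [lin_apply, Finset.sum_eq_single i] <;> simp +contextual

lemma lin_continuous {ι : Type} [Fintype ι] (a : ι → ℤ) : Continuous (lin a) :=
  LinearMap.continuous_of_finiteDimensional _

lemma lin_int {ι : Type} [Fintype ι] (a z : ι → ℤ) :
    lin a (fun i => (z i : ℝ)) = ((∑ i, a i * z i : ℤ) : ℝ) := by
  simp [lin_apply]

/-- The affine forms on `ℝ^ι` with integer coefficients and integer constant term. -/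
def AffZ (ι : Type) [Fintype ι] : AddSubgroup ((ι → ℝ) → ℝ) where
  carrier := {f | ∃ (a : ι → ℤ) (c : ℤ), f = fun x => lin a x + c}
  zero_mem' := ⟨0, 0, by ext; simp [lin_zero]⟩
  add_mem' := by
    rintro _ _ ⟨a, c, rfl⟩ ⟨a', c', rfl⟩
    exact ⟨a + a', c + c', by ext; simp [lin_add]; ring⟩
  neg_mem' := by
    rintro _ ⟨a, c, rfl⟩
    exact ⟨-a, -c, by ext; simp [lin_neg]; ring⟩

lemma mem_AffZ {ι : Type} [Fintype ι] (a : ι → ℤ) (c : ℤ) :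
    (fun x => lin a x + (c : ℝ)) ∈ AffZ ι := ⟨a, c, rfl⟩

/-- Fill in the coordinates `j` with `e j = none` with `t`, and the other ones from `p`. -/
def fill {ι ι' R : Type} (e : ι' → Option ι) (p : ι → R) (t : R) : ι' → R :=
  fun j => (e j).elim t p

lemma AffZ_fill {ι ι' : Type} [Fintype ι] [Fintype ι'] (e : ι' → Option ι) {f : (ι' → ℝ) → ℝ}
    (hf : f ∈ AffZ ι') : (fun q : (ι → ℝ) × ℝ => f (fill e q.1 q.2)) ∈ extA (AffZ ι) := by
  classical
  obtain ⟨a, c, rfl⟩ := hf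
  suffices h : ∃ (a' : ι → ℤ) (b : ℤ), ∀ p t, lin a (fill e p t) = lin a' p + b * t by
    obtain ⟨a', b, h⟩ := h
    exact ⟨_, mem_AffZ a' c, b, by ext q; simp only [h]; ring⟩
  have : ∀ s : Finset ι', ∃ (a' : ι → ℤ) (b : ℤ), ∀ p t,
      ∑ j ∈ s, (a j : ℝ) * fill e p t j = lin a' p + b * t := by
    intro s
    induction s using Finset.induction_on with
    | empty => exact ⟨0, 0, fun p t => by simp [lin_zero]⟩
    | insert j s hj ih =>
      obtain ⟨a', b, h⟩ := ih
      rcases hej : e j with _ | i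
      · refine ⟨a', b + a j, fun p t => ?_⟩
        rw [Finset.sum_insert hj, h]
        simp [fill, hej]
        ring
      · refine ⟨a' + Pi.single i (a j), b, fun p t => ?_⟩
        rw [Finset.sum_insert hj, h, lin_add, lin_single]
        simp [fill, hej]
        ring
  obtain ⟨a', b, h⟩ := this Finset.univ
  exact ⟨a', b, fun p t => by rw [lin_apply, h]⟩

lemma AffZ_comp {ι ι' : Type} [Fintype ι] [Fintype ι'] (e : ι' → ι) {f : (ι' → ℝ) → ℝ}
    (hf : f ∈ AffZ ι') : (fun p : ι → ℝ => f (p ∘ e)) ∈ AffZ ι := by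
  obtain ⟨a, ⟨a', c', rfl⟩, b, h⟩ := AffZ_fill (some ∘ e) hf
  refine ⟨a', c', ?_⟩
  ext p
  have h0 : fill (some ∘ e) p 0 = p ∘ e := rfl
  simpa [h0] using congrFun h (p, 0)

/-! ### Quantifier elimination -/

/-- A property of subsets of the spaces `ℝ^ι` which holds for the atomic sets and is stable under
Boolean operations, projections and re-indexing of the coordinates holds for all definable sets. -/
lemma definable_induction {L : FirstOrder.Language.{0, 0}} [L.Structure ℝ]
    (P : ∀ (ι : Type) [Fintype ι], Set (ι → ℝ) → Prop)
    (hempty : ∀ (ι : Type) [Fintype ι], P ι ∅)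
    (hcompl : ∀ (ι : Type) [Fintype ι] (X : Set (ι → ℝ)), P ι X → P ι Xᶜ)
    (hinter : ∀ (ι : Type) [Fintype ι] (X Y : Set (ι → ℝ)), P ι X → P ι Y → P ι (X ∩ Y))
    (hproj : ∀ (ι ι' : Type) [Fintype ι] [Fintype ι'] (e : ι' → Option ι) (X : Set (ι' → ℝ)),
      P ι' X → P ι {p | ∃ t, fill e p t ∈ X})
    (hcomp : ∀ (ι ι' : Type) [Fintype ι] [Fintype ι'] (e : ι' → ι) (X : Set (ι' → ℝ)),
      P ι' X → P ι {p | p ∘ e ∈ X})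
    (heq : ∀ (ι : Type) [Fintype ι] (t₁ t₂ : L.Term ι),
      P ι {p : ι → ℝ | t₁.realize p = t₂.realize p})
    (hrel : ∀ (ι : Type) [Fintype ι] (l : ℕ) (R : L.Relations l) (ts : Fin l → L.Term ι),
      P ι {p : ι → ℝ | Language.Structure.RelMap R fun i => (ts i).realize p})
    {n : ℕ} {X : Set (Fin n → ℝ)} (hX : Set.Definable (∅ : Set ℝ) L X) : P (Fin n) X := by
  obtain ⟨φ, rfl⟩ := Set.empty_definable_iff.1 hX
  have key : ∀ {m : ℕ} (φ : L.BoundedFormula (Fin n) m),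
      P (Fin n ⊕ Fin m) {q | φ.Realize (q ∘ Sum.inl) (q ∘ Sum.inr)} := by
    intro m φ
    induction φ with
    | falsum => exact hempty _
    | equal t₁ t₂ =>
      convert heq _ t₁ t₂ using 3 with q
      simp [Language.BoundedFormula.Realize, Sum.elim_comp_inl_inr]
    | rel R ts =>
      convert hrel _ _ R ts using 3 with q
      simp [Language.BoundedFormula.Realize, Sum.elim_comp_inl_inr]
    | imp f₁ f₂ ih₁ ih₂ =>
      convert hcompl _ _ (hinter _ _ _ ih₁ (hcompl _ _ ih₂)) using 1
      ext q
      simp [Language.BoundedFormula.Realize]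
    | @all m f ih =>
      let e : Fin n ⊕ Fin (m + 1) → Option (Fin n ⊕ Fin m) :=
        Sum.elim (fun i => some (Sum.inl i)) (Fin.lastCases none fun j => some (Sum.inr j))
      convert hcompl _ _ (hproj _ _ e _ (hcompl _ _ ih)) using 1
      ext q
      have h1 : ∀ t, fill e q t ∘ Sum.inl = q ∘ Sum.inl := fun t => rfl
      have h2 : ∀ t, fill e q t ∘ Sum.inr = Fin.snoc (q ∘ Sum.inr) t := by
        intro t
        ext j
        refine Fin.lastCases ?_ (fun j => ?_) j <;> simp [fill, e]
      simp [Language.BoundedFormula.Realize, h1, h2]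
  convert hcomp _ _ (Sum.elim id Fin.elim0) _ (key φ) using 1
  ext p
  have h2 : (p ∘ Sum.elim id Fin.elim0) ∘ Sum.inr = (default : Fin 0 → ℝ) :=
    Subsingleton.elim _ _
  have h1 : (p ∘ Sum.elim id (Fin.elim0 : Fin 0 → Fin n)) ∘ Sum.inl = p := rfl
  simp only [Set.mem_ofPred_eq, h1, h2]
  exact iff_of_eq (congrArg (Language.BoundedFormula.Realize φ p) (Subsingleton.elim _ _))

lemma ss_term {ι : Type} [Fintype ι] (t : SsLang.Term ι) :
    (fun p : ι → ℝ => t.realize p) ∈ AffZ ι := by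
  classical
  induction t with
  | var i => exact ⟨Pi.single i 1, 0, by ext p; simp [lin_single]⟩
  | @func l f ts ih =>
    rcases l with _ | _ | _ | l
    · exact ⟨0, 1, by ext p; simp [lin_zero]; rfl⟩
    · exact f.elim
    · exact (AffZ ι).add_mem (ih 0) (ih 1)
    · exact f.elim

lemma SsDefinable.sd {n : ℕ} {X : Set (Fin n → ℝ)} (h : SsDefinable X) :
    SD (AffZ (Fin n)) X := by
  refine definable_induction (fun ι _ X => SD (AffZ ι) X) (fun ι _ => SD.empty _)
    (fun ι _ X h => h.compl) (fun ι _ X Y h h' => h.inter h') (fun ι ι' _ _ e X h => ?_)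
    (fun ι ι' _ _ e X h => h.preimage _ fun f hf => AffZ_comp e hf) (fun ι _ t₁ t₂ => ?_)
    (fun ι _ l R ts => ?_) h
  · exact SD.exists (X := {q | fill e q.1 q.2 ∈ X}) (h.preimage _ fun f hf => AffZ_fill e hf)
  · simpa [sub_eq_zero] using SD.eqz ((AffZ ι).sub_mem (ss_term t₁) (ss_term t₂))
  · rcases l with _ | _ | _ | l
    · exact R.elim
    · exact R.elim
    · have := SD.pos ((AffZ ι).sub_mem (ss_term (ts 1)) (ss_term (ts 0)))
      simp only [Pi.sub_apply, sub_pos] at this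
      exact this
    · exact R.elim

/-- `1 + c + ∑ nᵢ xᵢ` is a term; the summand `1` is there because the language has no symbol for
zero. -/
lemma ss_nat_term {ι : Type} [Fintype ι] (a : ι → ℕ) (c : ℕ) :
    ∃ t : SsLang.Term ι, ∀ p : ι → ℝ, t.realize p = 1 + c + ∑ i, (a i : ℝ) * p i := by
  classical
  let one : SsLang.Term ι := Language.Term.func (l := 0) (() : Unit) Fin.elim0
  let plus : SsLang.Term ι → SsLang.Term ι → SsLang.Term ι := fun s t =>
    Language.Term.func (l := 2) (() : Unit) ![s, t]
  have h1 : ∀ p : ι → ℝ, one.realize p = 1 := fun p => rfl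
  have h2 : ∀ s t, ∀ p : ι → ℝ, (plus s t).realize p = s.realize p + t.realize p :=
    fun s t p => rfl
  have mul : ∀ (s u : SsLang.Term ι) (k : ℕ), ∃ t : SsLang.Term ι, ∀ p : ι → ℝ,
      t.realize p = s.realize p + k * u.realize p := by
    intro s u k
    induction k with
    | zero => exact ⟨s, fun p => by simp⟩
    | succ k ih =>
      obtain ⟨t, ht⟩ := ih
      exact ⟨plus t u, fun p => by rw [h2, ht]; push_cast; ring⟩
  have : ∀ s : Finset ι, ∃ t : SsLang.Term ι, ∀ p : ι → ℝ,
      t.realize p = 1 + c + ∑ i ∈ s, (a i : ℝ) * p i := by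
    intro s
    induction s using Finset.induction_on with
    | empty =>
      obtain ⟨t, ht⟩ := mul one one c
      exact ⟨t, fun p => by simp [ht, h1]⟩
    | insert i s hi ih =>
      obtain ⟨t, ht⟩ := ih
      obtain ⟨t', ht'⟩ := mul t (Language.Term.var i) (a i)
      exact ⟨t', fun p => by
        rw [ht', ht, Finset.sum_insert hi]; simp only [Language.Term.realize_var]; ring⟩
  exact this Finset.univ

lemma ss_neg {n : ℕ} {f : (Fin n → ℝ) → ℝ} (hf : f ∈ AffZ (Fin n)) :
    SsDefinable {x | f x < 0} := by
  obtain ⟨a, c, rfl⟩ := hf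
  obtain ⟨t, ht⟩ := ss_nat_term (fun i => (a i).toNat) c.toNat
  obtain ⟨s, hs⟩ := ss_nat_term (fun i => (-a i).toNat) (-c).toNat
  let R : SsLang.Relations 2 := (() : Unit)
  refine Set.empty_definable_iff.2 ⟨R.formula₂ t s, ?_⟩
  ext x
  have e : ∀ k : ℤ, (k : ℝ) = (k.toNat : ℝ) - ((-k).toNat : ℝ) := fun k => by
    have := Int.toNat_sub_toNat_neg k
    exact_mod_cast this.symm
  have : lin a x + c = t.realize x - s.realize x := by
    rw [ht, hs, lin_apply, add_sub_add_comm, ← Finset.sum_sub_distrib]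
    simp_rw [← sub_mul, ← e]
    rw [e c]
    ring
  have h3 : (R.formula₂ t s).Realize x ↔
      t.realize x < s.realize x := by
    rw [Language.Formula.realize_rel₂]
    rfl
  change lin a x + c < 0 ↔ (R.formula₂ t s).Realize x
  rw [h3, this, sub_neg]

lemma ss_sign {n : ℕ} {f : (Fin n → ℝ) → ℝ} (hf : f ∈ AffZ (Fin n)) (σ : SignType) :
    SsDefinable {x | SignType.sign (f x) = σ} := by
  have hneg := ss_neg hf
  have hpos : SsDefinable {x | 0 < f x} := by
    simpa using ss_neg ((AffZ (Fin n)).neg_mem hf)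
  rcases σ with _ | _ | _
  · suffices e : {x | SignType.sign (f x) = 0} = {x | f x < 0}ᶜ ∩ {x | 0 < f x}ᶜ by
      change SsDefinable {x | SignType.sign (f x) = 0}
      rw [e]
      exact Set.Definable.inter (Set.Definable.compl hneg) (Set.Definable.compl hpos)
    refine Set.ext fun x => ?_
    change SignType.sign (f x) = 0 ↔ ¬ (f x < 0) ∧ ¬ (0 < f x)
    rw [sign_eq_zero_iff]
    constructor
    · rintro h; simp [h]
    · rintro ⟨h1, h2⟩; linarith
  · convert hneg using 3
    exact sign_eq_neg_one_iff
  · convert hpos using 3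
    exact sign_eq_one_iff

/-- A set defined by sign conditions is a finite union of sign cells, each of which is
definable. -/
lemma SD.ssDefinable {n : ℕ} {X : Set (Fin n → ℝ)} (h : SD (AffZ (Fin n)) X) :
    SsDefinable X := by
  classical
  obtain ⟨F, hF, hA, h⟩ := h
  have := hF.fintype
  have cell : ∀ σ : F → SignType, SsDefinable
      {x : Fin n → ℝ | ∀ f : F, SignType.sign (f.1 x) = σ f} := by
    intro σ
    have := Set.definable_iInter_of_finite (A := (∅ : Set ℝ)) (L := SsLang)
      (fun f : F => ss_sign (hA f.1 f.2) (σ f))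
    change Set.Definable _ _ _
    convert this using 1
    ext x
    simp
  have := Set.definable_biUnion_finset (A := (∅ : Set ℝ)) (L := SsLang) (fun σ => cell σ)
    (Finset.univ.filter fun σ => ∃ x ∈ X, ∀ f : F, SignType.sign (f.1 x) = σ f)
  change Set.Definable _ _ _
  convert this using 1
  ext x
  simp only [Finset.mem_filter, Finset.mem_univ, true_and, Set.mem_iUnion, Set.mem_ofPred_eq,
    exists_prop]
  constructor
  · intro hx
    exact ⟨fun f => SignType.sign (f.1 x), ⟨x, hx, fun f => rfl⟩, fun f => rfl⟩
  · rintro ⟨σ, ⟨y, hy, hy'⟩, hx⟩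
    exact (h y x fun f hf => (hy' ⟨f, hf⟩).trans (hx ⟨f, hf⟩).symm).1 hy

/-- `LD X`: membership of `x` in `X` depends only on the signs of finitely many integer affine forms
at the fractional part of `x` and on the colour of the integer part of `x` in some finite
colouring of `ℤ^ι`. (Every finite colouring is allowed.) -/
def LD {ι : Type} [Fintype ι] (X : Set (ι → ℝ)) : Prop :=
  ∃ (K : Type) (_ : Finite K) (c : (ι → ℤ) → K) (F : Set ((ι → ℝ) → ℝ)), F.Finite ∧
    (∀ f ∈ F, f ∈ AffZ ι) ∧
    ∀ x y, c (fun i => ⌊x i⌋) = c (fun i => ⌊y i⌋) →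
      (∀ f ∈ F, SignType.sign (f fun i => Int.fract (x i)) =
        SignType.sign (f fun i => Int.fract (y i))) → (x ∈ X ↔ y ∈ X)

lemma LD.compl {ι : Type} [Fintype ι] {X : Set (ι → ℝ)} (h : LD X) : LD Xᶜ := by
  obtain ⟨K, hK, c, F, hF, hA, h⟩ := h
  exact ⟨K, hK, c, F, hF, hA, fun x y hc hxy => not_congr (h x y hc hxy)⟩

lemma LD.inter {ι : Type} [Fintype ι] {X Y : Set (ι → ℝ)} (h : LD X) (h' : LD Y) :
    LD (X ∩ Y) := by
  obtain ⟨K, hK, c, F, hF, hA, h⟩ := h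
  obtain ⟨K', hK', c', F', hF', hA', h'⟩ := h'
  refine ⟨K × K', inferInstance, fun z => (c z, c' z), F ∪ F', hF.union hF',
    fun f hf => hf.elim (hA f) (hA' f), fun x y hc hxy => ?_⟩
  simp only [Prod.mk.injEq] at hc
  exact and_congr (h x y hc.1 fun f hf => hxy f (Or.inl hf))
    (h' x y hc.2 fun f hf => hxy f (Or.inr hf))

lemma LD.comp {ι ι' : Type} [Fintype ι] [Fintype ι'] (e : ι' → ι) {X : Set (ι' → ℝ)}
    (h : LD X) : LD {p : ι → ℝ | p ∘ e ∈ X} := by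
  obtain ⟨K, hK, c, F, hF, hA, h⟩ := h
  refine ⟨K, hK, fun z => c (z ∘ e), (fun f p => f (p ∘ e)) '' F, hF.image _, ?_,
    fun x y hc hxy => h _ _ hc fun f hf => hxy _ ⟨f, hf, rfl⟩⟩
  rintro _ ⟨f, hf, rfl⟩
  exact AffZ_comp e (hA f hf)

lemma LD.proj {ι ι' : Type} [Fintype ι] [Fintype ι'] (e : ι' → Option ι) {X : Set (ι' → ℝ)}
    (h : LD X) : LD {p : ι → ℝ | ∃ t, fill e p t ∈ X} := by
  obtain ⟨K, hK, c, F, hF, hA, h⟩ := h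
  -- The last two forms keep the eliminated variable in `[0, 1)`.
  obtain ⟨G, hG, hGA, hG'⟩ := fourier_motzkin (A := AffZ ι)
    (F := (fun f (q : (ι → ℝ) × ℝ) => f (fill e q.1 q.2)) '' F ∪
      {fun q => q.2, fun q => q.2 - 1})
    ((hF.image _).union (Set.toFinite _)) (by
      rintro _ (⟨f, hf, rfl⟩ | rfl | rfl)
      · exact AffZ_fill e (hA f hf)
      · exact ⟨0, (AffZ ι).zero_mem, 1, by ext; simp⟩
      · exact ⟨_, mem_AffZ 0 (-1), 1, by ext; simp [lin_zero]; ring⟩)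
  have hfl : ∀ {R S : Type} (g : R → S) (p : ι → R) (t : R),
      (fun j => g (fill e p t j)) = fill e (fun i => g (p i)) (g t) := by
    intro R S g p t
    ext j
    rcases hj : e j with _ | i <;> simp [fill, hj]
  have one : ∀ x y : ι → ℝ,
      Set.range (fun m => c (fill e (fun i => ⌊x i⌋) m)) =
        Set.range (fun m => c (fill e (fun i => ⌊y i⌋) m)) →
      (∀ g ∈ G, SignType.sign (g fun i => Int.fract (x i)) =
        SignType.sign (g fun i => Int.fract (y i))) →
      (∃ t, fill e x t ∈ X) → ∃ t, fill e y t ∈ X := by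
    rintro x y hc hxy ⟨t, ht⟩
    obtain ⟨m, hm⟩ : c (fill e (fun i => ⌊x i⌋) ⌊t⌋) ∈
        Set.range (fun m => c (fill e (fun i => ⌊y i⌋) m)) := hc ▸ ⟨⌊t⌋, rfl⟩
    obtain ⟨s, hs⟩ := hG' _ _ hxy (Int.fract t)
    have hs0 : 0 ≤ s := by
      have := hs _ (Or.inr (Or.inl rfl))
      exact sign_nonneg_iff.1 (this ▸ sign_nonneg_iff.2 (Int.fract_nonneg t))
    have hs1 : s < 1 := by
      have := hs _ (Or.inr (Or.inr rfl))
      simp only at this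
      rw [sign_neg (by linarith [Int.fract_lt_one t])] at this
      linarith [sign_eq_neg_one_iff.1 this.symm]
    have hfloor : ⌊(m : ℝ) + s⌋ = m := by
      rw [Int.floor_eq_iff]; constructor <;> linarith
    have hfract : Int.fract ((m : ℝ) + s) = s := by
      rw [Int.fract, hfloor]; ring
    refine ⟨m + s, (h _ _ ?_ fun f hf => ?_).1 ht⟩
    · simp only [hfl, hfloor]
      exact hm.symm
    · simp only [hfl, hfract]
      exact hs _ (Or.inl ⟨f, hf, rfl⟩)
  exact ⟨Set K, inferInstance, fun z => Set.range fun m => c (fill e z m), G, hG, hGA,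
    fun x y hc hxy => ⟨one x y hc hxy, one y x hc.symm fun g hg => (hxy g hg).symm⟩⟩

lemma ls_term {ι : Type} [Fintype ι] (t : LsLang.Term ι) :
    ∃ a : ι → ℤ, ∀ p : ι → ℝ, t.realize p = lin a p := by
  classical
  induction t with
  | var i => exact ⟨Pi.single i 1, fun p => by simp [lin_single]⟩
  | @func l f ts ih =>
    rcases l with _ | _ | _ | l
    · exact f.elim
    · exact f.elim
    · obtain ⟨a, ha⟩ := ih 0
      obtain ⟨b, hb⟩ := ih 1
      refine ⟨a + b, fun p => ?_⟩
      rw [lin_add, ← ha, ← hb]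
      rfl
    · exact f.elim

lemma lin_floor_add_fract {ι : Type} [Fintype ι] (a : ι → ℤ) (x : ι → ℝ) :
    lin a x = ((∑ i, a i * ⌊x i⌋ : ℤ) : ℝ) + lin a (fun i => Int.fract (x i)) := by
  rw [← lin_int, ← map_add]
  congr 1
  ext i
  simp

lemma lin_fract_bound {ι : Type} [Fintype ι] (a : ι → ℤ) :
    ∃ B : ℤ, ∀ x : ι → ℝ, |lin a (fun i => Int.fract (x i))| < B := by
  refine ⟨∑ i, |a i| + 1, fun x => ?_⟩
  rw [lin_apply]
  push_cast
  refine lt_of_le_of_lt (Finset.abs_sum_le_sum_abs _ _) ?_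
  refine lt_of_le_of_lt (Finset.sum_le_sum fun i _ => ?_) (lt_add_one _)
  rw [abs_mul, abs_of_nonneg (Int.fract_nonneg (x i))]
  exact mul_le_of_le_one_right (abs_nonneg _) (Int.fract_lt_one _).le

/-- With `N` the value of the form on the integer part and `s` its value on the fractional part,
`|s| < B`, the sign of `N + s` is the sign of `s` plus the truncation of `N` to `[-B, B]`; this
truncation is the colour of the integer part. -/
lemma LD.sign {ι : Type} [Fintype ι] (a : ι → ℤ) (S : Set SignType) :
    LD {x : ι → ℝ | SignType.sign (lin a x) ∈ S} := by
  obtain ⟨B, hB⟩ := lin_fract_bound a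
  have hB0 : 0 < B := by
    have := (abs_nonneg _).trans_lt (hB 0)
    exact_mod_cast this
  let cl : ℤ → Set.Icc (-B) B := fun N =>
    ⟨max (-B) (min B N), by constructor <;> simp; omega⟩
  refine ⟨Set.Icc (-B) B, inferInstance, fun z => cl (∑ i, a i * z i),
    (fun m : ℤ => fun x => lin a x + m) '' Set.Icc (-B) B,
    (Set.finite_Icc _ _).image _, ?_, fun x y hc hxy => ?_⟩
  · rintro _ ⟨m, -, rfl⟩
    exact mem_AffZ a m
  · have hcl : ∀ x : ι → ℝ, SignType.sign (lin a x) =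
        SignType.sign (lin a (fun i => Int.fract (x i)) +
          ((cl (∑ i, a i * ⌊x i⌋)).1 : ℝ)) := by
      intro x
      rw [lin_floor_add_fract, add_comm]
      have := abs_lt.1 (hB x)
      set s := lin a (fun i => Int.fract (x i))
      set N := ∑ i, a i * ⌊x i⌋
      simp only [cl]
      rcases lt_or_ge N (-B) with h | h
      · have h' : (N : ℝ) < -B := by exact_mod_cast h
        rw [min_eq_right (by omega), max_eq_left h.le]
        push_cast
        rw [sign_neg (by linarith), sign_neg (by linarith)]
      rcases lt_or_ge B N with h2 | h2
      · have h' : (B : ℝ) < N := by exact_mod_cast h2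
        rw [min_eq_left h2.le, max_eq_right (by omega)]
        rw [sign_pos (by linarith), sign_pos (by linarith)]
      · rw [min_eq_right h2, max_eq_right h]
    have : SignType.sign (lin a x) = SignType.sign (lin a y) := by
      rw [hcl x, hcl y]
      simp only at hc
      rw [hc]
      exact hxy _ ⟨_, (cl _).2, rfl⟩
    simp [this]

lemma LD.isInt {ι : Type} [Fintype ι] (a : ι → ℤ) :
    LD {x : ι → ℝ | ∃ k : ℤ, lin a x = k} := by
  obtain ⟨B, hB⟩ := lin_fract_bound a
  refine ⟨Unit, inferInstance, fun _ => (),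
    (fun m : ℤ => fun x => lin a x + m) '' Set.Icc (-B) B,
    (Set.finite_Icc _ _).image _, ?_, fun x y _ hxy => ?_⟩
  · rintro _ ⟨m, -, rfl⟩
    exact mem_AffZ a m
  · have e : ∀ x : ι → ℝ, (∃ k : ℤ, lin a x = k) ↔
        ∃ m ∈ Set.Icc (-B) B, SignType.sign (lin a (fun i => Int.fract (x i)) + (m : ℝ)) = 0 := by
      intro x
      rw [lin_floor_add_fract]
      have := abs_lt.1 (hB x)
      simp only [sign_eq_zero_iff]
      constructor
      · rintro ⟨k, hk⟩
        have e : ((∑ i, a i * ⌊x i⌋ - k : ℤ) : ℝ) = - lin a (fun i => Int.fract (x i)) := by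
          push_cast at hk ⊢
          linarith
        refine ⟨∑ i, a i * ⌊x i⌋ - k, ⟨?_, ?_⟩, by rw [e]; ring⟩
        · have : ((-B : ℤ) : ℝ) < ((∑ i, a i * ⌊x i⌋ - k : ℤ) : ℝ) := by
            rw [e]; push_cast; linarith
          exact (Int.cast_lt.1 this).le
        · have : ((∑ i, a i * ⌊x i⌋ - k : ℤ) : ℝ) < ((B : ℤ) : ℝ) := by
            rw [e]; linarith
          exact (Int.cast_lt.1 this).le
      · rintro ⟨m, -, hm⟩
        exact ⟨∑ i, a i * ⌊x i⌋ - m, by push_cast; linarith⟩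
    simp only [Set.mem_ofPred_eq, e]
    refine exists_congr fun m => and_congr_right fun hm => ?_
    rw [hxy _ ⟨m, hm, rfl⟩]

lemma LsDefinable.ld {n : ℕ} {X : Set (Fin n → ℝ)} (h : LsDefinable X) : LD X := by
  refine definable_induction (fun ι _ X => LD X)
    (fun ι _ => ⟨Unit, inferInstance, fun _ => (), ∅, Set.finite_empty, by simp, by simp⟩)
    (fun ι _ X h => h.compl) (fun ι _ X Y h h' => h.inter h') (fun ι ι' _ _ e X h => h.proj e)
    (fun ι ι' _ _ e X h => h.comp e) (fun ι _ t₁ t₂ => ?_) (fun ι _ l R ts => ?_) h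
  · obtain ⟨a, ha⟩ := ls_term t₁
    obtain ⟨b, hb⟩ := ls_term t₂
    simpa [ha, hb, lin_sub, sub_eq_zero, sign_eq_zero_iff] using LD.sign (a - b) {0}
  · rcases l with _ | _ | _ | l
    · exact R.elim
    · obtain ⟨a, ha⟩ := ls_term (ts 0)
      have := LD.isInt a
      simp only [← ha] at this
      exact this
    · obtain ⟨a, ha⟩ := ls_term (ts 0)
      obtain ⟨b, hb⟩ := ls_term (ts 1)
      have := LD.sign (b - a) {1}
      simp only [lin_sub, Set.mem_singleton_iff, sign_eq_one_iff, sub_pos, ← ha, ← hb] at this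
      exact this
    · exact R.elim

/-! ### Local structure -/

open Topology

/-- Near `x`, membership of `y` in `X` depends only on the signs of the linear forms in `N` at
`y - x`. -/
def Loc {ι : Type} [Fintype ι] (X : Set (ι → ℝ)) (x : ι → ℝ) (N : Set (ι → ℤ)) : Prop :=
  ∃ r > (0 : ℝ), ∀ y ∈ Metric.ball x r, ∀ z ∈ Metric.ball x r,
    (∀ a ∈ N, SignType.sign (lin a (y - x)) = SignType.sign (lin a (z - x))) → (y ∈ X ↔ z ∈ X)

lemma isStratum_iff_s15 {ι : Type} [Fintype ι] {X : Set (ι → ℝ)} {x v : ι → ℝ} :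
    IsStratum X x v ↔ ∃ r > (0 : ℝ), ∀ y ∈ Metric.ball x r, ∀ z ∈ Metric.ball x r, ∀ α : ℝ,
      y = z + α • v → (y ∈ X ↔ z ∈ X) := by
  refine exists_congr fun r => and_congr_right fun hr => ⟨fun h y hy z hz α e => ⟨fun hX => ?_,
    fun hX => ?_⟩, fun h y hy ⟨z, ⟨hzX, hz⟩, α, e⟩ => (h y hy z hz α e).2 hzX⟩
  · exact h z hz ⟨y, ⟨hX, hy⟩, -α, by rw [e]; simp⟩
  · exact h y hy ⟨z, ⟨hX, hz⟩, α, e⟩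

/-- The sign of a continuous function is locally constant where the function does not vanish. -/
lemma eventually_sign_eq {E : Type} [TopologicalSpace E] {f : E → ℝ} (hf : Continuous f) {x : E}
    (hx : f x ≠ 0) : ∀ᶠ y in 𝓝 x, SignType.sign (f y) = SignType.sign (f x) := by
  rcases lt_or_gt_of_ne hx with h | h
  · filter_upwards [hf.continuousAt.eventually (Iio_mem_nhds h)] with y hy
    rw [sign_neg hy, sign_neg h]
  · filter_upwards [hf.continuousAt.eventually (Ioi_mem_nhds h)] with y hy
    rw [sign_pos hy, sign_pos h]

/-- If the forms describing `X` near `x` vanish at `v'` whenever they vanish at the stratum `v`,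
then `v'` is a stratum too. For `y`, `z` near `x` with `y - z` parallel to `v'`, shrink both
towards `x` by a small factor `s` and then move them by a fixed small multiple `T v`: forms with
`a v ≠ 0` get the sign of `a v` at both points, and the other ones agree at `y` and `z`. -/
lemma IsStratum.of_loc {ι : Type} [Fintype ι] {X : Set (ι → ℝ)} {x v v' : ι → ℝ}
    {N : Set (ι → ℤ)} (hN : N.Finite) (hX : Loc X x N) (hv : IsStratum X x v)
    (hv' : ∀ a ∈ N, lin a v = 0 → lin a v' = 0) : IsStratum X x v' := by
  obtain ⟨r₁, hr₁, h₁⟩ := hX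
  obtain ⟨r₂, hr₂, h₂⟩ := isStratum_iff_s15.1 hv
  refine isStratum_iff_s15.2 ⟨r₁, hr₁, fun y hy z hz α hyz => ?_⟩
  have hmove : ∀ y : ι → ℝ, ∀ᶠ q : ℝ × ℝ in 𝓝 0, x + q.1 • (y - x) + q.2 • v ∈
      Metric.ball x r₁ ∩ Metric.ball x r₂ := by
    intro y
    have : ContinuousAt (fun q : ℝ × ℝ => x + q.1 • (y - x) + q.2 • v) 0 := by fun_prop
    refine this.eventually_mem (Filter.inter_mem ?_ ?_) <;>
    · simp only [Prod.fst_zero, Prod.snd_zero, zero_smul, add_zero]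
      exact Metric.ball_mem_nhds _ (by assumption)
  obtain ⟨η, hη, hball⟩ := Metric.eventually_nhds_iff_ball.1 ((hmove y).and (hmove z))
  set T := η / 2 with hT
  have hT0 : 0 < T := by positivity
  -- a factor `s` for which `T v` decides the sign of all forms not vanishing at `v`
  have hs : ∀ᶠ s : ℝ in 𝓝[>] 0, ∀ a ∈ N, lin a v ≠ 0 →
      SignType.sign (s * lin a (y - x) + T * lin a v) = SignType.sign (lin a v) ∧
      SignType.sign (s * lin a (z - x) + T * lin a v) = SignType.sign (lin a v) := by
    refine (Filter.eventually_all_finite hN).2 fun a ha => ?_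
    by_cases hav : lin a v = 0
    · exact Filter.Eventually.of_forall fun s h => absurd hav h
    have one : ∀ y : ι → ℝ, ∀ᶠ s : ℝ in 𝓝 0,
        SignType.sign (s * lin a (y - x) + T * lin a v) = SignType.sign (lin a v) := by
      intro y
      have := eventually_sign_eq (f := fun s : ℝ => s * lin a (y - x) + T * lin a v)
        (by fun_prop) (x := 0) (by simp [hav, hT0.ne'])
      filter_upwards [this] with s hs
      rw [hs]
      simp [sign_mul, sign_pos hT0]
    filter_upwards [nhdsWithin_le_nhds (one y), nhdsWithin_le_nhds (one z)] with s h h' _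
    exact ⟨h, h'⟩
  have hs2 : ∀ᶠ s : ℝ in 𝓝[>] 0, s ∈ Set.Ioo 0 η := Ioo_mem_nhdsGT hη
  obtain ⟨s, hs, hs0, hsη⟩ := (hs.and hs2).exists
  have hq : ∀ t, 0 ≤ t → t < η → ((s, t) : ℝ × ℝ) ∈ Metric.ball (0 : ℝ × ℝ) η := by
    intro t ht ht'
    rw [mem_ball_zero_iff, Prod.norm_def, max_lt_iff, Real.norm_of_nonneg hs0.le,
      Real.norm_of_nonneg ht]
    exact ⟨hsη, ht'⟩
  have shrink : ∀ y ∈ Metric.ball x r₁, x + s • (y - x) + (0 : ℝ) • v ∈ Metric.ball x r₁ →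
      (y ∈ X ↔ x + s • (y - x) + (0 : ℝ) • v ∈ X) := by
    intro y hy hy'
    refine h₁ _ hy _ hy' fun a ha => ?_
    have : x + s • (y - x) + (0 : ℝ) • v - x = s • (y - x) := by simp
    rw [this, map_smul, smul_eq_mul, sign_mul, sign_pos hs0, one_mul]
  have b0 := hball _ (hq 0 le_rfl hη)
  have bT := hball _ (hq T hT0.le (by linarith))
  rw [shrink y hy b0.1.1, shrink z hz b0.2.1,
    ← h₂ _ bT.1.2 _ b0.1.2 T (by simp), ← h₂ _ bT.2.2 _ b0.2.2 T (by simp)]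
  refine h₁ _ bT.1.1 _ bT.2.1 fun a ha => ?_
  have e : ∀ y : ι → ℝ, lin a (x + s • (y - x) + T • v - x) = s * lin a (y - x) + T * lin a v := by
    intro y
    rw [show x + s • (y - x) + T • v - x = s • (y - x) + T • v by abel]
    simp
  rw [e, e]
  by_cases hav : lin a v = 0
  · have : lin a (y - x) = lin a (z - x) := by
      rw [hyz, add_sub_right_comm, (lin a).map_add, (lin a).map_smul, hv' a ha hav]
      simp
    rw [this]
  · rw [(hs a ha hav).1, (hs a ha hav).2]

lemma IsStratum.zero {ι : Type} [Fintype ι] (X : Set (ι → ℝ)) (x : ι → ℝ) : IsStratum X x 0 :=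
  isStratum_iff_s15.2 ⟨1, one_pos, by rintro y - z - α rfl; simp⟩

lemma Loc.isStratum {ι : Type} [Fintype ι] {X : Set (ι → ℝ)} {x v : ι → ℝ}
    {N : Set (ι → ℤ)} (hN : N.Finite) (hX : Loc X x N) (hv : ∀ a ∈ N, lin a v = 0) :
    IsStratum X x v :=
  (IsStratum.zero X x).of_loc hN hX fun a ha _ => hv a ha

/-- A set given by sign conditions on affine forms is described near `x` by the linear parts of
those forms that vanish at `x`. -/
lemma loc_of_signs {ι : Type} [Fintype ι] {X : Set (ι → ℝ)} {F : Set ((ι → ℝ) → ℝ)}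
    (hF : F.Finite) {a : ((ι → ℝ) → ℝ) → ι → ℤ} {c : ((ι → ℝ) → ℝ) → ℤ}
    (hac : ∀ f ∈ F, f = fun x => lin (a f) x + c f)
    (h : ∀ x y, (∀ f ∈ F, SignType.sign (f x) = SignType.sign (f y)) → (x ∈ X ↔ y ∈ X))
    (x : ι → ℝ) : Loc X x (a '' {f ∈ F | f x = 0}) := by
  have hcont : ∀ f ∈ F, Continuous f := fun f hf => by
    rw [hac f hf]
    exact (lin_continuous _).add continuous_const
  have : ∀ᶠ y in 𝓝 x, ∀ f ∈ F, f x ≠ 0 → SignType.sign (f y) = SignType.sign (f x) := by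
    refine (Filter.eventually_all_finite hF).2 fun f hf => ?_
    by_cases hfx : f x = 0
    · exact Filter.Eventually.of_forall fun y h => absurd hfx h
    · filter_upwards [eventually_sign_eq (hcont f hf) hfx] with y hy _ using hy
  obtain ⟨r, hr, hball⟩ := Metric.eventually_nhds_iff_ball.1 this
  refine ⟨r, hr, fun y hy z hz hs => h y z fun f hf => ?_⟩
  by_cases hfx : f x = 0
  · have e : ∀ y, f y = lin (a f) (y - x) := by
      intro y
      have h1 := congrFun (hac f hf) y
      have h2 := congrFun (hac f hf) x
      rw [map_sub]
      linarith
    rw [e, e]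
    exact hs _ ⟨f, ⟨hf, hfx⟩, rfl⟩
  · rw [hball y hy f hf hfx, hball z hz f hf hfx]

lemma SD.exists_forms {ι : Type} [Fintype ι] {X : Set (ι → ℝ)} (h : SD (AffZ ι) X) :
    ∃ (F : Set ((ι → ℝ) → ℝ)) (a : ((ι → ℝ) → ℝ) → ι → ℤ) (c : ((ι → ℝ) → ℝ) → ℤ),
      F.Finite ∧ (∀ f ∈ F, f ∈ AffZ ι) ∧ (∀ f ∈ F, f = fun x => lin (a f) x + c f) ∧
      ∀ x y, (∀ f ∈ F, SignType.sign (f x) = SignType.sign (f y)) → (x ∈ X ↔ y ∈ X) := by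
  obtain ⟨F, hF, hA, h⟩ := h
  have : ∀ f : (ι → ℝ) → ℝ, ∃ (a : ι → ℤ) (c : ℤ), f ∈ F → f = fun x => lin a x + c := by
    intro f
    by_cases hf : f ∈ F
    · obtain ⟨a, c, e⟩ := hA f hf
      exact ⟨a, c, fun _ => e⟩
    · exact ⟨0, 0, fun h => absurd h hf⟩
  choose a c hac using this
  exact ⟨F, a, c, hF, hA, hac, h⟩

/-- A singular point is the unique common zero of the forms vanishing at it. -/
lemma SD.finite_singular {ι : Type} [Fintype ι] {X : Set (ι → ℝ)} (h : SD (AffZ ι) X) :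
    {x | IsSingular X x}.Finite := by
  obtain ⟨F, a, c, hF, -, hac, h⟩ := h.exists_forms
  refine Set.Finite.of_finite_image (f := fun x => {f ∈ F | f x = 0}) ?_ ?_
  · refine hF.finite_subsets.subset ?_
    rintro _ ⟨x, -, rfl⟩
    exact Set.sep_subset _ _
  · intro x hx y hy hxy
    have : y - x = 0 := by
      refine hx _ ((loc_of_signs hF hac h x).isStratum ((hF.subset (Set.sep_subset _ _)).image _) ?_)
      rintro _ ⟨f, hf, rfl⟩
      have hf' : f ∈ {f ∈ F | f y = 0} := by
        simp only at hxy
        exact hxy ▸ hf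
      have h1 := congrFun (hac f hf.1) y
      have h2 := congrFun (hac f hf.1) x
      rw [map_sub]
      linarith [hf.2, hf'.2]
    exact (sub_eq_zero.1 this).symm

lemma eventually_sign_int (u : ℝ) : ∀ᶠ u' : ℝ in 𝓝 u, ∀ k : ℤ, u ≠ (k : ℝ) →
    SignType.sign (u' - (k : ℝ)) = SignType.sign (u - (k : ℝ)) := by
  have h1 : ((⌈u⌉ - 1 : ℤ) : ℝ) < u := by
    push_cast
    linarith [Int.ceil_lt_add_one u]
  have h2 : u < ((⌊u⌋ + 1 : ℤ) : ℝ) := by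
    push_cast
    exact Int.lt_floor_add_one u
  filter_upwards [Ioo_mem_nhds h1 h2] with u' hu' k hk
  rcases lt_or_gt_of_ne hk with h | h
  · have : ((⌊u⌋ + 1 : ℤ) : ℝ) ≤ k := Int.cast_le.2 (Int.floor_lt.2 h)
    rw [sign_neg (by linarith [hu'.2]), sign_neg (by linarith)]
  · have : (k : ℝ) ≤ ((⌈u⌉ - 1 : ℤ) : ℝ) := Int.cast_le.2 (by have := Int.lt_ceil.2 h; omega)
    rw [sign_pos (by linarith [hu'.1]), sign_pos (by linarith)]

/-- `X` is a union of cells of the periodic arrangement of the hyperplanes `a x = k` with `a ∈ Λ`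
and `k ∈ ℤ`. -/
def Grid {ι : Type} [Fintype ι] (X : Set (ι → ℝ)) (Λ : Set (ι → ℤ)) : Prop :=
  ∀ x y, (∀ a ∈ Λ, ∀ k : ℤ, SignType.sign (lin a x - k) = SignType.sign (lin a y - k)) →
    (x ∈ X ↔ y ∈ X)

/-- The forms of `Λ` taking an integer value at `x`. -/
def intForms {ι : Type} [Fintype ι] (Λ : Set (ι → ℤ)) (x : ι → ℝ) : Set (ι → ℤ) :=
  {a ∈ Λ | ∃ k : ℤ, lin a x = k}

lemma intForms_finite {ι : Type} [Fintype ι] {Λ : Set (ι → ℤ)} (hΛ : Λ.Finite) (x : ι → ℝ) :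
    (intForms Λ x).Finite := hΛ.subset (Set.sep_subset _ _)

lemma Grid.loc {ι : Type} [Fintype ι] {X : Set (ι → ℝ)} {Λ : Set (ι → ℤ)} (hΛ : Λ.Finite)
    (h : Grid X Λ) (x : ι → ℝ) : Loc X x (intForms Λ x) := by
  have : ∀ᶠ y in 𝓝 x, ∀ a ∈ Λ, ∀ k : ℤ, lin a x ≠ k →
      SignType.sign (lin a y - k) = SignType.sign (lin a x - k) :=
    (Filter.eventually_all_finite hΛ).2 fun a ha =>
      (lin_continuous a).continuousAt.eventually (eventually_sign_int (lin a x))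
  obtain ⟨r, hr, hball⟩ := Metric.eventually_nhds_iff_ball.1 this
  refine ⟨r, hr, fun y hy z hz hs => h y z fun a ha k => ?_⟩
  by_cases hk : lin a x = k
  · have := hs a ⟨ha, k, hk⟩
    rwa [(lin a).map_sub, (lin a).map_sub, hk] at this
  · rw [hball y hy a ha k hk, hball z hz a ha k hk]

lemma floor_eq_of_sign {u u' : ℝ}
    (h : ∀ k : ℤ, SignType.sign (u - k) = SignType.sign (u' - k)) : ⌊u⌋ = ⌊u'⌋ := by
  symm
  rw [Int.floor_eq_iff]
  have h1 := h ⌊u⌋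
  have h2 := h (⌊u⌋ + 1)
  constructor
  · have : 0 ≤ u' - ⌊u⌋ := by
      rw [← sign_nonneg_iff, ← h1, sign_nonneg_iff]
      linarith [Int.floor_le u]
    linarith
  · rw [sign_neg (by push_cast; linarith [Int.lt_floor_add_one u])] at h2
    have := sign_eq_neg_one_iff.1 h2.symm
    push_cast at this
    linarith

lemma LD.grid {ι : Type} [Fintype ι] {X : Set (ι → ℝ)} (h : LD X) :
    ∃ Λ : Set (ι → ℤ), Λ.Finite ∧ Grid X Λ := by
  classical
  obtain ⟨K, hK, c, F, hF, hA, h⟩ := h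
  have : ∀ f : (ι → ℝ) → ℝ, ∃ (a : ι → ℤ) (c : ℤ), f ∈ F → f = fun x => lin a x + c := by
    intro f
    by_cases hf : f ∈ F
    · obtain ⟨a, c, e⟩ := hA f hf
      exact ⟨a, c, fun _ => e⟩
    · exact ⟨0, 0, fun h => absurd h hf⟩
  choose a d hac using this
  refine ⟨a '' F ∪ Set.range fun i => Pi.single i 1, (hF.image _).union (Set.finite_range _),
    fun x y hxy => ?_⟩
  have hfl : ∀ i, ⌊x i⌋ = ⌊y i⌋ := fun i => floor_eq_of_sign fun k => by
    simpa [lin_single] using hxy _ (Or.inr ⟨i, rfl⟩) k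
  refine h x y (by simp only [hfl]) fun f hf => ?_
  have e : ∀ x : ι → ℝ, f (fun i => Int.fract (x i)) =
      lin (a f) x - ((∑ i, a f i * ⌊x i⌋ - d f : ℤ) : ℝ) := by
    intro x
    rw [lin_floor_add_fract, congrFun (hac f hf) _]
    push_cast
    ring
  rw [e, e]
  simp only [hfl]
  exact hxy _ (Or.inl ⟨f, hf, rfl⟩) _

/-! ### Germs -/

/-- `X` coincides near `x` with a translate of `X` near `y`. -/
def GermEq {ι : Type} [Fintype ι] (X : Set (ι → ℝ)) (x y : ι → ℝ) : Prop :=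
  ∀ᶠ w in 𝓝 (0 : ι → ℝ), (x + w ∈ X ↔ y + w ∈ X)

lemma GermEq.refl {ι : Type} [Fintype ι] (X : Set (ι → ℝ)) (x : ι → ℝ) : GermEq X x x :=
  Filter.Eventually.of_forall fun _ => Iff.rfl

lemma GermEq.symm {ι : Type} [Fintype ι] {X : Set (ι → ℝ)} {x y : ι → ℝ} (h : GermEq X x y) :
    GermEq X y x :=
  Filter.Eventually.mono h fun _ h => h.symm

lemma GermEq.trans {ι : Type} [Fintype ι] {X : Set (ι → ℝ)} {x y z : ι → ℝ} (h : GermEq X x y)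
    (h' : GermEq X y z) : GermEq X x z := by
  filter_upwards [h, h'] with w h h' using h.trans h'

lemma GermEq.mem_iff {ι : Type} [Fintype ι] {X : Set (ι → ℝ)} {x y : ι → ℝ} (h : GermEq X x y) :
    x ∈ X ↔ y ∈ X := by
  simpa using h.self_of_nhds

lemma isStratum_iff_eventually {ι : Type} [Fintype ι] {X : Set (ι → ℝ)} {x v : ι → ℝ} :
    IsStratum X x v ↔ ∀ᶠ q : (ι → ℝ) × (ι → ℝ) in 𝓝 0, ∀ α : ℝ,
      q.1 = q.2 + α • v → (x + q.1 ∈ X ↔ x + q.2 ∈ X) := by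
  rw [isStratum_iff_s15, Metric.eventually_nhds_iff_ball]
  have e : ∀ (r : ℝ) (y : ι → ℝ), y ∈ Metric.ball x r ↔ ‖y - x‖ < r := fun r y => by
    rw [Metric.mem_ball, dist_eq_norm]
  refine exists_congr fun r => and_congr_right fun hr => ⟨fun h q hq α hα => ?_,
    fun h y hy z hz α hα => ?_⟩
  · rw [mem_ball_zero_iff, Prod.norm_def, max_lt_iff] at hq
    exact h _ (by simpa [e] using hq.1) _ (by simpa [e] using hq.2) α (by rw [hα]; abel)
  · rw [e] at hy hz
    have := h (y - x, z - x) (by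
      rw [mem_ball_zero_iff, Prod.norm_def, max_lt_iff]
      exact ⟨hy, hz⟩) α (by simp [hα]; abel)
    simpa using this

lemma IsStratum.germEq {ι : Type} [Fintype ι] {X : Set (ι → ℝ)} {x y v : ι → ℝ}
    (h : IsStratum X x v) (hxy : GermEq X x y) : IsStratum X y v := by
  rw [isStratum_iff_eventually] at h ⊢
  have h1 : Filter.Tendsto (fun q : (ι → ℝ) × (ι → ℝ) => q.1) (𝓝 0) (𝓝 0) :=
    continuous_fst.tendsto' _ _ rfl
  have h2 : Filter.Tendsto (fun q : (ι → ℝ) × (ι → ℝ) => q.2) (𝓝 0) (𝓝 0) :=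
    continuous_snd.tendsto' _ _ rfl
  filter_upwards [h, h1.eventually hxy, h2.eventually hxy] with q h h1 h2 α hα
  rw [← h1, ← h2]
  exact h α hα

lemma IsStratum.eventually {ι : Type} [Fintype ι] {X : Set (ι → ℝ)} {x v : ι → ℝ}
    (h : IsStratum X x v) : ∀ᶠ y in 𝓝 x, IsStratum X y v := by
  obtain ⟨r, hr, h⟩ := isStratum_iff_s15.1 h
  filter_upwards [Metric.ball_mem_nhds x (half_pos hr)] with y hy
  have hsub : Metric.ball y (r / 2) ⊆ Metric.ball x r := by
    refine Metric.ball_subset_ball' ?_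
    rw [Metric.mem_ball] at hy
    linarith
  exact isStratum_iff_s15.2 ⟨r / 2, half_pos hr, fun z hz z' hz' => h z (hsub hz) z' (hsub hz')⟩

/-- The germ of `X` is locally constant along a stratum. -/
lemma IsStratum.eventually_germEq {ι : Type} [Fintype ι] {X : Set (ι → ℝ)} {x v : ι → ℝ}
    (h : IsStratum X x v) : ∀ᶠ t in 𝓝 (0 : ℝ), GermEq X x (x + t • v) := by
  rw [isStratum_iff_eventually] at h
  have h1 : Filter.Tendsto (fun q : ℝ × (ι → ℝ) => (q.1 • v + q.2, q.2)) (𝓝 (0, 0)) (𝓝 0) :=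
    Continuous.tendsto' (by fun_prop) _ _ (by simp)
  have h2 := h1.eventually h
  rw [nhds_prod_eq] at h2
  filter_upwards [h2.curry] with t ht
  filter_upwards [ht] with w hw
  rw [add_assoc]
  exact (hw t (add_comm _ _)).symm

lemma floor_add_eventually (u : ℝ) : ∀ᶠ h : ℝ in 𝓝 0,
    ⌊u + h⌋ = ⌊u⌋ - if Int.fract u = 0 ∧ h < 0 then 1 else 0 := by
  have h1 := Int.fract_lt_one u
  have h2 := Int.fract_nonneg u
  have e : u = ⌊u⌋ + Int.fract u := (Int.floor_add_fract u).symm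
  by_cases hu : Int.fract u = 0
  · filter_upwards [Ioo_mem_nhds (neg_one_lt_zero) (zero_lt_one : (0 : ℝ) < 1)] with h hh
    rw [Int.floor_eq_iff]
    split_ifs with hc <;> push_cast
    · constructor <;> linarith [hh.1, hh.2, hc.2]
    · have : 0 ≤ h := by simpa [hu] using hc
      constructor <;> linarith [hh.1, hh.2]
  · have h3 : 0 < Int.fract u := lt_of_le_of_ne h2 (Ne.symm hu)
    filter_upwards [Ioo_mem_nhds (neg_lt_zero.2 h3) (sub_pos.2 h1)] with h hh
    rw [Int.floor_eq_iff]
    simp only [hu, false_and, if_false, sub_zero]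
    constructor <;> linarith [hh.1, hh.2]

/-- The shift of the integer part recorded by `δ`. -/
def shift {ι : Type} (δ : ι → Bool) (i : ι) : ℤ := if δ i then 1 else 0

/-- The germ of `X` at `x` is determined by the colours of the integer points `⌊x⌋ - δ` with
`δ ∈ {0, 1}^ι`, the signs of the describing forms at `fract x + δ`, and the set of integer
coordinates of `x`. -/
lemma LD.finite_germs {ι : Type} [Fintype ι] {X : Set (ι → ℝ)} (h : LD X) :
    ∃ R : Set (ι → ℝ), R.Finite ∧ ∀ x, ∃ r ∈ R, GermEq X r x := by
  classical
  obtain ⟨K, hK, c, F, hF, hA, h⟩ := h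
  have : ∀ f : (ι → ℝ) → ℝ, ∃ (a : ι → ℤ) (c : ℤ), f ∈ F → f = fun x => lin a x + c := by
    intro f
    by_cases hf : f ∈ F
    · obtain ⟨a, c, e⟩ := hA f hf
      exact ⟨a, c, fun _ => e⟩
    · exact ⟨0, 0, fun h => absurd h hf⟩
  choose a d hac using this
  have : Finite F := hF.to_subtype
  let base : (ι → ℝ) → (ι → Bool) → ι → ℝ := fun x δ i => Int.fract (x i) + shift δ i
  let D : (ι → ℝ) → ((ι → Bool) → K) × ((ι → Bool) × F → SignType) × (ι → Prop) := fun x =>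
    (fun δ => c fun i => ⌊x i⌋ - shift δ i, fun p => SignType.sign (p.2.1 (base x p.1)),
      fun i => Int.fract (x i) = 0)
  have hlocal : ∀ x, ∀ᶠ w in 𝓝 (0 : ι → ℝ),
      (∀ i, ⌊(x + w) i⌋ = ⌊x i⌋ - shift (fun i => decide (Int.fract (x i) = 0 ∧ w i < 0)) i) ∧
      ∀ f ∈ F, ∀ δ, SignType.sign (f (base x δ + w)) =
        if SignType.sign (f (base x δ)) = 0 then SignType.sign (lin (a f) w)
        else SignType.sign (f (base x δ)) := by
    intro x
    refine Filter.Eventually.and (Filter.eventually_all.2 fun i => ?_)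
      ((Filter.eventually_all_finite hF).2 fun f hf => Filter.eventually_all.2 fun δ => ?_)
    · have : Filter.Tendsto (fun w : ι → ℝ => w i) (𝓝 0) (𝓝 0) :=
        (continuous_apply i).tendsto' _ _ rfl
      filter_upwards [this.eventually (floor_add_eventually (x i))] with w hw
      simpa [shift] using hw
    · have e : ∀ w, f (base x δ + w) = f (base x δ) + lin (a f) w := by
        intro w
        rw [congrFun (hac f hf) (base x δ + w), congrFun (hac f hf) (base x δ), (lin (a f)).map_add]
        ring
      by_cases h0 : f (base x δ) = 0
      · exact Filter.Eventually.of_forall fun w => by rw [e, h0]; simp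
      · have h0' : SignType.sign (f (base x δ)) ≠ 0 := fun h => h0 (sign_eq_zero_iff.1 h)
        have := eventually_sign_eq (f := fun w => f (base x δ) + lin (a f) w)
          (continuous_const.add (lin_continuous _)) (x := 0) (by simpa using h0)
        filter_upwards [this] with w hw
        rw [if_neg h0', e, hw]
        simp
  have hD : ∀ x y, D x = D y → GermEq X x y := by
    intro x y hxy
    simp only [D, Prod.mk.injEq] at hxy
    obtain ⟨hc, hs, hz⟩ := hxy
    filter_upwards [hlocal x, hlocal y] with w hx hy
    have hδ : (fun i => decide (Int.fract (x i) = 0 ∧ w i < 0)) =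
        fun i => decide (Int.fract (y i) = 0 ∧ w i < 0) := by
      ext i
      have : (Int.fract (x i) = 0) = (Int.fract (y i) = 0) := congrFun hz i
      simp only [this]
    have hfr : ∀ x : ι → ℝ, (∀ i, ⌊(x + w) i⌋ =
        ⌊x i⌋ - shift (fun i => decide (Int.fract (x i) = 0 ∧ w i < 0)) i) →
        (fun i => Int.fract ((x + w) i)) =
          base x (fun i => decide (Int.fract (x i) = 0 ∧ w i < 0)) + w := by
      intro x hx
      ext i
      rw [Int.fract, hx i]
      simp only [base, Pi.add_apply, Int.fract]
      push_cast
      ring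
    refine h _ _ ?_ fun f hf => ?_
    · simp only [hx.1, hy.1]
      rw [hδ]
      exact congrFun hc _
    · rw [hfr x hx.1, hfr y hy.1, hx.2 f hf, hy.2 f hf, hδ]
      have := congrFun hs (fun i => decide (Int.fract (y i) = 0 ∧ w i < 0), ⟨f, hf⟩)
      simp only at this
      rw [this]
  refine ⟨Set.range fun k : Set.range D => k.2.choose, Set.finite_range _, fun x => ?_⟩
  exact ⟨_, ⟨⟨D x, x, rfl⟩, rfl⟩, hD _ _ (Set.mem_range_self x).choose_spec⟩

/-! ### Integer strata -/

/-- Either some integer vector orthogonal to `Λ` has a nonzero `i`-th coordinate, or a positive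
multiple of the `i`-th coordinate form is an integer combination of the elements of `Λ`. -/
lemma orthogonal_or_multiple {ι : Type} [Fintype ι] [DecidableEq ι] (Λ : Set (ι → ℤ)) (i : ι) :
    ∃ N : ℕ, 0 < N ∧ ((∃ u : ι → ℤ, u i ≠ 0 ∧ ∀ a ∈ Λ, ∑ j, a j * u j = 0) ∨
      Pi.single i (N : ℤ) ∈ AddSubgroup.closure Λ) := by
  let C : (ι → ℤ) → ι → ℚ := fun a j => a j
  by_cases hW : C (Pi.single i 1) ∈ Submodule.span ℚ (C '' Λ)
  · have key : ∀ w ∈ Submodule.span ℚ (C '' Λ), ∃ N : ℕ, 0 < N ∧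
        ∃ z ∈ AddSubgroup.closure Λ, (N : ℚ) • w = C z := by
      intro w hw
      induction hw using Submodule.span_induction with
      | mem w hw =>
        obtain ⟨a, ha, rfl⟩ := hw
        exact ⟨1, one_pos, a, AddSubgroup.subset_closure ha, by simp⟩
      | zero => exact ⟨1, one_pos, 0, zero_mem _, by ext; simp [C]⟩
      | add w w' _ _ h h' =>
        obtain ⟨N, hN, z, hz, e⟩ := h
        obtain ⟨N', hN', z', hz', e'⟩ := h'
        refine ⟨N * N', Nat.mul_pos hN hN', N' • z + N • z',
          add_mem (nsmul_mem hz _) (nsmul_mem hz' _), ?_⟩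
        ext j
        have h1 := congrFun e j
        have h2 := congrFun e' j
        simp only [C, Pi.smul_apply, smul_eq_mul, Pi.add_apply] at h1 h2 ⊢
        push_cast
        simp only [nsmul_eq_mul]
        push_cast
        rw [← h1, ← h2]
        ring
      | smul q w _ h =>
        obtain ⟨N, hN, z, hz, e⟩ := h
        refine ⟨N * q.den, Nat.mul_pos hN q.den_pos, q.num • z, zsmul_mem hz _, ?_⟩
        ext j
        have h1 := congrFun e j
        simp only [C, Pi.smul_apply, smul_eq_mul] at h1 ⊢
        push_cast
        rw [← h1]
        have := Rat.mul_den_eq_num q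
        rw [← this]
        ring
    obtain ⟨N, hN, z, hz, e⟩ := key _ hW
    refine ⟨N, hN, Or.inr ?_⟩
    convert hz
    ext j
    have := congrFun e j
    simp only [C, Pi.smul_apply, smul_eq_mul] at this
    have h' : ((N * (Pi.single i 1 : ι → ℤ) j : ℤ) : ℚ) = z j := by exact_mod_cast this
    rw [← Int.cast_injective h', Pi.single_apply, Pi.single_apply]
    simp
  · refine ⟨1, one_pos, Or.inl ?_⟩
    obtain ⟨f, hf, hker⟩ := Submodule.exists_le_ker_of_notMem hW
    obtain ⟨b, hb⟩ := IsLocalization.exist_integer_multiples_of_finite (nonZeroDivisors ℤ)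
      (fun j => f (C (Pi.single j 1)))
    choose u hu using hb
    have hb0 : ((b : ℤ) : ℚ) ≠ 0 := by exact_mod_cast nonZeroDivisors.coe_ne_zero b
    have hu' : ∀ j, ((u j : ℤ) : ℚ) = (b : ℤ) * f (C (Pi.single j 1)) := by
      intro j
      have := hu j
      simpa using this
    have hfC : ∀ a : ι → ℤ, f (C a) = ∑ j, (a j : ℚ) * f (C (Pi.single j 1)) := by
      intro a
      rw [LinearMap.pi_apply_eq_sum_univ f]
      refine Finset.sum_congr rfl fun j _ => ?_
      rw [smul_eq_mul]
      congr 2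
      ext k
      simp [C, Pi.single_apply, eq_comm]
    refine ⟨u, fun h => ?_, fun a ha => ?_⟩
    · have := hu' i
      rw [h, Int.cast_zero] at this
      exact (mul_ne_zero hb0 hf) this.symm
    · have h0 : f (C a) = 0 := hker (Submodule.subset_span ⟨a, ha, rfl⟩)
      have : ((∑ j, a j * u j : ℤ) : ℚ) = (b : ℤ) * f (C a) := by
        rw [hfC, Finset.mul_sum]
        push_cast
        refine Finset.sum_congr rfl fun j _ => ?_
        rw [hu']
        ring
      rw [h0, mul_zero] at this
      exact_mod_cast this

/-- A singular point is isolated by the forms that are integral at it. -/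
lemma Grid.sd_singular {ι : Type} [Fintype ι] {X : Set (ι → ℝ)} {Λ : Set (ι → ℤ)} (hΛ : Λ.Finite)
    (h : Grid X Λ) {x : ι → ℝ} (hx : IsSingular X x) : SD (AffZ ι) {x} := by
  have : ∀ a : ι → ℤ, ∃ k : ℤ, a ∈ intForms Λ x → lin a x = k := by
    intro a
    by_cases ha : a ∈ intForms Λ x
    · obtain ⟨k, hk⟩ := ha.2
      exact ⟨k, fun _ => hk⟩
    · exact ⟨0, fun h => absurd h ha⟩
  choose k hk using this
  have key : ∀ y, (∀ a ∈ intForms Λ x, lin a y = k a) → y = x := by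
    intro y hy
    refine sub_eq_zero.1 (hx _ ((h.loc hΛ x).isStratum (intForms_finite hΛ x) fun a ha => ?_))
    rw [map_sub, hy a ha, hk a ha, sub_self]
  refine ⟨(fun a x => lin a x + ((-k a : ℤ) : ℝ)) '' intForms Λ x,
    (intForms_finite hΛ x).image _, ?_, ?_⟩
  · rintro _ ⟨a, -, rfl⟩
    exact mem_AffZ _ _
  · have one : ∀ y z, (∀ f ∈ (fun a x => lin a x + ((-k a : ℤ) : ℝ)) '' intForms Λ x,
        SignType.sign (f y) = SignType.sign (f z)) → y = x → z = x := by
      rintro _ z hyz rfl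
      refine key z fun a ha => ?_
      have := hyz _ ⟨a, ha, rfl⟩
      simp only [hk a ha, Int.cast_neg, add_neg_cancel, sign_zero] at this
      have := sign_eq_zero_iff.1 this.symm
      linarith
    exact fun y z hyz => ⟨one y z hyz, one z y fun f hf => (hyz f hf).symm⟩

lemma Grid.exists_int_stratum {ι : Type} [Fintype ι] {X : Set (ι → ℝ)} {Λ : Set (ι → ℤ)}
    (hΛ : Λ.Finite) (h : Grid X Λ) {x : ι → ℝ} (hx : ¬ IsSingular X x) :
    ∃ (i : ι) (u : ι → ℤ), u i ≠ 0 ∧ IsStratum X x (fun j => (u j : ℝ)) := by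
  classical
  unfold IsSingular at hx
  push Not at hx
  obtain ⟨v, hv, hv0⟩ := hx
  obtain ⟨i, hi⟩ := Function.ne_iff.1 hv0
  obtain ⟨N, hN, ⟨u, hu, huo⟩ | hcl⟩ :=
    orthogonal_or_multiple {a ∈ intForms Λ x | lin a v = 0} i
  · refine ⟨i, u, hu, hv.of_loc (intForms_finite hΛ x) (h.loc hΛ x) fun a ha hav => ?_⟩
    rw [lin_int, huo a ⟨ha, hav⟩, Int.cast_zero]
  · have hall : ∀ b ∈ AddSubgroup.closure {a ∈ intForms Λ x | lin a v = 0}, lin b v = 0 := by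
      intro b hb
      induction hb using AddSubgroup.closure_induction with
      | mem a ha => exact ha.2
      | zero => exact lin_zero v
      | add a b _ _ h h' => rw [lin_add, h, h', add_zero]
      | neg a _ h => rw [lin_neg, h, neg_zero]
    have := hall _ hcl
    rw [lin_single, mul_eq_zero] at this
    rcases this with h | h
    · exact absurd (by exact_mod_cast h) hN.ne'
    · exact absurd h hi

/-- Some rational hyperplane `p i = c` is transverse to an integer stratum at each of its points:
otherwise a positive multiple of `p i`, bounded independently of `p`, would be an integer
combination of forms integral at `p`; this fails for `c = 1 / (2 M)` with `M` a common multiple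
of all the multiples that can occur. -/
lemma Grid.exists_generic {ι : Type} [Fintype ι] {X : Set (ι → ℝ)} {Λ : Set (ι → ℤ)}
    (hΛ : Λ.Finite) (h : Grid X Λ) (i : ι) :
    ∃ c : ℚ, ∀ p : ι → ℝ, p i = c →
      ∃ u : ι → ℤ, u i ≠ 0 ∧ IsStratum X p (fun j => (u j : ℝ)) := by
  classical
  choose N hN hN' using fun Λ' : Set (ι → ℤ) => orthogonal_or_multiple Λ' i
  set M := ∏ s ∈ hΛ.toFinset.powerset, N s with hM
  have hM0 : M ≠ 0 := Finset.prod_ne_zero_iff.2 fun s _ => (hN s).ne'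
  refine ⟨1 / (2 * M), fun p hp => ?_⟩
  rcases hN' (intForms Λ p) with ⟨u, hu, huo⟩ | hcl
  · refine ⟨u, hu, (h.loc hΛ p).isStratum (intForms_finite hΛ p) fun a ha => ?_⟩
    rw [lin_int, huo a ha, Int.cast_zero]
  · exfalso
    have hall : ∀ b ∈ AddSubgroup.closure (intForms Λ p), ∃ k : ℤ, lin b p = k := by
      intro b hb
      induction hb using AddSubgroup.closure_induction with
      | mem a ha => exact ha.2
      | zero => exact ⟨0, by simp [lin_zero]⟩
      | add a b _ _ h h' =>
        obtain ⟨k, hk⟩ := h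
        obtain ⟨k', hk'⟩ := h'
        exact ⟨k + k', by rw [lin_add, hk, hk']; push_cast; ring⟩
      | neg a _ h =>
        obtain ⟨k, hk⟩ := h
        exact ⟨-k, by rw [lin_neg, hk]; push_cast; ring⟩
    obtain ⟨k, hk⟩ := hall _ hcl
    have hdvd : N (intForms Λ p) ∣ M := by
      have hmem : (intForms_finite hΛ p).toFinset ∈ hΛ.toFinset.powerset := by
        simp [Finset.mem_powerset, intForms]
      have := Finset.dvd_prod_of_mem (fun s : Finset (ι → ℤ) => N s) hmem
      simpa using this
    obtain ⟨m, hm⟩ := hdvd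
    rw [lin_single, hp] at hk
    have hM' : (M : ℝ) ≠ 0 := by exact_mod_cast hM0
    have h2 : (M : ℝ) = N (intForms Λ p) * m := by exact_mod_cast hm
    have : (1 : ℝ) = 2 * (k * m) := by
      have h3 : (M : ℝ) * ((1 / (2 * M) : ℚ) : ℝ) = k * m := by
        rw [← hk, h2]
        push_cast
        ring
      rw [← h3]
      push_cast
      field_simp
    have : (1 : ℤ) = 2 * (k * m) := by exact_mod_cast this
    omega

/-! ### Germs along segments -/

lemma GermEq.eventually_add {ι : Type} [Fintype ι] {X : Set (ι → ℝ)} {x y : ι → ℝ}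
    (h : GermEq X x y) : ∀ᶠ u in 𝓝 (0 : ι → ℝ), GermEq X (x + u) (y + u) := by
  filter_upwards [Filter.Eventually.eventually_nhds h] with u hu
  have : Filter.Tendsto (fun w : ι → ℝ => u + w) (𝓝 0) (𝓝 u) :=
    Continuous.tendsto' (by fun_prop) _ _ (by simp)
  filter_upwards [this.eventually hu] with w hw
  rwa [add_assoc, add_assoc]

lemma IsStratum.neg {ι : Type} [Fintype ι] {X : Set (ι → ℝ)} {x v : ι → ℝ}
    (h : IsStratum X x v) : IsStratum X x (-v) := by
  obtain ⟨r, hr, h⟩ := isStratum_iff_s15.1 h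
  exact isStratum_iff_s15.2 ⟨r, hr, fun y hy z hz α e => h y hy z hz (-α) (by rw [e]; simp)⟩

/-- The germ of `X` is locally constant along a line at a point where the direction is a
stratum. -/
lemma IsStratum.eventually_germEq_line {ι : Type} [Fintype ι] {X : Set (ι → ℝ)} {p v : ι → ℝ}
    {s : ℝ} (h : IsStratum X (p + s • v) v) :
    ∀ᶠ t in 𝓝 s, GermEq X (p + s • v) (p + t • v) := by
  have : Filter.Tendsto (fun t : ℝ => t - s) (𝓝 s) (𝓝 0) :=
    Continuous.tendsto' (by fun_prop) _ _ (by simp)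
  filter_upwards [this.eventually h.eventually_germEq] with t ht
  rwa [add_assoc, ← add_smul, add_sub_cancel] at ht

/-- A stratum of a hyperplane section at `p` is a stratum of `X`, provided that `X` has at `p` a
stratum transverse to the hyperplane. -/
lemma IsStratum.of_section {ι : Type} [Fintype ι] {X : Set (ι → ℝ)} {p u w : ι → ℝ} {i : ι}
    (hu : IsStratum X p u) (hui : u i ≠ 0) (hwi : w i = 0)
    (hw : IsStratum (X ∩ {q | q i = p i}) p w) : IsStratum X p w := by
  rw [isStratum_iff_eventually] at hu hw ⊢
  let π : (ι → ℝ) → ι → ℝ := fun q => q - (q i / u i) • u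
  have hπ : Continuous π := by
    simp only [π]
    fun_prop
  have hπi : ∀ q, π q i = 0 := fun q => by
    simp only [π, Pi.sub_apply, Pi.smul_apply, smul_eq_mul]
    field_simp
    ring
  have h0 : π 0 = 0 := by simp [π]
  have t1 : Filter.Tendsto (fun q : (ι → ℝ) × (ι → ℝ) => (q.1, π q.1)) (𝓝 0) (𝓝 0) :=
    Continuous.tendsto' (by fun_prop) _ _ (by simp [h0])
  have t2 : Filter.Tendsto (fun q : (ι → ℝ) × (ι → ℝ) => (q.2, π q.2)) (𝓝 0) (𝓝 0) :=
    Continuous.tendsto' (by fun_prop) _ _ (by simp [h0])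
  have t3 : Filter.Tendsto (fun q : (ι → ℝ) × (ι → ℝ) => (π q.1, π q.2)) (𝓝 0) (𝓝 0) :=
    Continuous.tendsto' (by fun_prop) _ _ (by simp [h0])
  filter_upwards [t1.eventually hu, t2.eventually hu, t3.eventually hw] with q h1 h2 h3 α hα
  have h3 := h3 α (by
    simp only [π]
    rw [hα]
    simp only [Pi.add_apply, Pi.smul_apply, hwi, smul_zero, add_zero]
    abel)
  rw [h1 (q.1 i / u i) (by simp [π]), h2 (q.2 i / u i) (by simp [π])]
  simpa [hπi] using h3

/-- On a hyperplane which is everywhere transverse to a stratum, the forms describing the section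
of `X` determine the germ of `X`. -/
lemma germEq_of_section {ι : Type} [Fintype ι] {X : Set (ι → ℝ)} {i : ι} {c : ℝ}
    (hgen : ∀ p : ι → ℝ, p i = c → ∃ u : ι → ℝ, u i ≠ 0 ∧ IsStratum X p u)
    {F : Set ((ι → ℝ) → ℝ)} (hF : F.Finite) {a : ((ι → ℝ) → ℝ) → ι → ℤ}
    {d : ((ι → ℝ) → ℝ) → ℤ} (had : ∀ f ∈ F, f = fun x => lin (a f) x + d f)
    (h : ∀ x y, (∀ f ∈ F, SignType.sign (f x) = SignType.sign (f y)) →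
      (x ∈ X ∩ {x | x i = c} ↔ y ∈ X ∩ {x | x i = c}))
    {x y : ι → ℝ} (hx : x i = c) (hy : y i = c)
    (hxy : ∀ f ∈ F, SignType.sign (f x) = SignType.sign (f y)) : GermEq X x y := by
  have hloc : ∀ s ∈ Set.Icc (0 : ℝ) 1, ∀ᶠ t in 𝓝[Set.Icc 0 1] s,
      GermEq X (x + s • (y - x)) (x + t • (y - x)) := by
    intro s hs
    have hp : (x + s • (y - x)) i = c := by simp [hx, hy]
    obtain ⟨u, hui, hu⟩ := hgen _ hp
    have hw : IsStratum (X ∩ {q | q i = (x + s • (y - x)) i}) (x + s • (y - x)) (y - x) := by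
      rw [hp]
      refine (loc_of_signs hF had h _).isStratum ((hF.subset (Set.sep_subset _ _)).image _) ?_
      rintro _ ⟨f, ⟨hf, hf0⟩, rfl⟩
      -- at an interior zero of `f`, equality of signs at the end points forces `f x = f y = 0`
      have e : f (x + s • (y - x)) = (1 - s) * f x + s * f y := by
        rw [congrFun (had f hf) (x + s • (y - x)), congrFun (had f hf) x, congrFun (had f hf) y,
          (lin (a f)).map_add, (lin (a f)).map_smul, (lin (a f)).map_sub, smul_eq_mul]
        ring
      have e' : lin (a f) (y - x) = f y - f x := by
        rw [congrFun (had f hf) x, congrFun (had f hf) y, (lin (a f)).map_sub]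
        ring
      rw [e] at hf0
      have hsg := hxy f hf
      obtain ⟨hs0, hs1⟩ := hs
      rcases lt_trichotomy (f x) 0 with hfx | hfx | hfx
      · rw [sign_neg hfx] at hsg
        have hfy := sign_eq_neg_one_iff.1 hsg.symm
        exfalso
        rcases hs0.eq_or_lt with rfl | hs0
        · linarith
        · nlinarith
      · rw [hfx, sign_zero] at hsg
        rw [e', hfx, sign_eq_zero_iff.1 hsg.symm, sub_zero]
      · rw [sign_pos hfx] at hsg
        have hfy := sign_eq_one_iff.1 hsg.symm
        exfalso
        rcases hs0.eq_or_lt with rfl | hs0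
        · linarith
        · nlinarith
    have := (hu.of_section hui (by simp [hx, hy]) hw).eventually_germEq_line
    exact nhdsWithin_le_nhds this
  have := isPreconnected_Icc.induction₂ (fun s t : ℝ => GermEq X (x + s • (y - x))
    (x + t • (y - x))) hloc (fun _ _ _ _ _ _ h h' => h.trans h')
    (fun _ _ _ _ h => h.symm)
    (Set.left_mem_Icc.2 zero_le_one) (Set.right_mem_Icc.2 zero_le_one)
  simpa using this

lemma hyperplane_mem {ι : Type} [Fintype ι] [DecidableEq ι] (i : ι) (c : ℚ) :
    ∃ f ∈ AffZ ι, ∀ x, f x = 0 ↔ x i = (c : ℝ) := by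
  refine ⟨_, mem_AffZ (Pi.single i (c.den : ℤ)) (-c.num), fun x => ?_⟩
  have h1 : (c.den : ℝ) ≠ 0 := by exact_mod_cast c.den_ne_zero
  have h2 : (c : ℝ) * c.den = c.num := by exact_mod_cast Rat.mul_den_eq_num c
  rw [lin_single]
  push_cast
  rw [← h2, show (c.den : ℝ) * x i + -(c * c.den) = c.den * (x i - c) by ring, mul_eq_zero,
    or_iff_right h1, sub_eq_zero]

/-- The points of a generic rational hyperplane with a given germ form a sign-determined set. -/
lemma sd_germ_section {ι : Type} [Fintype ι] {X : Set (ι → ℝ)} {i : ι} {c : ℚ}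
    (hgen : ∀ p : ι → ℝ, p i = c → ∃ u : ι → ℤ, u i ≠ 0 ∧ IsStratum X p (fun j => (u j : ℝ)))
    (hX : SD (AffZ ι) (X ∩ {x | x i = (c : ℝ)})) (x₀ : ι → ℝ) :
    SD (AffZ ι) {y | GermEq X x₀ y ∧ y i = (c : ℝ)} := by
  classical
  obtain ⟨F, a, d, hF, hA, had, h⟩ := hX.exists_forms
  obtain ⟨g, hg, hg0⟩ := hyperplane_mem i c
  refine ⟨insert g F, hF.insert g, ?_, ?_⟩
  · rintro f (rfl | hf)
    exacts [hg, hA f hf]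
  · have one : ∀ x y, (∀ f ∈ insert g F, SignType.sign (f x) = SignType.sign (f y)) →
        GermEq X x₀ x ∧ x i = (c : ℝ) → GermEq X x₀ y ∧ y i = (c : ℝ) := by
      rintro x y hxy ⟨hx, hxi⟩
      have hyi : y i = (c : ℝ) := by
        have := hxy g (Set.mem_insert _ _)
        rw [(hg0 x).2 hxi, sign_zero] at this
        exact (hg0 y).1 (sign_eq_zero_iff.1 this.symm)
      refine ⟨hx.trans (germEq_of_section (fun p hp => ?_) hF had h hxi hyi fun f hf =>
        hxy f (Set.mem_insert_of_mem _ hf)), hyi⟩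
      obtain ⟨u, hu, hu'⟩ := hgen p hp
      exact ⟨_, by exact_mod_cast hu, hu'⟩
    exact fun x y hxy => ⟨one x y hxy, one y x fun f hf => (hxy f hf).symm⟩

/-- The set `Str_X(x)` of strata at `x`. -/
def Str {ι : Type} [Fintype ι] (X : Set (ι → ℝ)) (x : ι → ℝ) : Set (ι → ℝ) := {v | IsStratum X x v}

lemma GermEq.str_eq {ι : Type} [Fintype ι] {X : Set (ι → ℝ)} {x y : ι → ℝ} (h : GermEq X x y) :
    Str X x = Str X y :=
  Set.ext fun _ => ⟨fun hv => IsStratum.germEq hv h, fun hv => IsStratum.germEq hv h.symm⟩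

lemma isOpen_germ_line {ι : Type} [Fintype ι] {X : Set (ι → ℝ)} {x₀ v : ι → ℝ}
    (hv : IsStratum X x₀ v) (p : ι → ℝ) : IsOpen {s : ℝ | GermEq X x₀ (p + s • v)} := by
  rw [isOpen_iff_mem_nhds]
  intro s hs
  filter_upwards [(hv.germEq hs).eventually_germEq_line] with t ht using GermEq.trans hs ht

/-- On a line parallel to a stratum of `x₀`, a boundary point of the set of points with the germ of
`x₀` has strictly fewer strata than `x₀`. -/
lemma closure_germ_line {ι : Type} [Fintype ι] {X : Set (ι → ℝ)} {x₀ v p : ι → ℝ}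
    (hv : IsStratum X x₀ v) {s : ℝ} (hs : s ∈ closure {s : ℝ | GermEq X x₀ (p + s • v)}) :
    GermEq X x₀ (p + s • v) ∨ Str X (p + s • v) ⊂ Str X x₀ := by
  have hfreq := mem_closure_iff_frequently.1 hs
  have hsub : Str X (p + s • v) ⊆ Str X x₀ := by
    intro w hw
    have : Filter.Tendsto (fun t : ℝ => p + t • v) (𝓝 s) (𝓝 (p + s • v)) :=
      Continuous.tendsto (by fun_prop) s
    obtain ⟨t, ht, hw⟩ := (hfreq.and_eventually (this.eventually (IsStratum.eventually hw))).exists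
    exact hw.germEq (GermEq.symm ht)
  by_cases hvs : IsStratum X (p + s • v) v
  · left
    obtain ⟨t, ht, ht'⟩ := (hfreq.and_eventually hvs.eventually_germEq_line).exists
    exact GermEq.trans ht ht'.symm
  · exact Or.inr ⟨hsub, fun h => hvs (h hv)⟩

lemma germ_line_of_forall {ι : Type} [Fintype ι] {X : Set (ι → ℝ)} {x₀ v p : ι → ℝ}
    (hv : IsStratum X x₀ v) {I : Set ℝ} (hI : IsPreconnected I)
    (hL : ∀ s ∈ I, ¬ Str X (p + s • v) ⊂ Str X x₀) {s t : ℝ} (hs : s ∈ I) (ht : t ∈ I)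
    (h : GermEq X x₀ (p + s • v)) : GermEq X x₀ (p + t • v) := by
  refine hI.subset_of_closure_inter_subset (isOpen_germ_line hv p) ⟨s, hs, h⟩ ?_ ht
  rintro u ⟨hu, huI⟩
  exact (closure_germ_line hv hu).resolve_right (hL u huI)

/-- Moving from a point with the germ of `x₀` along a stratum, either the germ stays constant up to
parameter `β`, or there is a first point where it changes, and that point has fewer strata. -/
lemma germ_line_exit {ι : Type} [Fintype ι] {X : Set (ι → ℝ)} {x₀ v p : ι → ℝ}
    (hv : IsStratum X x₀ v) (h : GermEq X x₀ p) {β : ℝ} :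
    (∀ s : ℝ, 0 ≤ s → s ≤ β → GermEq X x₀ (p + s • v)) ∨
      ∃ s₀ : ℝ, 0 < s₀ ∧ (∀ s : ℝ, 0 ≤ s → s < s₀ → GermEq X x₀ (p + s • v)) ∧
        Str X (p + s₀ • v) ⊂ Str X x₀ := by
  refine or_iff_not_imp_left.2 fun hne => ?_
  push Not at hne
  obtain ⟨b, hb0, -, hb⟩ := hne
  set B : Set ℝ := Set.Ici 0 ∩ {s : ℝ | GermEq X x₀ (p + s • v)}ᶜ with hB
  have hBc : IsClosed B := isClosed_Ici.inter (isOpen_germ_line hv p).isClosed_compl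
  have hbd : BddBelow B := ⟨0, fun s hs => hs.1⟩
  have hmem : sInf B ∈ B := hBc.csInf_mem ⟨b, hb0, hb⟩ hbd
  have hbelow : ∀ s : ℝ, 0 ≤ s → s < sInf B → GermEq X x₀ (p + s • v) := by
    intro s hs hs'
    by_contra hc
    exact absurd (csInf_le hbd ⟨hs, hc⟩) (not_le.2 hs')
  have hpos : 0 < sInf B := by
    refine lt_of_le_of_ne hmem.1 fun h0 => hmem.2 ?_
    rw [← h0]
    simpa using h
  refine ⟨sInf B, hpos, hbelow, (closure_germ_line hv ?_).resolve_left hmem.2⟩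
  have : sInf B ∈ closure (Set.Ico 0 (sInf B)) := by
    rw [closure_Ico hpos.ne]
    exact ⟨hpos.le, le_rfl⟩
  exact closure_mono (fun s hs => hbelow s hs.1 hs.2) this

/-! ### Every germ class is sign-determined -/

lemma extA_fst {E : Type} {A : AddSubgroup (E → ℝ)} {f : E → ℝ} (hf : f ∈ A) :
    (fun q : E × ℝ => f q.1) ∈ extA A := ⟨f, hf, 0, by simp⟩

lemma extA_snd {E : Type} (A : AddSubgroup (E → ℝ)) : (fun q : E × ℝ => q.2) ∈ extA A :=
  ⟨0, A.zero_mem, 1, by simp⟩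

lemma SD.translate {ι : Type} [Fintype ι] {S : Set (ι → ℝ)} (h : SD (AffZ ι) S) (v : ι → ℤ) :
    SD (extA (AffZ ι)) {q : (ι → ℝ) × ℝ | q.1 + q.2 • (fun i => (v i : ℝ)) ∈ S} := by
  refine h.preimage (fun q : (ι → ℝ) × ℝ => q.1 + q.2 • (fun i => (v i : ℝ))) ?_
  rintro _ ⟨a, c, rfl⟩
  refine ⟨_, mem_AffZ a c, ∑ i, a i * v i, ?_⟩
  ext q
  simp only [Function.comp_apply]
  rw [(lin a).map_add, (lin a).map_smul, lin_int, smul_eq_mul]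
  ring

/-- The set of points from which the ray in an integer direction `v` reaches `T` before `L`. -/
lemma SD.reach {ι : Type} [Fintype ι] {L T : Set (ι → ℝ)} (hL : SD (AffZ ι) L)
    (hT : SD (AffZ ι) T) (v : ι → ℤ) :
    SD (AffZ ι) {x | x ∉ L ∧ ∃ β : ℝ, 0 ≤ β ∧
      (∀ s : ℝ, 0 ≤ s → s < β → x + s • (fun i => (v i : ℝ)) ∉ L) ∧
      x + β • (fun i => (v i : ℝ)) ∈ T} := by
  have h0 : SD (extA (AffZ ι)) {q : (ι → ℝ) × ℝ | 0 ≤ q.2} := by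
    have := (SD.pos ((extA (AffZ ι)).neg_mem (extA_snd _))).compl
    convert this using 1
    ext q
    simp
  have h0' : SD (extA (extA (AffZ ι))) {q : ((ι → ℝ) × ℝ) × ℝ | 0 ≤ q.2} := by
    have := (SD.pos ((extA (extA (AffZ ι))).neg_mem (extA_snd _))).compl
    convert this using 1
    ext q
    simp
  have h1 : SD (extA (extA (AffZ ι))) {q : ((ι → ℝ) × ℝ) × ℝ | q.2 < q.1.2} := by
    have := SD.pos ((extA (extA (AffZ ι))).sub_mem (extA_fst (extA_snd (AffZ ι))) (extA_snd _))
    convert this using 1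
    ext q
    simp
  have h2 : SD (extA (extA (AffZ ι)))
      {q : ((ι → ℝ) × ℝ) × ℝ | q.1.1 + q.2 • (fun i => (v i : ℝ)) ∈ L} := by
    refine (hL.translate v).preimage (fun q : ((ι → ℝ) × ℝ) × ℝ => (q.1.1, q.2)) ?_
    rintro _ ⟨a, ha, b, rfl⟩
    exact ⟨_, extA_fst ha, b, rfl⟩
  have h3 := ((h0'.inter h1).inter h2).exists.compl
  have h4 := hL.compl.inter ((h0.inter h3).inter (hT.translate v)).exists
  convert h4 using 1
  ext x
  simp only [Set.mem_ofPred_eq, Set.mem_inter_iff, Set.mem_compl_iff]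
  refine and_congr_right fun _ => exists_congr fun β => ?_
  rw [and_assoc]
  refine and_congr_right fun _ => and_congr_left fun _ => ?_
  push Not
  exact ⟨fun h s hs => h s hs.1 hs.2, fun h s h1 h2 => h s ⟨h1, h2⟩⟩

/-- The points with the germ of `x₀` whose ray in the direction `v`, a stratum of `x₀`, meets the
hyperplane `x i = c`: from such a point, the ray either reaches the hyperplane within the germ
class, or it leaves the class at a point with fewer strata. -/
lemma germ_iff_reach {ι : Type} [Fintype ι] {X : Set (ι → ℝ)} {x₀ v : ι → ℝ} {i : ι} {c : ℝ}
    (hv : IsStratum X x₀ v) (x : ι → ℝ) :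
    (GermEq X x₀ x → ∀ β : ℝ, 0 ≤ β → (x + β • v) i = c →
      x ∉ {y | Str X y ⊂ Str X x₀} ∧ ∃ β : ℝ, 0 ≤ β ∧
        (∀ s : ℝ, 0 ≤ s → s < β → x + s • v ∉ {y | Str X y ⊂ Str X x₀}) ∧
        x + β • v ∈ {y | GermEq X x₀ y ∧ y i = c} ∪
          {y | Str X y ⊂ Str X x₀ ∧ ∀ᶠ ε in 𝓝[>] (0 : ℝ), GermEq X x₀ (y - ε • v)}) ∧
    ((x ∉ {y | Str X y ⊂ Str X x₀} ∧ ∃ β : ℝ, 0 ≤ β ∧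
        (∀ s : ℝ, 0 ≤ s → s < β → x + s • v ∉ {y | Str X y ⊂ Str X x₀}) ∧
        x + β • v ∈ {y | GermEq X x₀ y ∧ y i = c} ∪
          {y | Str X y ⊂ Str X x₀ ∧ ∀ᶠ ε in 𝓝[>] (0 : ℝ), GermEq X x₀ (y - ε • v)}) →
      GermEq X x₀ x) := by
  have hnot : ∀ y, GermEq X x₀ y → ¬ Str X y ⊂ Str X x₀ := fun y hy h => h.ne hy.str_eq.symm
  constructor
  · intro hx β hβ hβc
    refine ⟨hnot x hx, ?_⟩
    rcases germ_line_exit hv hx (β := β) with h | ⟨s₀, hs₀, h, hs₀L⟩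
    · exact ⟨β, hβ, fun s h1 h2 => hnot _ (h s h1 h2.le), Or.inl ⟨h β hβ le_rfl, hβc⟩⟩
    · refine ⟨s₀, hs₀.le, fun s h1 h2 => hnot _ (h s h1 h2), Or.inr ⟨hs₀L, ?_⟩⟩
      filter_upwards [Ioo_mem_nhdsGT hs₀] with ε hε
      rw [add_sub_assoc, ← sub_smul]
      exact h _ (by linarith [hε.2]) (by linarith [hε.1])
  · rintro ⟨hx, β, hβ, hs, hT⟩
    suffices h : GermEq X x₀ (x + (0 : ℝ) • v) by simpa using h
    rcases hT with ⟨hT, -⟩ | ⟨hT, hε⟩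
    · refine germ_line_of_forall hv isPreconnected_Icc (fun s hsI => ?_)
        (Set.right_mem_Icc.2 hβ) (Set.left_mem_Icc.2 hβ) hT
      rcases hsI.2.eq_or_lt with rfl | hlt
      · exact hnot _ hT
      · exact hs s hsI.1 hlt
    · have hβ0 : 0 < β := by
        refine lt_of_le_of_ne hβ fun h => hx ?_
        rw [← h] at hT
        simpa using hT
      obtain ⟨ε, hε, hε0, hεβ⟩ := (hε.and (Ioo_mem_nhdsGT hβ0)).exists
      rw [add_sub_assoc, ← sub_smul] at hε
      exact germ_line_of_forall hv isPreconnected_Ico (fun s hsI => hs s hsI.1 hsI.2)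
        (s := β - ε) ⟨by linarith, by linarith⟩ ⟨le_rfl, hβ0⟩ hε

/-- A set invariant under germ equality is a finite union of germ classes. -/
lemma sd_of_invariant {ι : Type} [Fintype ι] {X : Set (ι → ℝ)} {R : Set (ι → ℝ)} (hR : R.Finite)
    (hR' : ∀ x, ∃ r ∈ R, GermEq X r x) {Y : Set (ι → ℝ)}
    (hY : ∀ x y, GermEq X x y → x ∈ Y → y ∈ Y) (hE : ∀ r ∈ Y, SD (AffZ ι) {y | GermEq X r y}) :
    SD (AffZ ι) Y := by
  have := SD.biUnion (hR.inter_of_left Y) (X := fun r => {y | GermEq X r y}) fun r hr => hE r hr.2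
  convert this using 1
  ext y
  simp only [Set.mem_iUnion, Set.mem_ofPred_eq, exists_prop]
  constructor
  · intro hy
    obtain ⟨r, hr, h⟩ := hR' y
    exact ⟨r, ⟨hr, hY y r h.symm hy⟩, h⟩
  · rintro ⟨r, hr, h⟩
    exact hY r y h hr.2

/-- Induction on the set of strata of `x₀`, which ranges over a finite family. If `x₀` is singular,
its class is a finite set of isolated definable points. Otherwise take an integer stratum `v` with
`v i ≠ 0` and a generic hyperplane `y i = c`: the line through a point of the class in the direction
`v` meets the hyperplane on one of its two sides, so the class is the union of two sets of the kind
treated by `SD.reach`, built from the section of the class and from classes with fewer strata. -/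
lemma sd_germ {ι : Type} [Fintype ι] {X : Set (ι → ℝ)} {Λ : Set (ι → ℤ)} (hΛ : Λ.Finite)
    (hG : Grid X Λ) {R : Set (ι → ℝ)} (hR : R.Finite) (hR' : ∀ x, ∃ r ∈ R, GermEq X r x)
    (hsing : {x | IsSingular X x}.Finite)
    (hsec : ∀ (i : ι) (c : ℚ), SD (AffZ ι) (X ∩ {x | x i = (c : ℝ)})) (x₀ : ι → ℝ) :
    SD (AffZ ι) {y | GermEq X x₀ y} := by
  have hfin : (Set.range (Str X)).Finite := by
    refine (hR.image (Str X)).subset ?_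
    rintro _ ⟨x, rfl⟩
    obtain ⟨r, hr, h⟩ := hR' x
    exact ⟨r, hr, h.str_eq⟩
  have hwf : (Set.range (Str X)).WellFoundedOn (· ⊂ ·) := hfin.wellFoundedOn
  suffices h : ∀ S ∈ Set.range (Str X), ∀ x₀, Str X x₀ = S → SD (AffZ ι) {y | GermEq X x₀ y} from
    h _ ⟨x₀, rfl⟩ x₀ rfl
  intro S hS
  refine hwf.induction (P := fun S => ∀ x₀, Str X x₀ = S → SD (AffZ ι) {y | GermEq X x₀ y}) hS
    fun S _ ih => ?_
  rintro x₀ rfl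
  have hlow : ∀ Y ⊆ {y | Str X y ⊂ Str X x₀}, (∀ x y, GermEq X x y → x ∈ Y → y ∈ Y) →
      SD (AffZ ι) Y := fun Y hYL hY =>
    sd_of_invariant hR hR' hY fun r hr => ih (Str X r) ⟨r, rfl⟩ (hYL hr) r rfl
  by_cases hx₀ : IsSingular X x₀
  · have hsub : {y | GermEq X x₀ y} ⊆ {x | IsSingular X x} := fun y hy v hv =>
      hx₀ v (hv.germEq (GermEq.symm hy))
    have := SD.biUnion (hsing.subset hsub) (X := fun y => {y}) fun y hy =>
      hG.sd_singular hΛ (hsub hy)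
    rwa [Set.biUnion_of_singleton] at this
  · obtain ⟨i, v, hvi, hv⟩ := hG.exists_int_stratum hΛ hx₀
    obtain ⟨c, hc⟩ := hG.exists_generic hΛ i
    have hH := sd_germ_section hc (hsec i c) x₀
    have hL := hlow _ subset_rfl fun x y h (hx : Str X x ⊂ _) => by
      rw [h.str_eq] at hx
      exact hx
    have hQ : ∀ w : ι → ℝ, SD (AffZ ι) {y | Str X y ⊂ Str X x₀ ∧
        ∀ᶠ ε in 𝓝[>] (0 : ℝ), GermEq X x₀ (y - ε • w)} := by
      intro w
      refine hlow _ (fun y hy => hy.1) fun x y h hx => ⟨h.str_eq ▸ hx.1, ?_⟩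
      have ht : Filter.Tendsto (fun ε : ℝ => -(ε • w)) (𝓝 0) (𝓝 0) :=
        Continuous.tendsto' (by fun_prop) _ _ (by simp)
      filter_upwards [hx.2, nhdsWithin_le_nhds (ht.eventually h.eventually_add)] with ε h1 h2
      rw [← sub_eq_add_neg, ← sub_eq_add_neg] at h2
      exact h1.trans h2
    have hneg : (fun j => ((-v) j : ℝ)) = -(fun j => (v j : ℝ)) := by
      ext j
      simp
    have h1 := hL.reach (hH.union (hQ fun j => (v j : ℝ))) v
    have h2 := hL.reach (hH.union (hQ fun j => ((-v) j : ℝ))) (-v)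
    convert h1.union h2 using 1
    ext x
    have hv' : IsStratum X x₀ fun j => ((-v) j : ℝ) := hneg ▸ hv.neg
    constructor
    · intro hx
      have hvi' : (v i : ℝ) ≠ 0 := by exact_mod_cast hvi
      rcases le_total 0 ((c - x i) / v i) with h | h
      · refine Or.inl ((germ_iff_reach hv x).1 hx _ h ?_)
        simp only [Pi.add_apply, Pi.smul_apply, smul_eq_mul]
        field_simp
        ring
      · refine Or.inr ((germ_iff_reach hv' x).1 hx (-((c - x i) / v i)) (by linarith) ?_)
        simp only [Pi.add_apply, Pi.smul_apply, Pi.neg_apply, smul_eq_mul]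
        push_cast
        field_simp
        ring
    · rintro (h | h)
      · exact (germ_iff_reach hv x).2 h
      · exact (germ_iff_reach hv' x).2 h

/-- A `⟨ℝ,+,<,ℤ⟩`-definable set is `⟨ℝ,+,<,1⟩`-definable iff it has finitely many singular
points and all its rational sections are `⟨ℝ,+,<,1⟩`-definable. -/
theorem stmt15 (n : ℕ) (hn : 1 ≤ n) (X : Set (Fin n → ℝ)) (hX : LsDefinable X) :
    SsDefinable X ↔
      ({x | IsSingular X x}.Finite ∧
       ∀ (i : Fin n) (c : ℚ), SsDefinable (X ∩ {x | x i = (c : ℝ)})) := by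
  constructor
  · intro h
    refine ⟨h.sd.finite_singular, fun i c => ?_⟩
    obtain ⟨f, hf, hfc⟩ := hyperplane_mem i c
    have : SD (AffZ (Fin n)) {x : Fin n → ℝ | x i = (c : ℝ)} := by
      simpa only [hfc] using SD.eqz hf
    exact (h.sd.inter this).ssDefinable
  · rintro ⟨hsing, hsec⟩
    obtain ⟨Λ, hΛ, hG⟩ := hX.ld.grid
    obtain ⟨R, hR, hR'⟩ := hX.ld.finite_germs
    refine SD.ssDefinable (sd_of_invariant hR hR' (fun x y h => h.mem_iff.1) fun r _ => ?_)
    exact sd_germ hΛ hG hR hR' hsing (fun i c => (hsec i c).sd) r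
end
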